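/- arXiv:1712.08371 — 3 statements merged into one kernel-verified Lean document; each statement's English description precedes it below -/
import Mathlib

section
/- Let a, b ∈ ℂ with neither a nor b a nonpositive integer. Then as x → +∞ along the positive real axis, the ratio (Γ(a)/Γ(b)) · ₁F₁(a; b; x) · x^{b−a} e^{−x} tends to 1; that is, ₁F₁(a; b; x) is asymptotic to (Γ(b)/Γ(a)) x^{a−b} e^x. -/
open Complex Filter

/-- The Kummer confluent hypergeometric function `₁F₁(a; b; z)`,
defined by its everywhere convergent power series. -/
noncomputable def kummer (a b z : ℂ) : ℂ :=
  ∑' n : ℕ, ((ascPochhammer ℂ n).eval a / (ascPochhammer ℂ n).eval b) * z ^ n / n.factorial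

theorem kum_coeff (a b : ℂ)
    (ha : ∀ n : ℕ, a ≠ -(n : ℂ)) (hb : ∀ n : ℕ, b ≠ -(n : ℂ)) :
    Tendsto (fun n : ℕ => (Complex.Gamma a / Complex.Gamma b) *
      ((ascPochhammer ℂ n).eval a / (ascPochhammer ℂ n).eval b) * (n : ℂ) ^ (b - a))
      atTop (nhds 1) := by
  have hGa := Complex.Gamma_ne_zero ha
  have hGb := Complex.Gamma_ne_zero hb
  have h0 : ∀ s : ℂ, (∀ n : ℕ, s ≠ -(n : ℂ)) → ∀ n : ℕ, s + n ≠ 0 := by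
    intro s hs n h
    exact hs n (eq_neg_of_add_eq_zero_left h)
  have hp : ∀ s : ℂ, ∀ n : ℕ, (ascPochhammer ℂ n).eval s = ∏ j ∈ Finset.range n, (s + j) := by
    intro s n
    induction n with
    | zero => simp
    | succ k ih => rw [ascPochhammer_succ_eval, ih, Finset.prod_range_succ]
  have h1 : Tendsto (fun n : ℕ => (b + n) / (a + n)) atTop (nhds 1) := by
    have h2 : Tendsto (fun n : ℕ => (b / n + 1) / (a / n + 1)) atTop (nhds ((0 + 1) / (0 + 1))) := by
      refine Tendsto.div ?_ ?_ (by simp)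
      · exact (tendsto_const_div_atTop_nhds_zero_nat b).add_const 1
      · exact (tendsto_const_div_atTop_nhds_zero_nat a).add_const 1
    simp only [zero_add, div_one] at h2
    refine h2.congr' ?_
    filter_upwards [eventually_gt_atTop 0] with n hn
    have : (n : ℂ) ≠ 0 := by exact_mod_cast hn.ne'
    have h3 := h0 a ha n
    have h4 : a / n + 1 ≠ 0 := by
      intro h
      field_simp at h
      exact h3 (by simpa using h)
    field_simp
  have h2 : Tendsto (fun n : ℕ => Complex.Gamma a / GammaSeq a n * (GammaSeq b n / Complex.Gamma b) *
      ((b + n) / (a + n))) atTop (nhds (1 * 1 * 1)) := by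
    refine (Tendsto.mul ?_ ?_).mul h1
    · have := (tendsto_const_nhds (x := Complex.Gamma a)).div (GammaSeq_tendsto_Gamma a) hGa
      simpa [div_self hGa, Pi.div_def] using this
    · have := (GammaSeq_tendsto_Gamma b).div_const (Complex.Gamma b)
      simpa [div_self hGb] using this
  simp only [mul_one] at h2
  refine h2.congr' ?_
  filter_upwards [eventually_gt_atTop 0] with n hn
  have hn' : (n : ℂ) ≠ 0 := by exact_mod_cast hn.ne'
  rw [hp, hp, GammaSeq, GammaSeq, Finset.prod_range_succ, Finset.prod_range_succ,
    Complex.cpow_sub _ _ hn']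
  have e1 := h0 a ha n
  have e2 := h0 b hb n
  have e3 : ∏ j ∈ Finset.range n, (a + j) ≠ 0 := Finset.prod_ne_zero_iff.2 fun j _ => h0 a ha j
  have e4 : ∏ j ∈ Finset.range n, (b + j) ≠ 0 := Finset.prod_ne_zero_iff.2 fun j _ => h0 b hb j
  have e5 : (n : ℂ) ^ a ≠ 0 := by simp [Complex.cpow_eq_zero_iff, hn']
  have e6 : (n : ℂ) ^ b ≠ 0 := by simp [Complex.cpow_eq_zero_iff, hn']
  have e7 : (n.factorial : ℂ) ≠ 0 := by exact_mod_cast n.factorial_ne_zero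
  field_simp

theorem kum_growth (c : ℕ → ℂ) (d : ℂ)
    (hc : Tendsto (fun n : ℕ => c n * (n : ℂ) ^ (-d)) atTop (nhds 1)) (η : ℝ) (hη : 0 < η) :
    ∃ K : ℝ, 0 ≤ K ∧ ∀ n, ‖c n‖ ≤ K * Real.exp (η * n) := by
  have h1 := (tendsto_rpow_mul_exp_neg_mul_atTop_nhds_zero d.re η hη).comp
    tendsto_natCast_atTop_atTop
  have h2 := hc.norm.mul h1
  have h3 : Tendsto (fun n : ℕ => ‖c n‖ * Real.exp (-η * n)) atTop (nhds (‖(1:ℂ)‖ * 0)) := by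
    refine h2.congr' ?_
    filter_upwards [eventually_gt_atTop 0] with n hn
    have hn' : (0:ℝ) < n := by exact_mod_cast hn
    have := Complex.norm_cpow_eq_rpow_re_of_pos hn' (-d)
    rw [Complex.ofReal_natCast] at this
    simp only [Function.comp, norm_mul, this, Complex.neg_re, Real.rpow_neg hn'.le]
    have := (Real.rpow_pos_of_pos hn' d.re).ne'
    field_simp
  obtain ⟨K, hK⟩ := h3.bddAbove_range
  refine ⟨max K 0, le_max_right _ _, fun n => ?_⟩
  have h4 : ‖c n‖ * Real.exp (-η * n) ≤ K := hK ⟨n, rfl⟩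
  have h5 : Real.exp (-η * n) * Real.exp (η * n) = 1 := by
    rw [← Real.exp_add]; simp
  calc ‖c n‖ = (‖c n‖ * Real.exp (-η * n)) * Real.exp (η * n) := by
        rw [mul_assoc, h5, mul_one]
    _ ≤ _ := by gcongr; exact h4.trans (le_max_left _ _)

theorem kum_local (c : ℕ → ℂ) (d : ℂ)
    (hc : Tendsto (fun n : ℕ => c n * (n : ℂ) ^ (-d)) atTop (nhds 1)) (ε : ℝ) (hε : 0 < ε) :
    ∃ δ : ℝ, 0 < δ ∧ δ ≤ 1 ∧ ∃ X : ℝ, ∀ x : ℝ, X ≤ x → ∀ n : ℕ, |(n : ℝ) - x| ≤ δ * x →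
      ‖c n * (x : ℂ) ^ (-d) - 1‖ ≤ ε := by
  have hm : Tendsto (fun p : ℂ × ℝ => p.1 * (p.2 : ℂ) ^ d) (nhds 1 ×ˢ nhds 1) (nhds 1) := by
    have h1 : ContinuousAt (fun u : ℝ => (u : ℂ) ^ d) 1 := by
      have : ContinuousAt (fun z : ℂ => z ^ d) ((1 : ℝ) : ℂ) := by
        apply continuousAt_cpow_const
        simp
      exact this.comp (f := fun u : ℝ => (u : ℂ)) Complex.continuous_ofReal.continuousAt
    have h2 := (tendsto_fst (f := nhds (1:ℂ)) (g := nhds (1:ℝ))).mul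
      (h1.tendsto.comp (tendsto_snd (f := nhds (1:ℂ)) (g := nhds (1:ℝ))))
    simpa [Function.comp_def] using h2
  have hev := hm.eventually (Metric.closedBall_mem_nhds (1:ℂ) hε)
  obtain ⟨P, hP, Q, hQ, hPQ⟩ := eventually_prod_iff.1 hev
  obtain ⟨N, hN⟩ := eventually_atTop.1 (hc.eventually hP)
  obtain ⟨r, hr, hQr⟩ := Metric.eventually_nhds_iff.1 hQ
  refine ⟨min (r/2) (1/2), by positivity, (min_le_right _ _).trans (by norm_num), 2 * N + 1, ?_⟩
  intro x hx n hn
  have hx0 : 0 < x := by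
    have : (0:ℝ) ≤ N := Nat.cast_nonneg N
    linarith
  have hd1 : |(n:ℝ) - x| ≤ r / 2 * x := hn.trans (by gcongr; exact min_le_left _ _)
  have hd2 : |(n:ℝ) - x| ≤ 1 / 2 * x := hn.trans (by gcongr; exact min_le_right _ _)
  have hnx := (abs_le.1 hd2).1
  have hnN : N ≤ n := by
    have : (N:ℝ) ≤ n := by linarith
    exact_mod_cast this
  have hn0 : (0:ℝ) < n := by linarith
  have hq : dist ((n:ℝ) / x) 1 < r := by
    rw [Real.dist_eq, show (n:ℝ) / x - 1 = (n - x) / x by field_simp, abs_div, abs_of_pos hx0,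
      div_lt_iff₀ hx0]
    nlinarith
  have h := hPQ (hN n hnN) (hQr hq)
  rw [dist_eq_norm] at h
  have e1 : (n : ℂ) = (((n:ℝ)/x : ℝ) : ℂ) * (x : ℂ) := by
    rw [← Complex.ofReal_mul, div_mul_cancel₀ _ hx0.ne', Complex.ofReal_natCast]
  have e2 : (n : ℂ) ^ (-d) = (((n:ℝ)/x : ℝ) : ℂ) ^ (-d) * (x : ℂ) ^ (-d) := by
    conv_lhs => rw [e1]
    exact Complex.mul_cpow_ofReal_nonneg (by positivity) hx0.le _
  have e3 : (((n:ℝ)/x : ℝ) : ℂ) ≠ 0 := by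
    rw [Complex.ofReal_ne_zero]; positivity
  have e4 : (((n:ℝ)/x : ℝ) : ℂ) ^ d ≠ 0 := by simp only [ne_eq, Complex.cpow_eq_zero_iff, e3, false_and, not_false_eq_true]
  have e5 : c n * (x : ℂ) ^ (-d) = c n * (n : ℂ) ^ (-d) * (((n:ℝ)/x : ℝ) : ℂ) ^ d := by
    rw [e2, Complex.cpow_neg (((n:ℝ)/x : ℝ) : ℂ) d]
    field_simp
  rw [e5]
  exact h

theorem kum_hasSum (x t u : ℝ) :
    HasSum (fun n : ℕ => Real.exp (-x) * (x ^ n / n.factorial) * Real.exp (t * n + u))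
      (Real.exp (x * (Real.exp t - 1) + u)) := by
  have h := NormedSpace.expSeries_div_hasSum_exp (𝔸 := ℝ) (x * Real.exp t)
  rw [← Real.exp_eq_exp_ℝ] at h
  have h2 := h.mul_left (Real.exp (-x) * Real.exp u)
  have e : Real.exp (-x) * Real.exp u * Real.exp (x * Real.exp t) =
      Real.exp (x * (Real.exp t - 1) + u) := by
    rw [← Real.exp_add, ← Real.exp_add]
    ring_nf
  rw [e] at h2
  convert! h2 using 2 with n
  rw [mul_pow, ← Real.exp_nat_mul, Real.exp_add, mul_comm t]
  ring

theorem kum_main (c : ℕ → ℂ) (d : ℂ)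
    (hc : Tendsto (fun n : ℕ => c n * (n : ℂ) ^ (-d)) atTop (nhds 1)) :
    Tendsto (fun x : ℝ => (∑' n : ℕ, c n * ((x : ℂ) ^ n / n.factorial)) * (x : ℂ) ^ (-d) *
      Complex.exp (-(x : ℂ))) atTop (nhds 1) := by
  rw [Metric.tendsto_nhds]
  intro ε hε
  obtain ⟨δ, hδ, hδ1, X, hX⟩ := kum_local c d hc (ε / 2) (by positivity)
  obtain ⟨η, hη⟩ : ∃ η, η = δ ^ 2 / 64 := ⟨_, rfl⟩
  have hη0 : 0 < η := by rw [hη]; positivity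
  obtain ⟨K, hK0, hK⟩ := kum_growth c d hc η hη0
  have hxd : ∀ᶠ x : ℝ in atTop, x ^ (-d.re) * Real.exp (-η * x) < 1 :=
    (tendsto_rpow_mul_exp_neg_mul_atTop_nhds_zero (-d.re) η hη0).eventually
      (gt_mem_nhds zero_lt_one)
  have hsm : ∀ᶠ x : ℝ in atTop, (2 * (K + 1)) * Real.exp (-(δ ^ 2 / 16 * x)) < ε / 2 := by
    have h1 : Tendsto (fun x : ℝ => δ ^ 2 / 16 * x) atTop atTop :=
      tendsto_id.const_mul_atTop (by positivity)
    have h2 := (Real.tendsto_exp_neg_atTop_nhds_zero.comp h1).const_mul (2 * (K + 1))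
    rw [mul_zero] at h2
    exact h2.eventually (gt_mem_nhds (by positivity))
  filter_upwards [hxd, hsm, eventually_ge_atTop X, eventually_gt_atTop 0] with x hx1 hx2 hx3 hx0
  have hxd' : ‖(x : ℂ) ^ (-d)‖ ≤ Real.exp (η * x) := by
    rw [Complex.norm_cpow_eq_rpow_re_of_pos hx0, Complex.neg_re]
    have h5 : Real.exp (-η * x) * Real.exp (η * x) = 1 := by
      rw [← Real.exp_add]; simp
    calc x ^ (-d.re) = x ^ (-d.re) * Real.exp (-η * x) * Real.exp (η * x) := by
          rw [mul_assoc, h5, mul_one]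
      _ ≤ 1 * Real.exp (η * x) := by gcongr
      _ = _ := one_mul _
  set w : ℕ → ℝ := fun n => Real.exp (-x) * (x ^ n / n.factorial) with hw
  have hw0 : ∀ n, 0 ≤ w n := fun n => by positivity
  have hw1 : HasSum w 1 := by
    have := kum_hasSum x 0 0
    simpa using this
  obtain ⟨s, hs⟩ : ∃ s, s = δ / 4 := ⟨_, rfl⟩
  have hs0 : 0 < s := by rw [hs]; positivity
  -- bounds of the two tails
  have hB1 := kum_hasSum x (s + η) (η * x - s * ((1 + δ) * x))
  have hB2 := kum_hasSum x (-s + η) (η * x + s * ((1 - δ) * x))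
  have hg : ∀ n, ‖(w n : ℂ) * (c n * (x : ℂ) ^ (-d) - 1)‖ ≤
      w n * (ε / 2) + (K + 1) * (w n * Real.exp ((s + η) * n + (η * x - s * ((1 + δ) * x))) +
        w n * Real.exp ((-s + η) * n + (η * x + s * ((1 - δ) * x)))) := by
    intro n
    rw [norm_mul, Complex.norm_real, Real.norm_of_nonneg (hw0 n)]
    have key : ‖c n * (x : ℂ) ^ (-d) - 1‖ ≤ ε / 2 + (K + 1) *
        (Real.exp ((s + η) * n + (η * x - s * ((1 + δ) * x))) +
        Real.exp ((-s + η) * n + (η * x + s * ((1 - δ) * x)))) := by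
      by_cases hn : |(n:ℝ) - x| ≤ δ * x
      · exact (hX x hx3 n hn).trans (le_add_of_nonneg_right (by positivity))
      · have hb1 : ‖c n * (x : ℂ) ^ (-d) - 1‖ ≤ (K + 1) * Real.exp (η * n + η * x) := by
          calc ‖c n * (x : ℂ) ^ (-d) - 1‖ ≤ ‖c n * (x : ℂ) ^ (-d)‖ + ‖(1:ℂ)‖ := norm_sub_le _ _
            _ ≤ K * Real.exp (η * n) * Real.exp (η * x) + Real.exp (η * n + η * x) := by
              rw [norm_mul, norm_one]
              gcongr
              · exact hK n
              · exact Real.one_le_exp (by positivity)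
            _ = _ := by rw [Real.exp_add]; ring
        have hb2 : Real.exp (η * n + η * x) ≤
            Real.exp ((s + η) * n + (η * x - s * ((1 + δ) * x))) +
            Real.exp ((-s + η) * n + (η * x + s * ((1 - δ) * x))) := by
          rw [not_le, lt_abs] at hn
          rcases hn with hn | hn
          · refine le_trans (Real.exp_le_exp.2 ?_) (le_add_of_nonneg_right (Real.exp_pos _).le)
            nlinarith
          · refine le_trans (Real.exp_le_exp.2 ?_) (le_add_of_nonneg_left (Real.exp_pos _).le)
            nlinarith
        have hb3 := mul_le_mul_of_nonneg_left hb2 (by positivity : (0:ℝ) ≤ K + 1)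
        linarith
    calc _ ≤ _ := mul_le_mul_of_nonneg_left key (hw0 n)
      _ = _ := by ring
  have hBsum := (hw1.mul_right (ε / 2)).add ((hB1.add hB2).mul_left (K + 1))
  have hgs : Summable (fun n => (w n : ℂ) * (c n * (x : ℂ) ^ (-d) - 1)) :=
    Summable.of_norm_bounded hBsum.summable hg
  have hle := tsum_of_norm_bounded hBsum hg
  have hw1c : HasSum (fun n => (w n : ℂ)) 1 := by
    have h1 := Complex.hasSum_ofReal.2 hw1
    rwa [Complex.ofReal_one] at h1
  have heq : (∑' n : ℕ, c n * ((x : ℂ) ^ n / n.factorial)) * (x : ℂ) ^ (-d) *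
      Complex.exp (-(x : ℂ)) - 1 = ∑' n, (w n : ℂ) * (c n * (x : ℂ) ^ (-d) - 1) := by
    have h1 := (hgs.hasSum.add hw1c).tsum_eq
    rw [← sub_eq_iff_eq_add.2 h1, ← tsum_mul_right, ← tsum_mul_right]
    congr 2
    funext n
    simp only [hw]
    push_cast
    ring
  rw [dist_eq_norm, heq]
  have hE : ∀ t : ℝ, |t| ≤ 17 / 64 * δ → Real.exp t - 1 ≤ t + (17 / 64 * δ) ^ 2 := by
    intro t ht
    have h1 := (abs_le.1 (Real.abs_exp_sub_one_sub_id_le (x := t) (by linarith))).2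
    have h2 : t ^ 2 ≤ (17 / 64 * δ) ^ 2 := sq_le_sq' (abs_le.1 ht).1 (abs_le.1 ht).2
    linarith
  have hηδ : η ≤ δ / 64 := by rw [hη]; nlinarith
  have hE1 := hE (s + η) (by rw [abs_le]; constructor <;> linarith)
  have hE2 := hE (-s + η) (by rw [abs_le]; constructor <;> linarith)
  have hT1 : Real.exp (x * (Real.exp (s + η) - 1) + (η * x - s * ((1 + δ) * x))) ≤
      Real.exp (-(δ ^ 2 / 16 * x)) := by
    apply Real.exp_le_exp.2
    have : (Real.exp (s + η) - 1) + (η - s * (1 + δ)) ≤ -(δ ^ 2 / 16) := by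
      subst hs hη; nlinarith
    nlinarith
  have hT2 : Real.exp (x * (Real.exp (-s + η) - 1) + (η * x + s * ((1 - δ) * x))) ≤
      Real.exp (-(δ ^ 2 / 16 * x)) := by
    apply Real.exp_le_exp.2
    have : (Real.exp (-s + η) - 1) + (η + s * (1 - δ)) ≤ -(δ ^ 2 / 16) := by
      subst hs hη; nlinarith
    nlinarith
  have hT3 := mul_le_mul_of_nonneg_left (add_le_add hT1 hT2) (by positivity : (0:ℝ) ≤ K + 1)
  linarith

/-- Leading exponential asymptotics: `₁F₁(a; b; x) ∼ (Γ(b)/Γ(a)) x^{a−b} eˣ` as `x → +∞`. -/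
theorem kummer_leading_asymptotics (a b : ℂ)
    (ha : ∀ n : ℕ, a ≠ -(n : ℂ)) (hb : ∀ n : ℕ, b ≠ -(n : ℂ)) :
    Tendsto (fun x : ℝ =>
        (Complex.Gamma a / Complex.Gamma b) * kummer a b x * (x : ℂ) ^ (b - a) *
          Complex.exp (-(x : ℂ)))
      atTop (nhds 1) := by
  have h := kum_main (fun n => (Complex.Gamma a / Complex.Gamma b) *
      ((ascPochhammer ℂ n).eval a / (ascPochhammer ℂ n).eval b)) (a - b)
      (by simpa only [neg_sub] using kum_coeff a b ha hb)
  refine h.congr fun x => ?_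
  rw [neg_sub, kummer, ← tsum_mul_left]
  congr 2
  refine tsum_congr fun n => ?_
  ring
end

section
/- Let a, b ∈ ℂ with neither a nor b a nonpositive integer, and let N be a positive integer. Then as x → +∞ along the positive real axis, (Γ(a)/Γ(b)) · ₁F₁(a; b; x) − x^{a−b} e^x ∑_{j=0}^{N−1} (b−a)_j (1−a)_j / (j! x^j) = O(x^{Re(a−b)−N} e^x). -/
open Complex Filter Asymptotics

lemma fact_add_le (n m : ℕ) : (n + m).factorial ≤ m.factorial * (n.factorial * (n + 1) ^ m) := by
  induction m with
  | zero => simp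
  | succ m ih =>
    rw [← add_assoc, Nat.factorial_succ, Nat.factorial_succ, pow_succ]
    calc (n + m + 1) * (n + m).factorial
        ≤ ((m + 1) * (n + 1)) * (m.factorial * (n.factorial * (n + 1) ^ m)) := by
          apply Nat.mul_le_mul _ ih
          nlinarith
      _ = _ := by ring

lemma rpow_le_pow_add (t p : ℝ) (ht : 0 < t) (m : ℕ) (hm : |p| ≤ m) :
    t ^ p ≤ t ^ m + (t⁻¹) ^ m := by
  have h1 := (abs_le.mp hm).1
  have h2 := (abs_le.mp hm).2
  rcases le_total 1 t with h | h
  · have : t ^ p ≤ t ^ (m : ℝ) := Real.rpow_le_rpow_of_exponent_le h h2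
    rw [Real.rpow_natCast] at this
    have : 0 ≤ (t⁻¹) ^ m := by positivity
    linarith
  · have : t ^ p ≤ t ^ (-(m : ℝ)) := Real.rpow_le_rpow_of_exponent_ge ht h h1
    rw [Real.rpow_neg ht.le, Real.rpow_natCast, ← inv_pow] at this
    have : 0 ≤ t ^ m := by positivity
    linarith

/-- The basic majorant series. -/
lemma major_series (p : ℝ) : ∃ C : ℝ, ∀ x : ℝ, 1 ≤ x →
    Summable (fun n : ℕ => x ^ n / n.factorial * ((n : ℝ) + 1) ^ (-p)) ∧
    ∑' n : ℕ, x ^ n / n.factorial * ((n : ℝ) + 1) ^ (-p) ≤ C * (x ^ (-p) * Real.exp x) := by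
  obtain ⟨m, hm⟩ := exists_nat_ge |p|
  refine ⟨m.factorial * (1 + Real.exp 1 * Real.exp 2), fun x hx => ?_⟩
  have hx0 : 0 < x := by linarith
  set f : ℕ → ℝ := fun n => x ^ n / n.factorial * ((n : ℝ) + 1) ^ (-p) with hf
  set y : ℝ := x * Real.exp (1 / x) with hy
  set g1 : ℕ → ℝ := fun n => x ^ (n + m) / (n + m).factorial with hg1
  set g2 : ℕ → ℝ := fun n => y ^ n / n.factorial with hg2
  have hs2 : HasSum g2 (Real.exp y) := by
    have := NormedSpace.expSeries_div_hasSum_exp (𝔸 := ℝ) y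
    rwa [← Real.exp_eq_exp_ℝ] at this
  have hs0 : HasSum (fun n : ℕ => x ^ n / n.factorial) (Real.exp x) := by
    have := NormedSpace.expSeries_div_hasSum_exp (𝔸 := ℝ) x
    rwa [← Real.exp_eq_exp_ℝ] at this
  have hs1 : Summable g1 := (summable_nat_add_iff (f := fun n : ℕ => x ^ n / n.factorial) m).2 hs0.summable
  have ht1 : ∑' n, g1 n ≤ Real.exp x := by
    have := hs0.summable.sum_add_tsum_nat_add m
    rw [hs0.tsum_eq] at this
    have h0 : 0 ≤ ∑ i ∈ Finset.range m, x ^ i / (i.factorial : ℝ) :=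
      Finset.sum_nonneg fun i _ => by positivity
    linarith
  have hle : ∀ n, f n ≤ x ^ (-p) * m.factorial * (g1 n + Real.exp (1 / x) * g2 n) := by
    intro n
    have hn : (0 : ℝ) < (n : ℝ) + 1 := by positivity
    have e1 : ((n : ℝ) + 1) ^ (-p) = x ^ (-p) * (x / ((n : ℝ) + 1)) ^ p := by
      rw [Real.div_rpow hx0.le hn.le, Real.rpow_neg hx0.le, Real.rpow_neg hn.le]
      have := (Real.rpow_pos_of_pos hx0 p).ne'
      field_simp
    have e2 := rpow_le_pow_add (x / ((n : ℝ) + 1)) p (by positivity) m hm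
    have e3 : x ^ n / n.factorial * (x / ((n : ℝ) + 1)) ^ m ≤ m.factorial * g1 n := by
      have h := fact_add_le n m
      have h' : ((n + m).factorial : ℝ) ≤ m.factorial * (n.factorial * ((n : ℝ) + 1) ^ m) := by
        exact_mod_cast h
      simp only [hg1]
      rw [div_pow, div_mul_div_comm, ← pow_add, mul_div_assoc', div_le_div_iff₀ (by positivity) (by positivity)]
      calc x ^ (n + m) * ((n + m).factorial : ℝ) ≤ x ^ (n + m) * (m.factorial * (n.factorial * ((n : ℝ) + 1) ^ m)) := by gcongr
        _ = _ := by ring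
    have e4 : x ^ n / n.factorial * ((x / ((n : ℝ) + 1))⁻¹) ^ m ≤
        m.factorial * (Real.exp (1 / x) * g2 n) := by
      have h := Real.pow_div_factorial_le_exp ((x / ((n : ℝ) + 1))⁻¹) (by positivity) m
      rw [div_le_iff₀ (by positivity)] at h
      have h2 : Real.exp ((x / ((n : ℝ) + 1))⁻¹) = Real.exp (1 / x) * Real.exp (1 / x) ^ n := by
        rw [← Real.exp_nat_mul, ← Real.exp_add]
        congr 1
        field_simp
        ring
      calc x ^ n / n.factorial * ((x / ((n : ℝ) + 1))⁻¹) ^ m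
          ≤ x ^ n / n.factorial * (Real.exp ((x / ((n : ℝ) + 1))⁻¹) * m.factorial) := by gcongr
        _ = _ := by
          rw [h2]; simp only [hg2, hy, mul_pow]; ring
    calc f n = x ^ (-p) * (x ^ n / n.factorial * (x / ((n : ℝ) + 1)) ^ p) := by
            simp only [hf]; rw [e1]; ring
      _ ≤ x ^ (-p) * (x ^ n / n.factorial * ((x / ((n : ℝ) + 1)) ^ m + ((x / ((n : ℝ) + 1))⁻¹) ^ m)) := by
            gcongr
      _ = x ^ (-p) * (x ^ n / n.factorial * (x / ((n : ℝ) + 1)) ^ m + x ^ n / n.factorial * ((x / ((n : ℝ) + 1))⁻¹) ^ m) := by ring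
      _ ≤ x ^ (-p) * (m.factorial * g1 n + m.factorial * (Real.exp (1 / x) * g2 n)) := by
            gcongr
      _ = _ := by ring
  have hf0 : ∀ n, 0 ≤ f n := fun n => by positivity
  have hsg : Summable (fun n => x ^ (-p) * m.factorial * (g1 n + Real.exp (1 / x) * g2 n)) :=
    (hs1.add (hs2.summable.mul_left _)).mul_left _
  have hsf : Summable f := Summable.of_nonneg_of_le hf0 hle hsg
  refine ⟨hsf, (hsf.tsum_le_tsum hle hsg).trans ?_⟩
  rw [tsum_mul_left, hs1.tsum_add (hs2.summable.mul_left _), tsum_mul_left, hs2.tsum_eq]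
  have hu : 1 / x ≤ 1 := by rw [div_le_one hx0]; exact hx
  have hu0 : 0 < 1 / x := by positivity
  have hy2 : y ≤ x + 2 := by
    have := Real.abs_exp_sub_one_le (x := 1 / x) (by rw [abs_of_pos hu0]; exact hu)
    rw [abs_of_pos hu0] at this
    have h3 : Real.exp (1 / x) ≤ 1 + 2 * (1 / x) := by linarith [le_abs_self (Real.exp (1 / x) - 1)]
    calc y ≤ x * (1 + 2 * (1 / x)) := by rw [hy]; gcongr
      _ = x + 2 := by field_simp
  calc x ^ (-p) * m.factorial * (∑' n, g1 n + Real.exp (1 / x) * Real.exp y)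
      ≤ x ^ (-p) * m.factorial * (Real.exp x + Real.exp 1 * Real.exp (x + 2)) := by gcongr
    _ = _ := by rw [Real.exp_add]; ring

lemma gamma_shift_inv (z : ℂ) (n : ℕ) :
    (Gamma (z + n))⁻¹ = (z + n) * (Gamma (z + 1 + n))⁻¹ := by
  have := Complex.one_div_Gamma_eq_self_mul_one_div_Gamma_add_one (z + n)
  rw [show z + 1 + (n : ℂ) = z + n + 1 by ring]
  simpa using this

/-- `n! n^{z-1} / Γ(z+n) → 1`. -/
lemma gamma_ratio_tendsto (z : ℂ) :
    Tendsto (fun n : ℕ => (n.factorial : ℂ) * (n : ℂ) ^ (z - 1) * (Gamma (z + n))⁻¹)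
      atTop (nhds 1) := by
  have key : ∀ z : ℂ, Tendsto (fun n : ℕ => (n.factorial : ℂ) * (n : ℂ) ^ z * (Gamma (z + 1 + n))⁻¹)
      atTop (nhds 1) → 
      Tendsto (fun n : ℕ => (n.factorial : ℂ) * (n : ℂ) ^ (z - 1) * (Gamma (z + n))⁻¹)
      atTop (nhds 1) := by
    intro z h
    have h2 : Tendsto (fun n : ℕ => z / (n : ℂ) + 1) atTop (nhds 1) := by
      have := (tendsto_const_div_atTop_nhds_zero_nat z).add_const 1
      simpa using this
    have := h.mul h2
    rw [one_mul] at this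
    refine this.congr' ?_
    filter_upwards [eventually_gt_atTop 0] with n hn
    have hn' : (n : ℂ) ≠ 0 := by exact_mod_cast hn.ne'
    rw [gamma_shift_inv z n, Complex.cpow_sub _ _ hn', Complex.cpow_one]
    field_simp
  have base : ∀ z : ℂ, 0 < z.re → Tendsto (fun n : ℕ => (n.factorial : ℂ) * (n : ℂ) ^ z * (Gamma (z + 1 + n))⁻¹)
      atTop (nhds 1) := by
    intro z hz
    have hG : Gamma z ≠ 0 := Gamma_ne_zero_of_re_pos hz
    have h := (GammaSeq_tendsto_Gamma z).mul_const (Gamma z)⁻¹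
    rw [mul_inv_cancel₀ hG] at h
    refine h.congr fun n => ?_
    have hP : Gamma (z + 1 + n) = Gamma z * ∏ j ∈ Finset.range (n + 1), (z + j) := by
      induction n with
      | zero => simp [Gamma_add_one z (fun h => by simp [h] at hz), mul_comm]
      | succ n ih =>
        rw [Finset.prod_range_succ, ← mul_assoc, ← ih, mul_comm]
        push_cast
        rw [show z + 1 + ((n : ℂ) + 1) = (z + 1 + n) + 1 by ring, Gamma_add_one]
        · ring
        · intro h
          have := congrArg Complex.re h
          simp at this
          linarith
    rw [hP, GammaSeq]
    rw [mul_inv]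
    ring
  have all : ∀ k : ℕ, ∀ z : ℂ, 0 < z.re + k → Tendsto (fun n : ℕ => (n.factorial : ℂ) * (n : ℂ) ^ z * (Gamma (z + 1 + n))⁻¹)
      atTop (nhds 1) := by
    intro k
    induction k with
    | zero => intro z hz; exact base z (by simpa using hz)
    | succ k ih =>
      intro z hz
      have := key (z + 1) (ih (z + 1) (by push_cast at hz; simp; linarith))
      simpa using this
  obtain ⟨k, hk⟩ := exists_nat_gt (-z.re)
  exact key z (all k z (by linarith))

lemma bound_of_scaled (z : ℂ) (f : ℕ → ℂ)
    (h : (fun n : ℕ => (n.factorial : ℂ) * (n : ℂ) ^ z * f n) =O[atTop] (fun _ => (1 : ℝ))) :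
    ∃ C : ℝ, 0 < C ∧ ∀ n : ℕ, ‖f n‖ ≤ C * (((n : ℝ) + 1) ^ (-z.re) / n.factorial) := by
  have hO : f =O[atTop] (fun n : ℕ => ((n : ℝ) + 1) ^ (-z.re) / (n.factorial : ℝ)) := by
    obtain ⟨c, hc⟩ := h.bound
    refine IsBigO.of_bound (c * 2 ^ |z.re|) ?_
    filter_upwards [hc, eventually_gt_atTop 0] with n hn hn0
    have hn' : (0 : ℝ) < n := by exact_mod_cast hn0
    have hn1 : (1 : ℝ) ≤ n := by exact_mod_cast hn0
    have hF : (0 : ℝ) < n.factorial := by exact_mod_cast n.factorial_pos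
    have hnz : ‖(n : ℂ) ^ z‖ = (n : ℝ) ^ z.re := by
      have := norm_cpow_eq_rpow_re_of_pos hn' z
      simpa using this
    rw [norm_mul, norm_mul, hnz, Complex.norm_natCast, norm_one, mul_one] at hn
    have hnn : (0 : ℝ) ≤ ((n : ℝ) + 1) ^ (-z.re) / (n.factorial : ℝ) := by positivity
    rw [Real.norm_of_nonneg hnn]
    have hp := Real.rpow_pos_of_pos hn' z.re
    have h1 : ((n : ℝ) + 1) ^ z.re ≤ 2 ^ |z.re| * (n : ℝ) ^ z.re := by
      have e : (n : ℝ) + 1 = (((n : ℝ) + 1) / n) * n := by field_simp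
      rw [e, Real.mul_rpow (by positivity) hn'.le]
      gcongr
      have g1 : (1 : ℝ) ≤ ((n : ℝ) + 1) / n := by rw [le_div_iff₀ hn']; linarith
      have g2 : ((n : ℝ) + 1) / n ≤ 2 := by rw [div_le_iff₀ hn']; linarith
      calc (((n : ℝ) + 1) / n) ^ z.re ≤ (((n : ℝ) + 1) / n) ^ |z.re| :=
            Real.rpow_le_rpow_of_exponent_le g1 (le_abs_self _)
        _ ≤ 2 ^ |z.re| := Real.rpow_le_rpow (by positivity) g2 (abs_nonneg _)
    have hq : (0 : ℝ) < ((n : ℝ) + 1) ^ z.re := by positivity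
    rw [Real.rpow_neg (by positivity)]
    have h2 : ‖f n‖ * (n.factorial * ((n : ℝ) + 1) ^ z.re) ≤ c * 2 ^ |z.re| := by
      calc ‖f n‖ * (n.factorial * ((n : ℝ) + 1) ^ z.re)
          ≤ ‖f n‖ * (n.factorial * (2 ^ |z.re| * (n : ℝ) ^ z.re)) := by gcongr
        _ = (n.factorial * (n : ℝ) ^ z.re * ‖f n‖) * 2 ^ |z.re| := by ring
        _ ≤ c * 2 ^ |z.re| := by gcongr
    calc ‖f n‖ = ‖f n‖ * (n.factorial * ((n : ℝ) + 1) ^ z.re) * ((((n : ℝ) + 1) ^ z.re)⁻¹ / n.factorial) := by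
          field_simp
      _ ≤ _ := by gcongr
  obtain ⟨C, hC, hb⟩ := bound_of_isBigO_nat_atTop hO
  refine ⟨C, hC, fun n => ?_⟩
  have hpos : (0 : ℝ) < ((n : ℝ) + 1) ^ (-z.re) / (n.factorial : ℝ) := by positivity
  have := hb hpos.ne'
  rwa [Real.norm_of_nonneg hpos.le] at this

/-- Series with coefficients of Gamma type: summability and size. -/
lemma series_bound (p C : ℝ) (f : ℕ → ℂ)
    (hf : ∀ n : ℕ, ‖f n‖ ≤ C * (((n : ℝ) + 1) ^ (-p) / n.factorial)) :
    (∀ x : ℝ, 1 ≤ x → Summable (fun n : ℕ => f n * (x : ℂ) ^ n)) ∧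
    (fun x : ℝ => ∑' n : ℕ, f n * (x : ℂ) ^ n) =O[atTop]
      fun x : ℝ => x ^ (-p) * Real.exp x := by
  obtain ⟨K, hK⟩ := major_series p
  have hb : ∀ x : ℝ, 1 ≤ x → ∀ n : ℕ, ‖f n * (x : ℂ) ^ n‖ ≤
      C * (x ^ n / n.factorial * ((n : ℝ) + 1) ^ (-p)) := by
    intro x hx n
    have hx0 : 0 ≤ x := by linarith
    rw [norm_mul, norm_pow, Complex.norm_of_nonneg hx0]
    calc ‖f n‖ * x ^ n ≤ C * (((n : ℝ) + 1) ^ (-p) / n.factorial) * x ^ n := by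
          gcongr; exact hf n
      _ = _ := by ring
  refine ⟨fun x hx => Summable.of_norm_bounded ((hK x hx).1.mul_left C) (hb x hx), ?_⟩
  refine IsBigO.of_bound (|C| * K) ?_
  filter_upwards [eventually_ge_atTop 1] with x hx
  have hx0 : 0 < x := by linarith
  have h1 := tsum_of_norm_bounded ((hK x hx).1.mul_left C).hasSum (hb x hx)
  refine h1.trans ?_
  rw [tsum_mul_left]
  have hT : 0 ≤ ∑' n : ℕ, x ^ n / n.factorial * ((n : ℝ) + 1) ^ (-p) :=
    tsum_nonneg fun n => by positivity
  have hp : 0 ≤ x ^ (-p) * Real.exp x := by positivity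
  rw [Real.norm_of_nonneg hp, mul_assoc]
  calc _ ≤ |C| * ∑' n : ℕ, x ^ n / n.factorial * ((n : ℝ) + 1) ^ (-p) := by
        gcongr; exact le_abs_self C
    _ ≤ _ := by gcongr; exact (hK x hx).2

lemma gamma_inv_bound (z : ℂ) :
    ∃ C : ℝ, 0 < C ∧ ∀ n : ℕ, ‖(Gamma (z + 1 + n))⁻¹‖ ≤
      C * (((n : ℝ) + 1) ^ (-z.re) / n.factorial) := by
  apply bound_of_scaled
  have := (gamma_ratio_tendsto (z + 1)).isBigO_one ℝ
  simpa using this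

lemma gamma_inv_summable (z : ℂ) (x : ℝ) (hx : 1 ≤ x) :
    Summable (fun n : ℕ => (Gamma (z + 1 + n))⁻¹ * (x : ℂ) ^ n) := by
  obtain ⟨C, hC, h⟩ := gamma_inv_bound z
  exact (series_bound _ C _ h).1 x hx

/-- The Mittag-Leffler type series `∑ xⁿ / Γ(σ+1+n)`. -/
noncomputable def mlSeries (z : ℂ) (x : ℝ) : ℂ := ∑' n : ℕ, (Gamma (z + 1 + n))⁻¹ * (x : ℂ) ^ n

lemma partial_sum_identity (z : ℂ) (hz : 0 < z.re) (x : ℝ) (hx : 0 < x) (K : ℕ) :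
    Complex.exp (-x) * (x : ℂ) ^ z * ∑ n ∈ Finset.range K, (Gamma (z + 1 + n))⁻¹ * (x : ℂ) ^ n
      = partialGamma z x / Gamma z - partialGamma (z + K) x / Gamma (z + K) := by
  induction K with
  | zero => simp
  | succ K ih =>
    rw [Finset.sum_range_succ, mul_add, ih]
    have hre : 0 < (z + K).re := by simp; positivity
    have hne : z + K ≠ 0 := by intro h; rw [h] at hre; simp at hre
    have hG : Gamma (z + K) ≠ 0 := Gamma_ne_zero_of_re_pos hre
    have h1 := partialGamma_add_one hre hx.le
    have h2 := Gamma_add_one (z + K) hne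
    push_cast
    rw [show z + ((K : ℂ) + 1) = z + K + 1 by ring, h1, show z + 1 + (K : ℂ) = z + K + 1 by ring, h2,
      Complex.cpow_add _ _ (by exact_mod_cast hx.ne'), Complex.cpow_natCast]
    push_cast
    field_simp
    ring

lemma partialGamma_norm_le (z : ℂ) (hz : 1 ≤ z.re) (x : ℝ) (hx : 0 < x) :
    ‖partialGamma z x‖ ≤ x ^ z.re := by
  have := intervalIntegral.norm_integral_le_of_norm_le_const (a := 0) (b := x) (C := x ^ (z.re - 1))
    (f := fun t : ℝ => ((-t).exp : ℂ) * (t : ℂ) ^ (z - 1)) (by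
      intro t ht
      rw [Set.uIoc_of_le hx.le] at ht
      rw [norm_mul, norm_cpow_eq_rpow_re_of_pos ht.1, Complex.norm_of_nonneg (Real.exp_pos _).le]
      have h1 : Real.exp (-t) ≤ 1 := by rw [Real.exp_le_one_iff]; linarith [ht.1]
      have h2 : t ^ (z - 1).re ≤ x ^ (z.re - 1) := by
        simp only [sub_re, one_re]
        exact Real.rpow_le_rpow ht.1.le ht.2 (by linarith)
      have h3 : 0 ≤ t ^ (z - 1).re := by have := ht.1; positivity
      nlinarith [Real.exp_pos (-t)])
  rw [partialGamma]
  refine this.trans (le_of_eq ?_)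
  rw [sub_zero, abs_of_pos hx, Real.rpow_sub_one hx.ne']
  field_simp

lemma mlSeries_eq (z : ℂ) (hz : 0 < z.re) (x : ℝ) (hx : 1 ≤ x) :
    Complex.exp (-x) * (x : ℂ) ^ z * mlSeries z x = partialGamma z x / Gamma z := by
  have hx0 : 0 < x := by linarith
  have hs := gamma_inv_summable z x hx
  have h1 : Tendsto (fun K : ℕ => partialGamma z x / Gamma z -
      partialGamma (z + (K + 1 : ℕ)) x / Gamma (z + (K + 1 : ℕ))) atTop
      (nhds (Complex.exp (-x) * (x : ℂ) ^ z * mlSeries z x)) := by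
    have := (hs.hasSum.tendsto_sum_nat.comp (tendsto_add_atTop_nat 1)).const_mul (Complex.exp (-x) * (x : ℂ) ^ z)
    refine this.congr fun K => ?_
    exact partial_sum_identity z hz x hx0 (K + 1)
  have h2 : Tendsto (fun K : ℕ => 
      partialGamma (z + (K + 1 : ℕ)) x / Gamma (z + (K + 1 : ℕ))) atTop (nhds 0) := by
    have h3 : Tendsto (fun K : ℕ => x ^ (z.re + 1) * ‖(Gamma (z + 1 + K))⁻¹ * (x : ℂ) ^ K‖) atTop (nhds 0) := by
      have := hs.tendsto_atTop_zero.norm.const_mul (x ^ (z.re + 1))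
      simpa using this
    refine squeeze_zero_norm (fun K => ?_) h3
    have h4 := partialGamma_norm_le (z + (K + 1 : ℕ)) (by
      simp
      have : (0 : ℝ) ≤ K := by positivity
      linarith) x hx0
    rw [div_eq_mul_inv, norm_mul, norm_mul, norm_pow, Complex.norm_of_nonneg hx0.le]
    have e1 : z + ((K + 1 : ℕ) : ℂ) = z + 1 + K := by push_cast; ring
    have e2 : x ^ (z + 1 + (K : ℂ)).re = x ^ (z.re + 1) * x ^ K := by
      simp only [add_re, one_re, natCast_re]
      rw [Real.rpow_add hx0, Real.rpow_natCast]
    rw [e1] at h4 ⊢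
    rw [e2] at h4
    calc _ ≤ (x ^ (z.re + 1) * x ^ K) * ‖(Gamma (z + 1 + K))⁻¹‖ := by gcongr
      _ = _ := by ring
  have h5 := h2.const_sub (partialGamma z x / Gamma z)
  rw [sub_zero] at h5
  exact tendsto_nhds_unique h1 h5

lemma gamma_tail (z : ℂ) (hz : 0 < z.re) (K : ℕ) : ∃ C : ℝ, ∀ x : ℝ, 1 ≤ x →
    ‖Gamma z - partialGamma z x‖ ≤ C * x ^ (-(K : ℝ)) := by
  refine ⟨∫ t in Set.Ioi (0 : ℝ), Real.exp (-t) * t ^ (z.re + K - 1), fun x hx => ?_⟩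
  have hx0 : 0 < x := by linarith
  have hint := GammaIntegral_convergent hz
  have hrint := Real.GammaIntegral_convergent (s := z.re + K) (by positivity)
  have hsub : Set.Ioi x ⊆ Set.Ioi (0 : ℝ) := Set.Ioi_subset_Ioi hx0.le
  have h1 : Gamma z - partialGamma z x = ∫ t in Set.Ioi x, ((-t).exp : ℂ) * (t : ℂ) ^ (z - 1) := by
    rw [Gamma_eq_integral hz, GammaIntegral, partialGamma, ← intervalIntegral.integral_interval_add_Ioi
      (a := 0) (b := x)]
    · simp
    · simpa using hint
    · simpa using hint.mono_set hsub
  rw [h1]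
  calc _ ≤ ∫ t in Set.Ioi x, (Real.exp (-t) * t ^ (z.re + K - 1)) * x ^ (-(K : ℝ)) := by
        refine MeasureTheory.norm_integral_le_of_norm_le ((hrint.mono_set hsub).mul_const _) ?_
        refine (MeasureTheory.ae_restrict_iff' measurableSet_Ioi).mpr (Eventually.of_forall fun t ht => ?_)
        have ht' : x < t := ht
        have ht0 : 0 < t := by linarith
        rw [norm_mul, norm_cpow_eq_rpow_re_of_pos ht0, Complex.norm_of_nonneg (Real.exp_pos _).le, mul_assoc]
        gcongr
        have e : t ^ (z.re + K - 1) = t ^ (z - 1).re * t ^ K := by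
          rw [← Real.rpow_natCast, ← Real.rpow_add ht0]
          congr 1
          simp
          ring
        rw [e, Real.rpow_neg hx0.le, Real.rpow_natCast, mul_assoc]
        have h2 : 1 ≤ t ^ K * (x ^ K)⁻¹ := by
          rw [← div_eq_mul_inv, one_le_div (by positivity)]
          gcongr
        have h3 : 0 ≤ t ^ (z - 1).re := by positivity
        nlinarith
    _ = (∫ t in Set.Ioi x, Real.exp (-t) * t ^ (z.re + K - 1)) * x ^ (-(K : ℝ)) := by
        rw [MeasureTheory.integral_mul_const]
    _ ≤ _ := by
        refine mul_le_mul_of_nonneg_right ?_ (by positivity)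
        refine MeasureTheory.setIntegral_mono_set hrint ?_ hsub.eventuallyLE
        refine (MeasureTheory.ae_restrict_iff' measurableSet_Ioi).mpr (Eventually.of_forall fun t ht => ?_)
        have ht' : 0 < t := ht
        simp only [Pi.zero_apply]
        positivity

lemma mlSeries_asymp_pos (z : ℂ) (hz : 0 < z.re) (p : ℝ) :
    (fun x : ℝ => mlSeries z x - (x : ℂ) ^ (-z) * Complex.exp x) =O[atTop]
      fun x : ℝ => x ^ p * Real.exp x := by
  obtain ⟨K, hK⟩ := exists_nat_ge (-p)
  obtain ⟨C, hC⟩ := gamma_tail z hz K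
  have hG : Gamma z ≠ 0 := Gamma_ne_zero_of_re_pos hz
  refine IsBigO.of_bound (|C| * ‖(Gamma z)⁻¹‖) ?_
  filter_upwards [eventually_ge_atTop 1] with x hx
  have hx0 : 0 < x := by linarith
  have hxc : (x : ℂ) ≠ 0 := by exact_mod_cast hx0.ne'
  have hz1 : (x : ℂ) ^ z ≠ 0 := by simp [cpow_eq_zero_iff, hxc]
  have h := mlSeries_eq z hz x hx
  have e : mlSeries z x - (x : ℂ) ^ (-z) * Complex.exp x =
      -((x : ℂ) ^ (-z) * Complex.exp x * (Gamma z)⁻¹ * (Gamma z - partialGamma z x)) := by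
    have h2 : mlSeries z x = (x : ℂ) ^ (-z) * Complex.exp x * (partialGamma z x / Gamma z) := by
      rw [← h, cpow_neg, Complex.exp_neg]
      have := Complex.exp_ne_zero x
      field_simp
    rw [h2]
    field_simp
    ring
  rw [e, norm_neg, norm_mul, norm_mul, norm_mul, norm_cpow_eq_rpow_re_of_pos hx0, ← Complex.ofReal_exp,
    Complex.norm_of_nonneg (Real.exp_pos _).le, Real.norm_of_nonneg (by positivity)]
  have h3 : x ^ (-z).re ≤ 1 := Real.rpow_le_one_of_one_le_of_nonpos hx (by simp; exact hz.le)
  have h4 : x ^ (-(K : ℝ)) ≤ x ^ p := Real.rpow_le_rpow_of_exponent_le hx (by linarith)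
  calc x ^ (-z).re * Real.exp x * ‖(Gamma z)⁻¹‖ * ‖Gamma z - partialGamma z x‖
      ≤ 1 * Real.exp x * ‖(Gamma z)⁻¹‖ * (|C| * x ^ p) := by
        gcongr
        refine (hC x hx).trans ?_
        have : C ≤ |C| := le_abs_self C
        gcongr
    _ = _ := by ring

lemma mlSeries_asymp (z : ℂ) (p : ℝ) :
    (fun x : ℝ => mlSeries z x - (x : ℂ) ^ (-z) * Complex.exp x) =O[atTop]
      fun x : ℝ => x ^ p * Real.exp x := by
  have all : ∀ k : ℕ, ∀ z : ℂ, 0 < z.re + k → ∀ p : ℝ,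
    (fun x : ℝ => mlSeries z x - (x : ℂ) ^ (-z) * Complex.exp x) =O[atTop]
      fun x : ℝ => x ^ p * Real.exp x := by
    intro k
    induction k with
    | zero => intro z hz; exact mlSeries_asymp_pos z (by simpa using hz)
    | succ k ih =>
      intro z hz p
      have h1 := ih (z + 1) (by push_cast at hz; simp; linarith) (p - 1)
      have h2 : (fun x : ℝ => (x : ℂ) * (mlSeries (z + 1) x - (x : ℂ) ^ (-(z + 1)) * Complex.exp x)) =O[atTop]
          fun x : ℝ => x ^ p * Real.exp x := by
        have h3 : (fun x : ℝ => (x : ℂ)) =O[atTop] (fun x : ℝ => x) :=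
          IsBigO.of_bound 1 (Eventually.of_forall fun x => by simp)
        refine (h3.mul h1).congr' EventuallyEq.rfl ?_
        filter_upwards [eventually_gt_atTop 0] with x hx
        rw [Real.rpow_sub_one hx.ne']
        field_simp
      have h4 : (fun _ : ℝ => (Gamma (z + 1))⁻¹) =O[atTop] fun x : ℝ => x ^ p * Real.exp x := by
        have h5 : (fun _ : ℝ => (Gamma (z + 1))⁻¹) =O[atTop] (fun _ : ℝ => (1 : ℝ)) :=
          isBigO_const_const _ one_ne_zero _
        refine h5.trans ?_
        have h6 := (isLittleO_rpow_exp_atTop (-p)).isBigO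
        have h7 := (isBigO_refl (fun x : ℝ => x ^ p) atTop).mul h6
        refine h7.congr' ?_ EventuallyEq.rfl
        filter_upwards [eventually_gt_atTop 0] with x hx
        rw [← Real.rpow_add hx]; simp
      refine (h4.add h2).congr' ?_ EventuallyEq.rfl
      filter_upwards [eventually_ge_atTop 1] with x hx
      have hx0 : (x : ℂ) ≠ 0 := by
        have : x ≠ 0 := by linarith
        exact_mod_cast this
      have e1 : mlSeries z x = (Gamma (z + 1))⁻¹ + x * mlSeries (z + 1) x := by
        rw [mlSeries, (gamma_inv_summable z x hx).tsum_eq_zero_add, mlSeries, ← tsum_mul_left]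
        congr 1
        · simp
        · congr 1
          ext n
          rw [show z + 1 + ((n + 1 : ℕ) : ℂ) = z + 1 + 1 + n by push_cast; ring]
          ring
      rw [e1, show -(z + 1) = -z - 1 by ring, cpow_sub _ _ hx0, cpow_one]
      field_simp
      ring
  obtain ⟨k, hk⟩ := exists_nat_gt (-z.re)
  exact all k z (by linarith) p

/-- Coefficients of the expansion. -/
noncomputable def kc (a b : ℂ) (j : ℕ) : ℂ :=
  (ascPochhammer ℂ j).eval (b - a) * (ascPochhammer ℂ j).eval (1 - a) / j.factorial

/-- Taylor coefficients of `Γ(a)/Γ(b) ₁F₁`. -/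
noncomputable def kr (a b : ℂ) (n : ℕ) : ℂ := Gamma (a + n) * (Gamma (b + n))⁻¹ * (n.factorial : ℂ)⁻¹

/-- Truncated inverse factorial series. -/
noncomputable def kp (a b : ℂ) (N n : ℕ) : ℂ :=
  ∑ j ∈ Finset.range N, kc a b j * (Gamma (b - a + j + 1 + n))⁻¹

/-- The normalised Gamma ratio. -/
noncomputable def kE (z : ℂ) (n : ℕ) : ℂ := (n.factorial : ℂ) * (n : ℂ) ^ (z - 1) * (Gamma (z + n))⁻¹

lemma gamma_shift_ne (a : ℂ) (ha : ∀ n : ℕ, a ≠ -(n : ℂ)) (n : ℕ) : Gamma (a + n) ≠ 0 := by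
  apply Gamma_ne_zero
  intro m h
  apply ha (m + n)
  push_cast
  linear_combination h

lemma kc_succ (a b : ℂ) (j : ℕ) :
    kc a b j * ((b - a + j) * (1 - a + j)) = (j + 1) * kc a b (j + 1) := by
  unfold kc
  rw [ascPochhammer_succ_eval, ascPochhammer_succ_eval, Nat.factorial_succ]
  have h1 : (j.factorial : ℂ) ≠ 0 := by exact_mod_cast j.factorial_ne_zero
  have h2 : (j : ℂ) + 1 ≠ 0 := by exact_mod_cast j.succ_ne_zero
  push_cast
  field_simp

lemma kp_rec (a b : ℂ) (N n : ℕ) :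
    (b + n) * (n + 1) * kp a b N (n + 1) - (a + n) * kp a b N n =
      N * kc a b N * (Gamma (b - a + N + 1 + n))⁻¹ := by
  induction N with
  | zero => simp [kp]
  | succ N ih =>
    have e1 : kp a b (N + 1) (n + 1) = kp a b N (n + 1) + kc a b N * (Gamma (b - a + (N + 1 : ℕ) + 1 + n))⁻¹ := by
      rw [kp, Finset.sum_range_succ, ← kp]
      congr 4
      push_cast; ring
    have e2 : kp a b (N + 1) n = kp a b N n + kc a b N * (Gamma (b - a + N + 1 + n))⁻¹ := by
      rw [kp, Finset.sum_range_succ, ← kp]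
    have e3 := gamma_shift_inv (b - a + N + 1) n
    have e4 : b - a + ((N + 1 : ℕ) : ℂ) + 1 = b - a + N + 1 + 1 := by push_cast; ring
    rw [e1, e2, e4]
    rw [e3] at ih ⊢
    set W := (Gamma (b - a + N + 1 + 1 + n))⁻¹
    have e5 := kc_succ a b N
    push_cast
    linear_combination ih + W * e5

lemma kr_ne (a b : ℂ) (ha : ∀ n : ℕ, a ≠ -(n : ℂ)) (hb : ∀ n : ℕ, b ≠ -(n : ℂ)) (n : ℕ) :
    kr a b n ≠ 0 := by
  have h1 : (n.factorial : ℂ) ≠ 0 := by exact_mod_cast n.factorial_ne_zero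
  exact mul_ne_zero (mul_ne_zero (gamma_shift_ne a ha n) (inv_ne_zero (gamma_shift_ne b hb n))) (inv_ne_zero h1)

lemma add_nat_ne (a : ℂ) (ha : ∀ n : ℕ, a ≠ -(n : ℂ)) (n : ℕ) : a + n ≠ 0 :=
  fun h => ha n (by linear_combination h)

lemma kr_rec (a b : ℂ) (ha : ∀ n : ℕ, a ≠ -(n : ℂ)) (hb : ∀ n : ℕ, b ≠ -(n : ℂ)) (n : ℕ) :
    (b + n) * (n + 1) * kr a b (n + 1) = (a + n) * kr a b n := by
  have h1 : (n.factorial : ℂ) ≠ 0 := by exact_mod_cast n.factorial_ne_zero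
  have h2 : (n : ℂ) + 1 ≠ 0 := by exact_mod_cast n.succ_ne_zero
  have h3 := gamma_shift_ne b hb n
  have h4 := add_nat_ne b hb n
  unfold kr
  rw [Nat.factorial_succ]
  push_cast
  rw [← add_assoc, ← add_assoc, Gamma_add_one _ (add_nat_ne a ha n), Gamma_add_one _ h4]
  field_simp

lemma kw_eq (a b : ℂ) (ha : ∀ n : ℕ, a ≠ -(n : ℂ)) (hb : ∀ n : ℕ, b ≠ -(n : ℂ)) (j n : ℕ) (hn : 0 < n) :
    (Gamma (b - a + j + 1 + n))⁻¹ =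
      kr a b n * (kE (b - a + j + 1) n * kE a n / kE b n / (n : ℂ) ^ j) := by
  have h1 : (n.factorial : ℂ) ≠ 0 := by exact_mod_cast n.factorial_ne_zero
  have hn' : (n : ℂ) ≠ 0 := by exact_mod_cast hn.ne'
  have h3 := gamma_shift_ne b hb n
  have h4 := gamma_shift_ne a ha n
  unfold kr kE
  rw [show b - a + (j : ℂ) + 1 - 1 = b - a + j by ring, cpow_add _ _ hn', cpow_sub _ _ hn',
    cpow_sub _ _ hn', cpow_sub _ _ hn', cpow_natCast, cpow_one]
  have h5 : (n : ℂ) ^ a ≠ 0 := by simp [cpow_eq_zero_iff, hn']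
  have h6 : (n : ℂ) ^ b ≠ 0 := by simp [cpow_eq_zero_iff, hn']
  field_simp

lemma kr_scaled (a b : ℂ) (ha : ∀ n : ℕ, a ≠ -(n : ℂ)) (hb : ∀ n : ℕ, b ≠ -(n : ℂ)) (n : ℕ) (hn : 0 < n) :
    (n.factorial : ℂ) * (n : ℂ) ^ (b - a) * kr a b n = kE b n / kE a n := by
  have h1 : (n.factorial : ℂ) ≠ 0 := by exact_mod_cast n.factorial_ne_zero
  have hn' : (n : ℂ) ≠ 0 := by exact_mod_cast hn.ne'
  have h3 := gamma_shift_ne b hb n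
  have h4 := gamma_shift_ne a ha n
  unfold kr kE
  rw [cpow_sub _ _ hn', cpow_sub _ _ hn', cpow_sub _ _ hn', cpow_one]
  have h5 : (n : ℂ) ^ a ≠ 0 := by simp [cpow_eq_zero_iff, hn']
  field_simp

lemma kQ_tendsto (a b z : ℂ) : Tendsto (fun n => kE z n * kE a n / kE b n) atTop (nhds 1) := by
  have := ((gamma_ratio_tendsto z).mul (gamma_ratio_tendsto a)).div (gamma_ratio_tendsto b) one_ne_zero
  rw [mul_one, div_one] at this
  exact this

/-- Summation of increments. -/
lemma tail_bound (D : ℕ → ℂ) (C : ℝ) (n₀ M : ℕ) (hn₀ : 0 < n₀)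
    (hD : Tendsto D atTop (nhds 1))
    (h : ∀ n, n₀ ≤ n → ‖D (n + 1) - D n‖ ≤ C / (n : ℝ) ^ (M + 2)) :
    ∀ n, n₀ ≤ n → ‖1 - D n‖ ≤ 2 * C / (n : ℝ) ^ (M + 1) := by
  intro n hn
  have hnp : (0 : ℝ) < n := by exact_mod_cast (hn₀.trans_le hn)
  have hC : 0 ≤ C := by
    have h1 := (norm_nonneg _).trans (h n hn)
    by_contra hc
    push Not at hc
    have : C / (n : ℝ) ^ (M + 2) < 0 := div_neg_of_neg_of_pos hc (by positivity)
    linarith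
  have key : ∀ k : ℕ, ‖D (n + k) - D n‖ ≤ 2 * C / (n : ℝ) ^ M * (1 / n - 1 / ((n : ℝ) + k)) := by
    intro k
    induction k with
    | zero => simp
    | succ k ih =>
      have h1 := h (n + k) (by omega)
      have h2 : ‖D (n + (k + 1)) - D n‖ ≤ ‖D (n + k + 1) - D (n + k)‖ + ‖D (n + k) - D n‖ := by
        refine le_trans (le_of_eq ?_) (norm_add_le _ _)
        congr 1
        rw [← add_assoc]; ring
      push_cast at h1 ⊢
      set y : ℝ := (n : ℝ) + k with hy
      have hyn : (n : ℝ) ≤ y := by rw [hy]; have : (0 : ℝ) ≤ k := by positivity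
                                   linarith
      have hn1 : (1 : ℝ) ≤ n := by exact_mod_cast (hn₀.trans_le hn)
      have hy1 : 1 ≤ y := by linarith
      have h3 : C / y ^ (M + 2) ≤ 2 * C / (n : ℝ) ^ M * (1 / y - 1 / (y + 1)) := by
        have e1 : 1 / y - 1 / (y + 1) = 1 / (y * (y + 1)) := by field_simp; ring
        rw [e1]
        calc C / y ^ (M + 2) = C / y ^ M * (1 / y ^ 2) := by rw [pow_add]; field_simp
          _ ≤ C / (n : ℝ) ^ M * (2 * (1 / (y * (y + 1)))) := by
            gcongr
            rw [mul_one_div, div_le_div_iff₀ (by positivity) (by positivity)]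
            nlinarith
          _ = _ := by ring
      rw [← add_assoc, ← add_assoc, ← hy]
      have h4 : 2 * C / (n : ℝ) ^ M * (1 / n - 1 / (y + 1)) = 2 * C / (n : ℝ) ^ M * (1 / y - 1 / (y + 1)) + 2 * C / (n : ℝ) ^ M * (1 / n - 1 / y) := by ring
      rw [h4]
      rw [← add_assoc] at h2
      linarith
  have hlim : Tendsto (fun k : ℕ => ‖D (n + k) - D n‖) atTop (nhds ‖1 - D n‖) := by
    have h1 : Tendsto (fun k : ℕ => D (n + k)) atTop (nhds 1) := by
      have := hD.comp (tendsto_add_atTop_nat n)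
      refine this.congr fun k => ?_
      simp [add_comm]
    exact (h1.sub_const _).norm
  refine le_of_tendsto hlim (Eventually.of_forall fun k => (key k).trans ?_)
  have : (0 : ℝ) ≤ 1 / ((n : ℝ) + k) := by positivity
  calc _ ≤ 2 * C / (n : ℝ) ^ M * (1 / n) := by gcongr; linarith
    _ = _ := by rw [pow_succ]; field_simp

lemma kR_bound (a b : ℂ) (ha : ∀ n : ℕ, a ≠ -(n : ℂ)) (hb : ∀ n : ℕ, b ≠ -(n : ℂ)) (M : ℕ) :
    (fun n : ℕ => (n.factorial : ℂ) * (n : ℂ) ^ (b - a + (M + 1 : ℕ)) * (kr a b n - kp a b (M + 1) n))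
      =O[atTop] (fun _ => (1 : ℝ)) := by
  set D : ℕ → ℂ := fun n => kp a b (M + 1) n / kr a b n with hDdef
  have hD : Tendsto D atTop (nhds 1) := by
    have h1 : Tendsto (fun n : ℕ => ∑ j ∈ Finset.range (M + 1),
        kc a b j * (kE (b - a + j + 1) n * kE a n / kE b n * ((n : ℂ) ^ j)⁻¹)) atTop
        (nhds (∑ j ∈ Finset.range (M + 1), if j = 0 then 1 else 0)) := by
      refine tendsto_finsetSum _ fun j _ => ?_
      have h2 := kQ_tendsto a b (b - a + j + 1)
      rcases Nat.eq_zero_or_pos j with rfl | hj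
      · simpa [kc] using h2
      · have h3 : Tendsto (fun n : ℕ => ((n : ℂ) ^ j)⁻¹) atTop (nhds 0) := by
          have h4 : Tendsto (fun n : ℕ => ((n : ℂ))⁻¹) atTop (nhds 0) := tendsto_inv_atTop_nhds_zero_nat
          have := h4.pow j
          rw [zero_pow hj.ne'] at this
          simpa using this
        have := (h2.mul h3).const_mul (kc a b j)
        simpa [hj.ne'] using this
    have h5 : (∑ j ∈ Finset.range (M + 1), if j = 0 then (1 : ℂ) else 0) = 1 := by simp
    rw [h5] at h1
    refine h1.congr' ?_
    filter_upwards [eventually_gt_atTop 0] with n hn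
    simp only [hDdef, kp]
    rw [Finset.sum_div]
    refine Finset.sum_congr rfl fun j _ => ?_
    rw [kw_eq a b ha hb j n hn]
    have := kr_ne a b ha hb n
    field_simp
  have hinc : ∀ n : ℕ, 0 < n → D (n + 1) - D n = ((M + 1 : ℕ) : ℂ) * kc a b (M + 1) *
      (kE (b - a + (M + 1 : ℕ) + 1) n * kE a n / kE b n) / ((n : ℂ) ^ (M + 1) * (a + n)) := by
    intro n hn
    have h1 := kp_rec a b (M + 1) n
    have h2 := kr_rec a b ha hb n
    rw [kw_eq a b ha hb (M + 1) n hn] at h1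
    have h3 := kr_ne a b ha hb n
    have h4 := kr_ne a b ha hb (n + 1)
    have h5 := add_nat_ne a ha n
    have h6 := add_nat_ne b hb n
    have hn' : (n : ℂ) ≠ 0 := by exact_mod_cast hn.ne'
    have h7 : (n : ℂ) + 1 ≠ 0 := by exact_mod_cast n.succ_ne_zero
    set Q := kE (b - a + (M + 1 : ℕ) + 1) n * kE a n / kE b n
    have e1 : D (n + 1) = (b + n) * (n + 1) * kp a b (M + 1) (n + 1) / ((a + n) * kr a b n) := by
      rw [← h2]; simp only [hDdef]; field_simp
    have e2 : D n = (a + n) * kp a b (M + 1) n / ((a + n) * kr a b n) := by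
      simp only [hDdef]; field_simp
    rw [e1, e2, ← sub_div, h1]
    field_simp
  have hO : ∃ C : ℝ, ∃ n₀ : ℕ, 0 < n₀ ∧ ∀ n, n₀ ≤ n → ‖D (n + 1) - D n‖ ≤ C / (n : ℝ) ^ (M + 2) := by
    have h1 : Tendsto (fun n : ℕ => (n : ℂ) / (a + n)) atTop (nhds 1) := by
      have h2 : Tendsto (fun n : ℕ => (a / (n : ℂ) + 1)⁻¹) atTop (nhds 1) := by
        have := ((tendsto_const_div_atTop_nhds_zero_nat a).add_const 1).inv₀ (by simp)
        simpa using this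
      refine h2.congr' ?_
      filter_upwards [eventually_gt_atTop 0] with n hn
      have hn' : (n : ℂ) ≠ 0 := by exact_mod_cast hn.ne'
      have := add_nat_ne a ha n
      rw [show a / (n : ℂ) + 1 = (a + n) / n by field_simp, inv_div]
    have h3 := (((kQ_tendsto a b (b - a + (M + 1 : ℕ) + 1)).mul h1).const_mul
      (((M + 1 : ℕ) : ℂ) * kc a b (M + 1))).isBigO_one ℝ
    obtain ⟨C, hC⟩ := h3.bound
    obtain ⟨n₀, hn₀⟩ := eventually_atTop.mp hC
    refine ⟨C, n₀ + 1, by omega, fun n hn => ?_⟩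
    have hnpos : 0 < n := by omega
    have h4 := hn₀ n (by omega)
    have hn' : (n : ℂ) ≠ 0 := by exact_mod_cast hnpos.ne'
    have hnr : (0 : ℝ) < n := by exact_mod_cast hnpos
    have h5 := add_nat_ne a ha n
    rw [norm_one, mul_one] at h4
    rw [hinc n hnpos, le_div_iff₀ (by positivity)]
    refine le_trans (le_of_eq ?_) h4
    have e : (n : ℝ) ^ (M + 2) = ‖(n : ℂ) ^ (M + 2)‖ := by simp
    rw [e, ← norm_mul]
    congr 1
    rw [pow_succ _ (M + 1)]
    field_simp
  obtain ⟨C, n₀, hn₀, hC⟩ := hO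
  have ht := tail_bound D C n₀ M hn₀ hD hC
  have hE : Tendsto (fun n => kE b n / kE a n) atTop (nhds 1) := by
    have := (gamma_ratio_tendsto b).div (gamma_ratio_tendsto a) one_ne_zero
    rw [div_one] at this
    exact this
  have hT : (fun n : ℕ => (n : ℂ) ^ (M + 1) * (1 - D n)) =O[atTop] (fun _ => (1 : ℝ)) := by
    refine IsBigO.of_bound (2 * C) ?_
    filter_upwards [eventually_ge_atTop n₀] with n hn
    have hnr : (0 : ℝ) < n := by exact_mod_cast (hn₀.trans_le hn)
    have := ht n hn
    rw [le_div_iff₀ (by positivity)] at this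
    rw [norm_mul, norm_pow, Complex.norm_natCast, norm_one, mul_one, mul_comm]
    exact this
  have hfin := (hE.isBigO_one ℝ).mul hT
  refine hfin.congr' ?_ (by simp)
  filter_upwards [eventually_gt_atTop 0] with n hn
  have hn' : (n : ℂ) ≠ 0 := by exact_mod_cast hn.ne'
  have h3 := kr_ne a b ha hb n
  rw [← kr_scaled a b ha hb n hn, cpow_add _ _ hn', cpow_natCast]
  simp only [hDdef]
  field_simp

theorem kummer_exponential_expansion (a b : ℂ)
    (ha : ∀ n : ℕ, a ≠ -(n : ℂ)) (hb : ∀ n : ℕ, b ≠ -(n : ℂ)) (N : ℕ) (hN : 0 < N) :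
    (fun x : ℝ =>
        (Complex.Gamma a / Complex.Gamma b) * kummer a b x -
          (x : ℂ) ^ (a - b) * Complex.exp x *
            ∑ j ∈ Finset.range N,
              (ascPochhammer ℂ j).eval (b - a) * (ascPochhammer ℂ j).eval (1 - a) /
                (j.factorial * (x : ℂ) ^ j))
      =O[atTop] fun x : ℝ => x ^ ((a - b).re - N) * Real.exp x := by
  obtain ⟨M, rfl⟩ : ∃ M, N = M + 1 := ⟨N - 1, by omega⟩
  obtain ⟨C, hC0, hC⟩ := bound_of_scaled _ _ (kR_bound a b ha hb M)
  obtain ⟨hRs, hRO⟩ := series_bound _ C _ hC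
  have hexp : -(b - a + (M + 1 : ℕ)).re = (a - b).re - (M + 1 : ℕ) := by
    simp; ring
  rw [hexp] at hRO
  have hml : (fun x : ℝ => ∑ j ∈ Finset.range (M + 1), kc a b j *
      (mlSeries (b - a + j) x - (x : ℂ) ^ (-(b - a + j)) * Complex.exp x)) =O[atTop]
      fun x : ℝ => x ^ ((a - b).re - (M + 1 : ℕ)) * Real.exp x :=
    IsBigO.fun_sum fun j _ => (mlSeries_asymp _ _).const_mul_left _
  refine (hml.add hRO).congr' ?_ EventuallyEq.rfl
  filter_upwards [eventually_ge_atTop 1] with x hx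
  have hx0 : (x : ℂ) ≠ 0 := by
    have : x ≠ 0 := by linarith
    exact_mod_cast this
  have e1 : Gamma a / Gamma b * kummer a b x = ∑' n : ℕ, kr a b n * (x : ℂ) ^ n := by
    rw [kummer, ← tsum_mul_left]
    congr 1
    ext n
    have h1 := gamma_shift_ne a ha 0
    have h2 := gamma_shift_ne b hb 0
    have h3 := gamma_shift_ne b hb n
    simp only [Nat.cast_zero, add_zero] at h1 h2
    rw [← Gamma_add_nat_div_Gamma_eq a ha, ← Gamma_add_nat_div_Gamma_eq b hb, kr]
    field_simp
  have e2 : ∑' n : ℕ, kr a b n * (x : ℂ) ^ n =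
      ∑' n : ℕ, kp a b (M + 1) n * (x : ℂ) ^ n +
      ∑' n : ℕ, (kr a b n - kp a b (M + 1) n) * (x : ℂ) ^ n := by
    rw [← Summable.tsum_add]
    · congr 1; ext n; ring
    · have : Summable (fun n : ℕ => ∑ j ∈ Finset.range (M + 1), kc a b j * ((Gamma (b - a + j + 1 + n))⁻¹ * (x : ℂ) ^ n)) :=
        summable_sum fun j _ => (gamma_inv_summable _ x hx).mul_left _
      refine this.congr fun n => ?_
      rw [kp, Finset.sum_mul]
      exact Finset.sum_congr rfl fun j _ => by ring
    · exact hRs x hx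
  have e3 : ∑' n : ℕ, kp a b (M + 1) n * (x : ℂ) ^ n =
      ∑ j ∈ Finset.range (M + 1), kc a b j * mlSeries (b - a + j) x := by
    simp only [mlSeries, ← tsum_mul_left]
    rw [← Summable.tsum_finsetSum (fun j _ => (gamma_inv_summable _ x hx).mul_left _)]
    congr 1; ext n
    rw [kp, Finset.sum_mul]
    exact Finset.sum_congr rfl fun j _ => by ring
  have e4 : (x : ℂ) ^ (a - b) * Complex.exp x * ∑ j ∈ Finset.range (M + 1),
      (ascPochhammer ℂ j).eval (b - a) * (ascPochhammer ℂ j).eval (1 - a) /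
                (j.factorial * (x : ℂ) ^ j) =
      ∑ j ∈ Finset.range (M + 1), kc a b j * ((x : ℂ) ^ (-(b - a + j)) * Complex.exp x) := by
    rw [Finset.mul_sum]
    refine Finset.sum_congr rfl fun j _ => ?_
    rw [show -(b - a + (j : ℂ)) = a - b - j by ring, cpow_sub (a - b) _ hx0, cpow_natCast, kc]
    have h1 : (j.factorial : ℂ) ≠ 0 := by exact_mod_cast j.factorial_ne_zero
    field_simp
  rw [e1, e2, e3, e4]
  simp only [mul_sub, Finset.sum_sub_distrib]
  ring
end

section
/- Let a, b be real numbers with a not an integer, b not a nonpositive integer, and b − a not a nonpositive integer. For x > 0 set the optimal truncation index m₀(x) := ⌊x + 2a − b⌋. Then as x → +∞, the optimally truncated remainder F(x) := (1/Γ(b)) · ₁F₁(a; b; x) − (x^{a−b} e^x / Γ(a)) ∑_{j=0}^{m₀(x)−1} (b−a)_j (1−a)_j / (j! x^j) satisfies F(x) = (x^{−a}/Γ(b−a)) · cos(πa) + O(x^{−a−1/2}). In particular, the Stokes multiplier of the subdominant algebraic expansion on the Stokes line arg z = 0 equals cos(πa) to leading order. -/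
namespace KS
open Filter Topology

/-- real Pochhammer symbol -/
noncomputable def ph (a : ℝ) (n : ℕ) : ℝ := (ascPochhammer ℝ n).eval a

lemma ph_zero (a : ℝ) : ph a 0 = 1 := by simp [ph]

lemma ph_succ (a : ℝ) (n : ℕ) : ph a (n + 1) = ph a n * (a + n) := by
  simp [ph, ascPochhammer_succ_eval]

lemma ph_succ' (a : ℝ) (n : ℕ) : ph a (n + 1) = a * ph (a + 1) n := by
  simp [ph, ascPochhammer_succ_left, Polynomial.eval_comp]

lemma inv_Gamma (s : ℝ) : (Real.Gamma s)⁻¹ = s * (Real.Gamma (s + 1))⁻¹ := by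
  rcases eq_or_ne s 0 with rfl | h
  · simp
  · rw [Real.Gamma_add_one h, mul_inv, ← mul_assoc, mul_inv_cancel₀ h, one_mul]

/-- terms of the regularized Kummer series -/
noncomputable def mt (a b x : ℝ) (n : ℕ) : ℝ :=
  ph a n * x ^ n / n.factorial * (Real.Gamma (b + n))⁻¹

lemma mt_succ (a b x : ℝ) (n : ℕ) (h : b + n ≠ 0) :
    mt a b x (n + 1) = mt a b x n * ((a + n) * x / ((n + 1) * (b + n))) := by
  have h1 := inv_Gamma (b + n)
  have h2 : (Real.Gamma (b + (n + 1 : ℕ)))⁻¹ = (Real.Gamma (b + n))⁻¹ / (b + n) := by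
    rw [h1]; push_cast; rw [← add_assoc]; field_simp
  have hf : (n.factorial : ℝ) ≠ 0 := by positivity
  have hn : (n : ℝ) + 1 ≠ 0 := by positivity
  rw [mt, mt, h2, ph_succ, Nat.factorial_succ, pow_succ]
  push_cast
  field_simp

lemma summable_mt (a b x : ℝ) : Summable (mt a b x) := by
  have ht : Tendsto (fun n : ℕ => (a + n) * x / ((n + 1) * (b + n))) atTop (𝓝 0) := by
    have h1 : Tendsto (fun n : ℕ => (a + n) / (b + n)) atTop (𝓝 (1 / 1)) := by
      have := tendsto_natCast_atTop_atTop (R := ℝ)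
      have e1 : Tendsto (fun n : ℕ => (a / n + 1) / (b / n + 1)) atTop (𝓝 ((0 + 1) / (0 + 1))) := by
        refine Tendsto.div (Tendsto.add_const _ ?_) (Tendsto.add_const _ ?_) (by norm_num)
        · exact tendsto_const_div_atTop_nhds_zero_nat a
        · exact tendsto_const_div_atTop_nhds_zero_nat b
      simp only [zero_add] at e1
      refine e1.congr' ?_
      filter_upwards [eventually_gt_atTop 0] with n hn
      have : (n : ℝ) ≠ 0 := by positivity
      have h3 : a / n + 1 = (a + n) / n := by field_simp
      have h4 : b / n + 1 = (b + n) / n := by field_simp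
      rw [h3, h4, div_div_div_cancel_right₀ this]
    have h2 : Tendsto (fun n : ℕ => x * (1 / ((n : ℝ) + 1))) atTop (𝓝 (x * 0)) :=
      tendsto_one_div_add_atTop_nhds_zero_nat.const_mul x
    have := h1.mul h2
    simp only [mul_zero] at this
    refine this.congr fun n => ?_
    rw [mul_one_div, div_mul_div_comm]
    congr 1; ring
  have hb : ∀ᶠ n : ℕ in atTop, b + n ≠ 0 := by
    have := (tendsto_natCast_atTop_atTop (R := ℝ)).eventually (eventually_gt_atTop (-b))
    filter_upwards [this] with n hn
    intro h; linarith
  refine summable_of_ratio_norm_eventually_le (r := 1/2) (by norm_num) ?_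
  have := ht.norm.eventually (gt_mem_nhds (b := ‖(0:ℝ)‖) (a := (1/2 : ℝ)) (by norm_num))
  filter_upwards [this, hb] with n hn hbn
  rw [mt_succ _ _ _ _ hbn, norm_mul, mul_comm]
  gcongr

noncomputable def Mt (a b x : ℝ) : ℝ := ∑' n, mt a b x n

lemma ph_sub (a : ℝ) (n : ℕ) : ph a (n + 1) - ph (a - 1) (n + 1) = (n + 1) * ph a n := by
  rw [ph_succ, ph_succ']; simp; ring

lemma Mt_R1 (a b x : ℝ) : Mt (a - 1) b x = Mt a b x - x * Mt a (b + 1) x := by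
  have h1 : Mt a b x - Mt (a - 1) b x = ∑' n, (mt a b x n - mt (a - 1) b x n) :=
    ((summable_mt a b x).tsum_sub (summable_mt (a - 1) b x)).symm
  have hs : Summable (fun n => mt a b x n - mt (a - 1) b x n) :=
    (summable_mt a b x).sub (summable_mt (a - 1) b x)
  rw [hs.tsum_eq_zero_add] at h1
  have h0 : mt a b x 0 - mt (a - 1) b x 0 = 0 := by simp [mt, ph_zero]
  have h2 : ∀ n : ℕ, mt a b x (n + 1) - mt (a - 1) b x (n + 1) = x * mt a (b + 1) x n := by
    intro n
    have hf : (n.factorial : ℝ) ≠ 0 := by positivity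
    have hn : (n : ℝ) + 1 ≠ 0 := by positivity
    have e : b + ((n + 1 : ℕ) : ℝ) = b + 1 + n := by push_cast; ring
    have := ph_sub a n
    rw [mt, mt, mt, e, Nat.factorial_succ, pow_succ]
    push_cast
    have e2 : ph a (n+1) = ph (a-1) (n+1) + (n+1) * ph a n := by linarith
    rw [e2]; field_simp; ring
  rw [h0, zero_add] at h1
  simp_rw [h2] at h1
  rw [tsum_mul_left] at h1
  change Mt a b x - Mt (a - 1) b x = x * Mt a (b + 1) x at h1
  linarith

lemma Mt_R2 (a b x : ℝ) : Mt a b x = a * Mt (a + 1) (b + 1) x + (b - a) * Mt a (b + 1) x := by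
  rw [Mt, Mt, Mt, ← tsum_mul_left, ← tsum_mul_left,
    ← ((summable_mt _ _ _).mul_left _).tsum_add ((summable_mt _ _ _).mul_left _)]
  refine tsum_congr fun n => ?_
  have h := inv_Gamma (b + n)
  have e : b + 1 + (n : ℝ) = b + n + 1 := by ring
  have h3 : ph a n * (a + n) = a * ph (a + 1) n := by rw [← ph_succ, ph_succ']
  rw [mt, mt, mt, h, e]
  have : a * (ph (a + 1) n * x ^ n / ↑n.factorial * (Real.Gamma (b + ↑n + 1))⁻¹)
    = (a * ph (a + 1) n) * x ^ n / ↑n.factorial * (Real.Gamma (b + ↑n + 1))⁻¹ := by ring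
  rw [this, ← h3]; ring

/-- coefficient of the truncated exponential series -/
noncomputable def co (a c : ℝ) (j : ℕ) : ℝ := ph c j * ph (1 - a) j / j.factorial

noncomputable def St (a c x : ℝ) (m : ℕ) : ℝ := ∑ j ∈ Finset.range m, co a c j / x ^ j

noncomputable def Tt (a c x : ℝ) (m : ℕ) : ℝ :=
  x ^ (-c) * Real.exp x * (Real.Gamma a)⁻¹ * St a c x m

noncomputable def Ft (a c : ℝ) (m : ℕ) (x : ℝ) : ℝ := Mt a (a + c) x - Tt a c x m

lemma St_R1 (a c x : ℝ) (hx : x ≠ 0) (m : ℕ) :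
    (a - 1) * St (a - 1) (c + 1) x m = x * (St a c x (m + 1) - St a (c + 1) x (m + 1)) := by
  rw [St, St, St, ← Finset.sum_sub_distrib, Finset.sum_range_succ', Finset.mul_sum, mul_add,
    Finset.mul_sum]
  have h0 : co a c 0 / x ^ 0 - co a (c + 1) 0 / x ^ 0 = 0 := by simp [co, ph_zero]
  rw [h0, mul_zero, add_zero]
  refine Finset.sum_congr rfl fun j _ => ?_
  have hf : (j.factorial : ℝ) ≠ 0 := by positivity
  have hn : (j : ℝ) + 1 ≠ 0 := by positivity
  have e1 : ph (c + 1) (j + 1) - ph c (j+1) = (j + 1) * ph (c+1) j := by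
    have := ph_sub (c + 1) j
    simpa using this
  have e2 : ph c (j+1) = ph (c+1) (j+1) - (j + 1) * ph (c+1) j := by linarith
  have e3 : ph (1 - a) (j + 1) = (1 - a) * ph (1 - (a - 1)) j := by
    rw [ph_succ']; congr 2; ring
  rw [co, co, co, e2, e3, Nat.factorial_succ]
  push_cast
  field_simp
  ring

lemma St_R2 (a c x : ℝ) (hx : x ≠ 0) (m : ℕ) :
    x * St a c x (m + 1) = x * St (a + 1) c x (m + 1) + c * St a (c + 1) x m := by
  have : x * (St a c x (m + 1) - St (a + 1) c x (m + 1)) = c * St a (c + 1) x m := by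
    rw [St, St, St, ← Finset.sum_sub_distrib, Finset.sum_range_succ', Finset.mul_sum, mul_add,
      Finset.mul_sum]
    have h0 : co a c 0 / x ^ 0 - co (a + 1) c 0 / x ^ 0 = 0 := by simp [co, ph_zero]
    rw [h0, mul_zero, add_zero]
    refine Finset.sum_congr rfl fun j _ => ?_
    have hf : (j.factorial : ℝ) ≠ 0 := by positivity
    have hn : (j : ℝ) + 1 ≠ 0 := by positivity
    have e1 : ph (1 - a) (j + 1) = ph (1 - (a + 1)) (j+1) + (j + 1) * ph (1 - a) j := by
      have := ph_sub (1 - a) j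
      rw [show 1 - a - 1 = 1 - (a + 1) by ring] at this
      linarith
    rw [co, co, co, e1, ph_succ' c, Nat.factorial_succ]
    push_cast
    field_simp
    ring
  linarith

lemma Ft_R1 (a c x : ℝ) (hx : 0 < x) (m : ℕ) :
    Ft (a - 1) (c + 1) m x = Ft a c (m + 1) x - x * Ft a (c + 1) (m + 1) x := by
  have h := Mt_R1 a (a + c) x
  have h2 := St_R1 a c x hx.ne' m
  have h3 := inv_Gamma (a - 1)
  have e : x ^ (-c) = x ^ (-(c + 1)) * x := by
    rw [← Real.rpow_add_one hx.ne']; congr 1; ring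
  rw [Ft, Ft, Ft, Tt, Tt, Tt, show a - 1 + (c + 1) = a + c by ring, h,
    show a + (c + 1) = a + c + 1 by ring, h3, e]
  rw [sub_add_cancel]
  linear_combination (-x ^ (-(c + 1)) * Real.exp x * (Real.Gamma a)⁻¹) * h2

lemma Ft_R2 (a c x : ℝ) (hx : 0 < x) (m : ℕ) :
    Ft a c (m + 1) x = a * Ft (a + 1) c (m + 1) x + c * Ft a (c + 1) m x := by
  have h := Mt_R2 a (a + c) x
  have h2 := St_R2 a c x hx.ne' m
  have h3 := inv_Gamma a
  have e : x ^ (-c) = x ^ (-(c + 1)) * x := by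
    rw [← Real.rpow_add_one hx.ne']; congr 1; ring
  rw [Ft, Ft, Ft, Tt, Tt, Tt, show a + 1 + c = a + c + 1 by ring, h,
    show a + (c + 1) = a + c + 1 by ring, e]
  have h4 : a * (x ^ (-(c + 1)) * x * Real.exp x * (Real.Gamma (a + 1))⁻¹ * St (a + 1) c x (m + 1))
     = (x ^ (-(c + 1)) * x * Real.exp x * (Real.Gamma a)⁻¹ * St (a + 1) c x (m + 1)) := by
    rw [h3]; ring
  linear_combination (-x ^ (-(c + 1)) * Real.exp x * (Real.Gamma a)⁻¹) * h2 + h4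

/-- uniform bound for truncation indices at bounded distance from `x` -/
def UB (f : ℕ → ℝ → ℝ) (e : ℝ) : Prop :=
  ∀ C : ℝ, ∃ K X : ℝ, ∀ x ≥ X, ∀ m : ℕ, |(m : ℝ) - x| ≤ C → |f m x| ≤ K * x ^ e

lemma UB.congr {f g : ℕ → ℝ → ℝ} {e : ℝ} (hf : UB f e) (h : ∀ m x, 0 < x → f m x = g m x) :
    UB g e := by
  intro C
  obtain ⟨K, X, H⟩ := hf C
  refine ⟨K, max X 1, fun x hx m hm => ?_⟩
  have h1 : 1 ≤ x := le_trans (le_max_right _ _) hx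
  rw [← h m x (by linarith)]
  exact H x (le_trans (le_max_left _ _) hx) m hm

lemma UB.add {f g : ℕ → ℝ → ℝ} {e : ℝ} (hf : UB f e) (hg : UB g e) :
    UB (fun m x => f m x + g m x) e := by
  intro C
  obtain ⟨K, X, H⟩ := hf C
  obtain ⟨K', X', H'⟩ := hg C
  refine ⟨K + K', max X X', fun x hx m hm => ?_⟩
  have h1 := H x (le_trans (le_max_left _ _) hx) m hm
  have h2 := H' x (le_trans (le_max_right _ _) hx) m hm
  have := abs_add_le (f m x) (g m x)
  linarith

lemma UB.const_mul {f : ℕ → ℝ → ℝ} {e : ℝ} (hf : UB f e) (k : ℝ) :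
    UB (fun m x => k * f m x) e := by
  intro C
  obtain ⟨K, X, H⟩ := hf C
  refine ⟨|k| * K, X, fun x hx m hm => ?_⟩
  rw [abs_mul, mul_assoc]
  exact mul_le_mul_of_nonneg_left (H x hx m hm) (abs_nonneg _)

lemma UB.mul_x {f : ℕ → ℝ → ℝ} {e : ℝ} (hf : UB f e) : UB (fun m x => x * f m x) (e + 1) := by
  intro C
  obtain ⟨K, X, H⟩ := hf C
  refine ⟨K, max X 1, fun x hx m hm => ?_⟩
  have h1 : 1 ≤ x := le_trans (le_max_right _ _) hx
  have h2 := H x (le_trans (le_max_left _ _) hx) m hm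
  rw [abs_mul, abs_of_pos (by linarith : 0 < x), Real.rpow_add_one (by linarith)]
  nlinarith

lemma UB.mono {f : ℕ → ℝ → ℝ} {e e' : ℝ} (hf : UB f e) (h : e ≤ e') : UB f e' := by
  intro C
  obtain ⟨K, X, H⟩ := hf C
  refine ⟨|K|, max X 1, fun x hx m hm => ?_⟩
  have h1 : 1 ≤ x := le_trans (le_max_right _ _) hx
  have h2 := H x (le_trans (le_max_left _ _) hx) m hm
  have h3 : x ^ e ≤ x ^ e' := Real.rpow_le_rpow_of_exponent_le h1 h
  have h4 : 0 ≤ x ^ e := by positivity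
  calc _ ≤ _ := h2
    _ ≤ |K| * x ^ e := by gcongr; exact le_abs_self _
    _ ≤ _ := by gcongr

lemma UB.shift {f : ℕ → ℝ → ℝ} {e : ℝ} (hf : UB f e) : UB (fun m x => f (m + 1) x) e := by
  intro C
  obtain ⟨K, X, H⟩ := hf (C + 1)
  refine ⟨K, X, fun x hx m hm => H x hx _ ?_⟩
  push_cast
  rw [abs_le] at *
  constructor <;> linarith

lemma UB.unshift {f : ℕ → ℝ → ℝ} {e : ℝ} (hf : UB (fun m x => f (m + 1) x) e) : UB f e := by
  intro C
  obtain ⟨K, X, H⟩ := hf (C + 1)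
  refine ⟨K, max X (C + 1), fun x hx m hm => ?_⟩
  have h1 : C + 1 ≤ x := le_trans (le_max_right _ _) hx
  rw [abs_le] at hm
  rcases m with _ | m
  · simp at hm; linarith
  · refine H x (le_trans (le_max_left _ _) hx) m ?_
    push_cast at hm
    rw [abs_le]
    constructor <;> linarith

lemma UB_pow (k e : ℝ) : UB (fun _ x => x ^ e * k) e := by
  intro C
  refine ⟨|k|, 1, fun x hx m _ => ?_⟩
  rw [abs_mul, abs_of_nonneg (by positivity), mul_comm]

/-- leading term -/
noncomputable def lead (a c x : ℝ) : ℝ := x ^ (-a) * ((Real.Gamma c)⁻¹ * Real.cos (Real.pi * a))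

def Full (a c : ℝ) : Prop := UB (fun m x => Ft a c m x - lead a c x) (-a - 1 / 2)

lemma Full.crude {a c : ℝ} (h : Full a c) : UB (Ft a c) (-a) := by
  have := (h.mono (e' := -a) (by linarith)).add (UB_pow ((Real.Gamma c)⁻¹ * Real.cos (Real.pi * a)) (-a))
  refine this.congr fun m x _ => ?_
  simp [lead]

lemma step_c {A c₀ : ℝ} (H : ∀ a c, A < a → c₀ < c → (∀ n : ℤ, a ≠ n) → Full a c) :
    ∀ a c, A < a → c₀ - 1 < c → (∀ n : ℤ, a ≠ n) → Full a c := by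
  intro a c ha hc hn
  have hn1 : ∀ n : ℤ, a + 1 ≠ n := fun n h => hn (n - 1) (by push_cast; linarith)
  have hn2 : ∀ n : ℤ, a + 1 + 1 ≠ n := fun n h => hn (n - 2) (by push_cast; linarith)
  have F0 := H a (c + 1) ha (by linarith) hn
  have F1 := H (a + 1) (c + 1) (by linarith) (by linarith) hn1
  have F2 := H (a + 1 + 1) (c + 1) (by linarith) (by linarith) hn2
  -- crude bound at a+2
  have C2 : UB (Ft (a + 1 + 1) c) (-(a + 1)) := by
    have h1 := F1.crude
    have h2 := F2.crude.shift.mul_x.mono (e' := -(a + 1)) (by linarith)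
    refine ((h1.add h2).congr (g := fun m x => Ft (a + 1 + 1) c (m + 1) x) ?_).unshift
    intro m x hx
    have := Ft_R1 (a + 1 + 1) c x hx m
    rw [show a + 1 + 1 - 1 = a + 1 by ring] at this
    linarith
  have C1 : UB (Ft (a + 1) c) (-(a + 1)) := by
    refine (((C2.shift.const_mul (a + 1)).add (F1.crude.const_mul c)).congr
      (g := fun m x => Ft (a + 1) c (m + 1) x) ?_).unshift
    intro m x hx
    exact (Ft_R2 (a + 1) c x hx m).symm
  refine UB.unshift ?_
  refine (((C1.shift.const_mul a).mono (e' := -a - 1 / 2) (by linarith)).add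
    (UB.const_mul F0 c)).congr ?_
  intro m x hx
  rw [Ft_R2 a c x hx m, lead, lead, inv_Gamma c]
  ring

lemma step_a {A : ℝ} (H : ∀ a c, A < a → (∀ n : ℤ, a ≠ n) → Full a c) :
    ∀ a c, A - 1 < a → (∀ n : ℤ, a ≠ n) → Full a c := by
  intro a c ha hn
  have hn1 : ∀ n : ℤ, a + 1 ≠ n := fun n h => hn (n - 1) (by push_cast; linarith)
  have F0 := H (a + 1) c (by linarith) hn1
  have F1 := H (a + 1) (c - 1) (by linarith) hn1
  have h2 := (UB.mul_x F0.shift).const_mul (-1)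
  refine ((F1.crude.shift.mono (e' := -a - 1 / 2) (by linarith)).add
    (h2.mono (e' := -a - 1 / 2) (by linarith))).congr ?_
  intro m x hx
  have := Ft_R1 (a + 1) (c - 1) x hx m
  rw [sub_add_cancel, add_sub_cancel_right] at this
  have e : x ^ (-a) = x ^ (-(a + 1)) * x := by
    rw [← Real.rpow_add_one hx.ne']; congr 1; ring
  have e2 : Real.cos (Real.pi * (a + 1)) = - Real.cos (Real.pi * a) := by
    rw [mul_add, mul_one, Real.cos_add_pi]
  simp only [lead]
  rw [this, e, e2]; ring

lemma reduction (H : ∀ a c : ℝ, 2 < a → 2 < c → (∀ n : ℤ, a ≠ n) → Full a c) :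
    ∀ a c : ℝ, (∀ n : ℤ, a ≠ n) → Full a c := by
  have h1 : ∀ k : ℕ, ∀ a c : ℝ, 2 < a → 2 - (k : ℝ) < c → (∀ n : ℤ, a ≠ n) → Full a c := by
    intro k
    induction k with
    | zero => simpa using H
    | succ k ih =>
      have := step_c ih
      intro a c ha hc hn
      exact this a c ha (by push_cast at hc; linarith) hn
  have h2 : ∀ a c : ℝ, 2 < a → (∀ n : ℤ, a ≠ n) → Full a c := by
    intro a c ha hn
    obtain ⟨k, hk⟩ := exists_nat_gt (2 - c)
    exact h1 k a c ha (by linarith) hn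
  have h3 : ∀ k : ℕ, ∀ a c : ℝ, 2 - (k : ℝ) < a → (∀ n : ℤ, a ≠ n) → Full a c := by
    intro k
    induction k with
    | zero => simpa using h2
    | succ k ih =>
      have := step_a ih
      intro a c ha hn
      exact this a c (by push_cast at ha; linarith) hn
  intro a c hn
  obtain ⟨k, hk⟩ := exists_nat_gt (2 - a)
  exact h3 k a c (by linarith) hn

end KS

namespace KS
open Filter Topology MeasureTheory Set

lemma Gamma_ph' (b : ℝ) (hb : ∀ n : ℕ, b ≠ -(n : ℝ)) (n : ℕ) :
    Real.Gamma (b + n) = ph b n * Real.Gamma b := by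
  induction n with
  | zero => simp [ph_zero]
  | succ n ih =>
    push_cast
    rw [← add_assoc, Real.Gamma_add_one (fun h => hb n (by linarith)), ih, ph_succ]; ring

lemma beta_int (p q : ℝ) (hp : 0 < p) (hq : 0 < q) :
    ∫ s in (0:ℝ)..1, s ^ (p - 1) * (1 - s) ^ (q - 1) =
      Real.Gamma p * Real.Gamma q / Real.Gamma (p + q) := by
  have h := Complex.betaIntegral_eq_Gamma_mul_div (p : ℂ) (q : ℂ) (by simpa) (by simpa)
  rw [← Complex.ofReal_add, Complex.Gamma_ofReal, Complex.Gamma_ofReal, Complex.Gamma_ofReal] at h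
  have h2 : Complex.betaIntegral (p : ℂ) (q : ℂ) =
      ((∫ s in (0:ℝ)..1, s ^ (p - 1) * (1 - s) ^ (q - 1) : ℝ) : ℂ) := by
    rw [Complex.betaIntegral, ← intervalIntegral.integral_ofReal]
    refine intervalIntegral.integral_congr fun s hs => ?_
    rw [uIcc_of_le zero_le_one] at hs
    push_cast
    rw [Complex.ofReal_cpow hs.1, Complex.ofReal_cpow (sub_nonneg.2 hs.2)]
    push_cast; rfl
  rw [h2] at h
  exact_mod_cast h

lemma binom_series (r z : ℝ) (hz : |z| < 1) :
    HasSum (fun j : ℕ => ph r j / j.factorial * z ^ j) ((1 - z) ^ (-r)) := by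
  have h := (Real.one_div_one_sub_rpow_hasFPowerSeriesOnBall_zero r).hasSum (y := z)
    (by simpa [Metric.mem_eball, edist_zero_right, enorm_eq_nnnorm, ← NNReal.coe_lt_one] using hz)
  simp only [zero_add, one_div, FormalMultilinearSeries.ofScalars_apply_eq, smul_eq_mul] at h
  have hz' : 0 < 1 - z := by have := (abs_lt.1 hz).2; linarith
  rw [Real.rpow_neg hz'.le]
  refine h.congr_fun ?_ 
  intro j
  congr 1
  have h1 := Ring.factorial_nsmul_multichoose_eq_ascPochhammer r j
  rw [Polynomial.ascPochhammer_smeval_eq_eval] at h1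
  have h2 : Ring.choose (r + j - 1) j = Ring.multichoose r j := by
    rw [Ring.choose]; congr 1; ring
  rw [h2, ph, ← h1, nsmul_eq_mul]
  field_simp

/-- weight -/
noncomputable def wt (a : ℝ) (m : ℕ) (s : ℝ) : ℝ := s ^ ((m : ℝ) - a) * (1 - s) ^ (a - 1)

noncomputable def Kc (a : ℝ) : ℝ := (Real.Gamma a * Real.Gamma (1 - a))⁻¹

lemma wt_cont (a : ℝ) (m : ℕ) (ha : 1 < a) (hm : a < m) : Continuous (wt a m) := by
  unfold wt
  refine Continuous.mul ?_ ?_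
  · exact continuous_id.rpow_const fun s => Or.inr (by linarith)
  · exact (continuous_const.sub continuous_id).rpow_const fun s => Or.inr (by linarith)

lemma moment (a : ℝ) (m : ℕ) (ha : 1 < a) (hm : a < m) (hn : ∀ n : ℤ, a ≠ n) (k : ℕ) :
    Kc a * ∫ s in (0:ℝ)..1, wt a m s * s ^ k = ph (1 - a) (k + m) / (k + m).factorial := by
  have h1 : ∫ s in (0:ℝ)..1, wt a m s * s ^ k =
      ∫ s in (0:ℝ)..1, s ^ (((k + m : ℕ) : ℝ) + 1 - a - 1) * (1 - s) ^ (a - 1) := by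
    refine intervalIntegral.integral_congr fun s hs => ?_
    rw [uIcc_of_le zero_le_one] at hs
    simp only [wt]
    have : s ^ (((k + m : ℕ) : ℝ) + 1 - a - 1) = s ^ ((m : ℝ) - a) * s ^ k := by
      rw [← Real.rpow_natCast s k, ← Real.rpow_add_of_nonneg hs.1 (by linarith) (by positivity)]
      congr 1; push_cast; ring
    rw [this]; ring
  have hk : (0:ℝ) ≤ k := by positivity
  rw [h1, beta_int _ _ (by push_cast; linarith) (by linarith)]
  have h2 : ∀ n : ℕ, 1 - a ≠ -(n : ℝ) := fun n h => hn (n + 1) (by push_cast; linarith)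
  have h3 := Gamma_ph' (1 - a) h2 (k + m)
  rw [show ((k + m : ℕ) : ℝ) + 1 - a = 1 - a + ((k + m : ℕ) : ℝ) by ring, h3,
    show 1 - a + ((k + m : ℕ) : ℝ) + a = ((k + m : ℕ) : ℝ) + 1 by ring, Real.Gamma_nat_eq_factorial]
  have g1 : Real.Gamma a ≠ 0 := (Real.Gamma_pos_of_pos (by linarith)).ne'
  have g2 : Real.Gamma (1 - a) ≠ 0 := Real.Gamma_ne_zero h2
  rw [Kc]; field_simp

lemma stieltjes_real (a : ℝ) (m : ℕ) (ha : 1 < a) (hm : a < m) (hn : ∀ n : ℤ, a ≠ n)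
    (q : ℝ) (hq : 1 < q) :
    Kc a * ∫ s in (0:ℝ)..1, wt a m s / (q - s) =
      q ^ ((m : ℝ) - a) * (q - 1) ^ (a - 1) -
        ∑ j ∈ Finset.range m, q ^ ((m : ℝ) - 1 - j) * (ph (1 - a) j / j.factorial) := by
  have hq0 : 0 < q := by linarith
  have hw := wt_cont a m ha hm
  have hpos : ∀ s ∈ Icc (0:ℝ) 1, 0 ≤ wt a m s := fun s hs =>
    mul_nonneg (Real.rpow_nonneg hs.1 _) (Real.rpow_nonneg (sub_nonneg.2 hs.2) _)
  -- expand
  have hS : HasSum (fun k : ℕ => ∫ s in (0:ℝ)..1, wt a m s * s ^ k / q ^ (k + 1))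
      (∫ s in (0:ℝ)..1, wt a m s / (q - s)) := by
    refine intervalIntegral.hasSum_integral_of_dominated_convergence
      (fun k s => |wt a m s| * (1 / q ^ (k + 1))) ?_ ?_ ?_ ?_ ?_
    · intro k
      exact (Continuous.div_const (hw.mul (continuous_pow k)) _).aestronglyMeasurable
    · intro k
      refine Eventually.of_forall fun s hs => ?_
      rw [uIoc_of_le zero_le_one] at hs
      rw [norm_div, norm_mul, Real.norm_eq_abs, mul_div_assoc]
      gcongr
      · rw [norm_pow, Real.norm_eq_abs, abs_of_pos hs.1]
        exact pow_le_one₀ hs.1.le hs.2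
      · rw [Real.norm_of_nonneg (by positivity)]
    · refine Eventually.of_forall fun s hs => ?_
      refine Summable.mul_left _ ?_
      have := (summable_geometric_of_lt_one (r := 1 / q) (by positivity)
        (by rw [div_lt_one hq0]; exact hq))
      refine ((summable_nat_add_iff 1).2 this).congr fun k => ?_
      rw [one_div_pow]
    · refine Continuous.intervalIntegrable ?_ _ _
      simp_rw [tsum_mul_left]
      exact hw.abs.mul continuous_const
    · refine Eventually.of_forall fun s hs => ?_
      rw [uIoc_of_le zero_le_one] at hs
      have h1 : |s / q| < 1 := by
        rw [abs_of_nonneg (div_nonneg hs.1.le hq0.le), div_lt_one hq0]; linarith [hs.2]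
      have h2 := (hasSum_geometric_of_abs_lt_one h1).mul_left (wt a m s / q)
      have h3 : q - s ≠ 0 := by linarith [hs.2]
      have h4 : wt a m s / q * (1 - s / q)⁻¹ = wt a m s / (q - s) := by
        have : 1 - s / q = (q - s) / q := by field_simp
        rw [this]; field_simp
      rw [h4] at h2
      refine h2.congr_fun fun k => ?_
      rw [div_pow, pow_succ]; field_simp
  have hS2 := hS.mul_left (Kc a)
  have e1 : ∀ k : ℕ, Kc a * ∫ s in (0:ℝ)..1, wt a m s * s ^ k / q ^ (k + 1) =
      q ^ ((m : ℝ) - 1) * (ph (1 - a) (k + m) / (k + m).factorial * (1 / q) ^ (k + m)) := by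
    intro k
    rw [intervalIntegral.integral_div, ← mul_div_assoc, moment a m ha hm hn k]
    have : q ^ ((m : ℝ) - 1) = q ^ m / q := by
      rw [Real.rpow_sub hq0, Real.rpow_natCast, Real.rpow_one]
    rw [this, one_div_pow, pow_add, pow_succ]; field_simp; ring
  simp_rw [e1] at hS2
  have hB := binom_series (1 - a) (1 / q) (by
    rw [abs_of_pos (by positivity), div_lt_one hq0]; exact hq)
  have hB2 := ((hasSum_nat_add_iff' m).2 hB).mul_left (q ^ ((m : ℝ) - 1))
  rw [hS2.unique hB2, mul_sub, Finset.mul_sum]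
  congr 1
  · have : 1 - 1 / q = (q - 1) / q := by field_simp
    rw [this, Real.div_rpow (by linarith) hq0.le, neg_sub, Real.rpow_sub hq0 m a,
      Real.rpow_sub hq0 m 1, Real.rpow_sub hq0 a 1, Real.rpow_one]
    have := (Real.rpow_pos_of_pos hq0 a).ne'
    field_simp
  · refine Finset.sum_congr rfl fun j _ => ?_
    rw [Real.rpow_sub hq0 _ (j:ℝ), Real.rpow_natCast q j, one_div_pow]
    ring

end KS

namespace KS
open Filter Topology MeasureTheory Set

lemma real_mul_cpow (r : ℝ) (hr : 0 < r) (z : ℂ) (hz : z ≠ 0) (e : ℝ) :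
    ((r : ℂ) * z) ^ (e : ℂ) = ((r ^ e : ℝ) : ℂ) * z ^ (e : ℂ) := by
  have hr' : (r : ℂ) ≠ 0 := by exact_mod_cast hr.ne'
  rw [Complex.ofReal_cpow hr.le, Complex.cpow_def_of_ne_zero (mul_ne_zero hr' hz),
    Complex.cpow_def_of_ne_zero hr', Complex.cpow_def_of_ne_zero hz, ← Complex.exp_add,
    Complex.log_ofReal_mul hr hz, Complex.ofReal_log hr.le]
  congr 1; ring

lemma ne_real_of_slit {q : ℂ} (hq : q - 1 ∈ Complex.slitPlane) (s : ℝ) (hs : s ∈ Icc (0:ℝ) 1) :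
    q - s ≠ 0 := by
  intro h
  have : q = s := sub_eq_zero.1 h
  rw [this, Complex.mem_slitPlane_iff] at hq
  simp at hq
  linarith [hs.2]

lemma stieltjes_diff (w : ℝ → ℝ) (hw : Continuous w) (q₀ : ℂ) (hq : q₀ - 1 ∈ Complex.slitPlane) :
    DifferentiableAt ℂ (fun q : ℂ => ∫ s in (0:ℝ)..1, (w s : ℂ) / (q - s)) q₀ := by
  -- distance to the interval
  obtain ⟨δ, hδ, hd⟩ : ∃ δ > 0, ∀ s ∈ Icc (0:ℝ) 1, δ ≤ ‖q₀ - s‖ := by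
    obtain ⟨s₀, hs₀, hmin⟩ := isCompact_Icc.exists_isMinOn (nonempty_Icc.2 zero_le_one)
      (f := fun s : ℝ => ‖q₀ - s‖) (by fun_prop)
    exact ⟨_, norm_pos_iff.2 (ne_real_of_slit hq s₀ hs₀), fun s hs => hmin hs⟩
  have hball : ∀ q ∈ Metric.ball q₀ (δ / 2), ∀ s ∈ Icc (0:ℝ) 1, δ / 2 ≤ ‖q - s‖ := by
    intro q hq s hs
    have h1 := hd s hs
    have h2 : ‖q - q₀‖ < δ / 2 := by simpa [dist_eq_norm] using hq
    have h3 : ‖q₀ - s‖ ≤ ‖q - s‖ + ‖q - q₀‖ := by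
      have := norm_sub_le (q - s) (q - q₀)
      rwa [show q - s - (q - q₀) = q₀ - s by ring] at this
    linarith
  have hcont : ∀ q ∈ Metric.ball q₀ (δ / 2), ContinuousOn (fun s : ℝ => (w s : ℂ) / (q - s)) (Icc 0 1) := by
    intro q hq
    refine ContinuousOn.div (by fun_prop) (by fun_prop) fun s hs h => ?_
    have := hball q hq s hs
    rw [h, norm_zero] at this; linarith
  have hcont2 : ContinuousOn (fun s : ℝ => -(w s : ℂ) / (q₀ - s) ^ 2) (Icc 0 1) := by
    refine ContinuousOn.div (by fun_prop) (by fun_prop) fun s hs h => ?_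
    have := hd s hs
    have h' : q₀ - s = 0 := by simpa using h
    rw [h', norm_zero] at this; linarith
  have hI : uIoc (0:ℝ) 1 ⊆ Icc 0 1 := by rw [uIoc_of_le zero_le_one]; exact Ioc_subset_Icc_self
  have := (intervalIntegral.hasDerivAt_integral_of_dominated_loc_of_deriv_le
    (μ := volume) (a := 0) (b := 1) (x₀ := q₀) (s := Metric.ball q₀ (δ / 2))
    (F := fun (q : ℂ) (s : ℝ) => (w s : ℂ) / (q - s))
    (F' := fun (q : ℂ) (s : ℝ) => -(w s : ℂ) / (q - s) ^ 2)
    (bound := fun s => |w s| / (δ / 2) ^ 2)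
    (Metric.ball_mem_nhds _ (by positivity)) ?_ ?_ ?_ ?_ ?_ ?_).2
  · exact this.differentiableAt
  · filter_upwards [Metric.ball_mem_nhds q₀ (half_pos hδ)] with q hq
    exact ((hcont q hq).mono hI).aestronglyMeasurable measurableSet_uIoc
  · refine ContinuousOn.intervalIntegrable ?_
    rw [uIcc_of_le zero_le_one]
    exact hcont q₀ (Metric.mem_ball_self (half_pos hδ))
  · exact (hcont2.mono hI).aestronglyMeasurable measurableSet_uIoc
  · refine Eventually.of_forall fun s hs q hq => ?_
    rw [norm_div, norm_neg, norm_pow, Complex.norm_real, Real.norm_eq_abs]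
    have := hball q hq s (hI hs)
    gcongr
  · exact (Continuous.div_const hw.abs _).intervalIntegrable _ _
  · refine Eventually.of_forall fun s hs q hq => ?_
    have h0 : q - s ≠ 0 := by
      intro h
      have := hball q hq s (hI hs)
      rw [h, norm_zero] at this; linarith
    have h1 : HasDerivAt (fun q : ℂ => q - s) 1 q := (hasDerivAt_id q).sub_const _
    have := (hasDerivAt_const q (w s : ℂ)).div h1 h0
    exact this.congr_deriv (by simp)

lemma stieltjes_complex (a : ℝ) (m : ℕ) (ha : 1 < a) (hm : a < m) (hn : ∀ n : ℤ, a ≠ n)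
    (q : ℂ) (hq : q - 1 ∈ Complex.slitPlane) :
    (Kc a : ℂ) * ∫ s in (0:ℝ)..1, (wt a m s : ℂ) / (q - s) =
      q ^ (((m : ℝ) - a : ℝ) : ℂ) * (q - 1) ^ ((a - 1 : ℝ) : ℂ) -
        ∑ j ∈ Finset.range m, q ^ (m - 1 - j) * ((ph (1 - a) j / j.factorial : ℝ) : ℂ) := by
  set U : Set ℂ := {q | q - 1 ∈ Complex.slitPlane} with hU
  have hUo : IsOpen U := Complex.isOpen_slitPlane.preimage (continuous_id.sub continuous_const)
  have hUc : IsPreconnected U := by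
    have h1 : IsPreconnected Complex.slitPlane :=
      (Complex.starConvex_one_slitPlane.isPathConnected
        Complex.one_mem_slitPlane).isConnected.isPreconnected
    have h2 := h1.image (fun z : ℂ => z + 1) (by fun_prop)
    convert h2 using 1
    ext z; simp only [hU, mem_ofPred_eq, mem_image]
    constructor
    · intro h; exact ⟨z - 1, h, by ring⟩
    · rintro ⟨y, hy, rfl⟩; simpa using hy
  have hsl : ∀ q ∈ U, q ∈ Complex.slitPlane := by
    intro q hq
    simp only [hU, mem_ofPred_eq, Complex.mem_slitPlane_iff] at hq
    rw [Complex.mem_slitPlane_iff]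
    simp at hq
    rcases hq with h | h
    · left; linarith
    · right; exact h
  have hf : AnalyticOnNhd ℂ
      (fun q : ℂ => (Kc a : ℂ) * ∫ s in (0:ℝ)..1, (wt a m s : ℂ) / (q - s)) U := by
    refine DifferentiableOn.analyticOnNhd (fun q hq => ?_) hUo
    exact ((stieltjes_diff _ (wt_cont a m ha hm) q hq).const_mul _).differentiableWithinAt
  have hg : AnalyticOnNhd ℂ (fun q : ℂ =>
      q ^ (((m : ℝ) - a : ℝ) : ℂ) * (q - 1) ^ ((a - 1 : ℝ) : ℂ) -
        ∑ j ∈ Finset.range m, q ^ (m - 1 - j) * ((ph (1 - a) j / j.factorial : ℝ) : ℂ)) U := by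
    refine DifferentiableOn.analyticOnNhd (fun q hq => ?_) hUo
    refine DifferentiableAt.differentiableWithinAt ?_
    refine DifferentiableAt.sub (DifferentiableAt.mul ?_ ?_) ?_
    · exact differentiableAt_id.cpow_const (hsl q hq)
    · exact (differentiableAt_id.sub_const 1).cpow_const hq
    · fun_prop
  have h2U : (2 : ℂ) ∈ U := by
    simp only [hU, mem_ofPred_eq, Complex.mem_slitPlane_iff]; norm_num
  refine hf.eqOn_of_preconnected_of_frequently_eq hg hUc h2U ?_ hq
  -- real points
  have hreal : ∀ t : ℝ, 1 < t →
      (fun q : ℂ => (Kc a : ℂ) * ∫ s in (0:ℝ)..1, (wt a m s : ℂ) / (q - s)) t =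
      (fun q : ℂ =>
      q ^ (((m : ℝ) - a : ℝ) : ℂ) * (q - 1) ^ ((a - 1 : ℝ) : ℂ) -
        ∑ j ∈ Finset.range m, q ^ (m - 1 - j) * ((ph (1 - a) j / j.factorial : ℝ) : ℂ)) t := by
    intro t ht
    have h := stieltjes_real a m ha hm hn t ht
    have h2 := congrArg (fun y : ℝ => (y : ℂ)) h
    simp only at h2 ⊢
    have e1 : ∫ s in (0:ℝ)..1, (wt a m s : ℂ) / ((t : ℂ) - s) =
        ((∫ s in (0:ℝ)..1, wt a m s / (t - s) : ℝ) : ℂ) := by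
      rw [← intervalIntegral.integral_ofReal]
      refine intervalIntegral.integral_congr fun s _ => ?_
      push_cast; rfl
    rw [e1, ← Complex.ofReal_mul, h2, Complex.ofReal_sub, Complex.ofReal_mul, Complex.ofReal_sum,
      Complex.ofReal_cpow (by linarith), Complex.ofReal_cpow (by linarith)]
    congr 1
    · push_cast; rfl
    · refine Finset.sum_congr rfl fun j hj => ?_
      rw [Complex.ofReal_mul]
      congr 1
      have : (m : ℝ) - 1 - j = ((m - 1 - j : ℕ) : ℝ) := by
        have := Finset.mem_range.1 hj
        rw [Nat.cast_sub (by omega), Nat.cast_sub (by omega)]; simp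
      rw [this, Real.rpow_natCast]; push_cast; rfl
  have ht : Tendsto (fun n : ℕ => (((2 + 1 / ((n : ℝ) + 1)) : ℝ) : ℂ)) atTop (𝓝[≠] (2:ℂ)) := by
    refine tendsto_nhdsWithin_iff.2 ⟨?_, ?_⟩
    · have h1 : Tendsto (fun n : ℕ => (2 + 1 / ((n : ℝ) + 1))) atTop (𝓝 (2 + 0)) :=
        tendsto_one_div_add_atTop_nhds_zero_nat.const_add 2
      have := (Complex.continuous_ofReal.tendsto _).comp h1
      simpa [Function.comp_def] using this
    · refine Eventually.of_forall fun n h => ?_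
      have h' : ((2 + 1 / ((n : ℝ) + 1) : ℝ) : ℂ) = ((2 : ℝ) : ℂ) := by simpa using h
      have h'' := Complex.ofReal_injective h'
      have : 0 < 1 / ((n : ℝ) + 1) := by positivity
      linarith
  refine ht.frequently (Frequently.of_forall fun n => ?_)
  apply hreal
  have : 0 < 1 / ((n : ℝ) + 1) := by positivity
  linarith

/-- the exact remainder, complex version -/
noncomputable def Er (a : ℝ) (m : ℕ) (u : ℝ) (p : ℂ) : ℂ :=
  p ^ (((m : ℝ) - a : ℝ) : ℂ) * (p - u) ^ ((a - 1 : ℝ) : ℂ) -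
    ∑ j ∈ Finset.range m, p ^ (m - 1 - j) * (u : ℂ) ^ j * ((ph (1 - a) j / j.factorial : ℝ) : ℂ)

lemma Er_eq (a : ℝ) (m : ℕ) (ha : 1 < a) (hm : a < m) (hn : ∀ n : ℤ, a ≠ n)
    (u : ℝ) (hu : 0 < u) (p : ℂ) (hp : 0 < p.im) :
    Er a m u p = (Kc a : ℂ) * ∫ r in (0:ℝ)..u,
      ((r ^ ((m : ℝ) - a) * (u - r) ^ (a - 1) : ℝ) : ℂ) / (p - r) := by
  have hu' : (u : ℂ) ≠ 0 := by exact_mod_cast hu.ne'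
  have hp0 : p ≠ 0 := by rintro rfl; simp at hp
  set q : ℂ := p / u with hqd
  have hpq : p = u * q := by rw [hqd]; field_simp
  have hqim : 0 < q.im := by
    rw [hqd, Complex.div_ofReal_im]; positivity
  have hq1 : q - 1 ∈ Complex.slitPlane := by
    rw [Complex.mem_slitPlane_iff]; right; simp; exact hqim.ne'
  have hq0 : q ≠ 0 := by intro h; rw [h] at hqim; simp at hqim
  have hm1 : 1 ≤ m := by
    have : (1 : ℝ) < m := by linarith
    exact_mod_cast this.le
  have key := stieltjes_complex a m ha hm hn q hq1
  have e1 : Er a m u p = (u : ℂ) ^ (m - 1) * (q ^ (((m : ℝ) - a : ℝ) : ℂ) * (q - 1) ^ ((a - 1 : ℝ) : ℂ) -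
        ∑ j ∈ Finset.range m, q ^ (m - 1 - j) * ((ph (1 - a) j / j.factorial : ℝ) : ℂ)) := by
    rw [Er, mul_sub, Finset.mul_sum]
    congr 1
    · have : p - u = u * (q - 1) := by rw [hpq]; ring
      rw [this, hpq, real_mul_cpow u hu q hq0,
        real_mul_cpow u hu (q - 1) (Complex.slitPlane_ne_zero hq1)]
      have : (u : ℂ) ^ (m - 1) = ((u ^ ((m : ℝ) - a) : ℝ) : ℂ) * ((u ^ (a - 1) : ℝ) : ℂ) := by
        rw [← Complex.ofReal_mul, ← Real.rpow_add hu,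
          show (m : ℝ) - a + (a - 1) = ((m - 1 : ℕ) : ℝ) by rw [Nat.cast_sub hm1]; simp,
          Real.rpow_natCast]
        push_cast; rfl
      rw [this]; ring
    · refine Finset.sum_congr rfl fun j hj => ?_
      have hj' := Finset.mem_range.1 hj
      have : (u : ℂ) ^ (m - 1) = (u : ℂ) ^ (m - 1 - j) * (u : ℂ) ^ j := by
        rw [← pow_add]; congr 1; omega
      rw [hpq, mul_pow, this]; ring
  rw [e1, ← key]
  have e2 : ∫ r in (0:ℝ)..u, ((r ^ ((m : ℝ) - a) * (u - r) ^ (a - 1) : ℝ) : ℂ) / (p - r) =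
      (u : ℂ) ^ (m - 1) * ∫ s in (0:ℝ)..1, (wt a m s : ℂ) / (q - s) := by
    have h := intervalIntegral.smul_integral_comp_mul_left (a := 0) (b := 1)
      (fun r : ℝ => ((r ^ ((m : ℝ) - a) * (u - r) ^ (a - 1) : ℝ) : ℂ) / (p - r)) u
    rw [mul_zero, mul_one] at h
    rw [← h, ← intervalIntegral.integral_smul, ← intervalIntegral.integral_const_mul]
    refine intervalIntegral.integral_congr fun s hs => ?_
    rw [uIcc_of_le zero_le_one] at hs
    have hqs := ne_real_of_slit hq1 s hs
    have h3 : p - ((u * s : ℝ) : ℂ) = u * (q - s) := by rw [hpq]; push_cast; ring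
    have h4 : (u * s) ^ ((m : ℝ) - a) * (u - u * s) ^ (a - 1) = u ^ (m - 1) * wt a m s := by
      rw [show u - u * s = u * (1 - s) by ring, Real.mul_rpow hu.le hs.1,
        Real.mul_rpow hu.le (sub_nonneg.2 hs.2), wt]
      have : u ^ (m - 1) = u ^ ((m : ℝ) - a) * u ^ (a - 1) := by
        rw [← Real.rpow_add hu,
          show (m : ℝ) - a + (a - 1) = ((m - 1 : ℕ) : ℝ) by rw [Nat.cast_sub hm1]; simp,
          Real.rpow_natCast]
      rw [this]; ring
    rw [h3, h4, Complex.real_smul]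
    push_cast
    field_simp
  rw [e2]; ring

end KS

namespace KS
open Filter Topology MeasureTheory Set

lemma cont_rpow (e : ℝ) (he : 0 ≤ e) : Continuous (fun s : ℝ => s ^ e) :=
  Real.continuous_rpow_const he

lemma Mt_int (a c x : ℝ) (ha : 1 < a) (hc : 1 < c) :
    Mt a (a + c) x = Real.exp x * (Real.Gamma a * Real.Gamma c)⁻¹ *
      ∫ u in (0:ℝ)..1, Real.exp (-(x * u)) * u ^ (c - 1) * (1 - u) ^ (a - 1) := by
  have c1 : Continuous (fun s : ℝ => s ^ (a - 1)) := cont_rpow _ (by linarith)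
  have c2 : Continuous (fun s : ℝ => (1 - s) ^ (c - 1)) :=
    (cont_rpow (c - 1) (by linarith)).comp (continuous_const.sub continuous_id)
  have h1 : ∫ u in (0:ℝ)..1, Real.exp (-(x * u)) * u ^ (c - 1) * (1 - u) ^ (a - 1) =
      Real.exp (-x) * ∫ s in (0:ℝ)..1, Real.exp (x * s) * (s ^ (a - 1) * (1 - s) ^ (c - 1)) := by
    have := intervalIntegral.integral_comp_sub_left (a := 0) (b := 1)
      (fun u : ℝ => Real.exp (-(x * u)) * u ^ (c - 1) * (1 - u) ^ (a - 1)) 1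
    rw [sub_self, sub_zero] at this
    rw [← this, ← intervalIntegral.integral_const_mul]
    refine intervalIntegral.integral_congr fun s _ => ?_
    rw [show -(x * (1 - s)) = -x + x * s by ring, Real.exp_add, sub_sub_cancel]; ring
  have h2 : HasSum (fun n : ℕ => ∫ s in (0:ℝ)..1,
      (x * s) ^ n / n.factorial * (s ^ (a - 1) * (1 - s) ^ (c - 1)))
      (∫ s in (0:ℝ)..1, Real.exp (x * s) * (s ^ (a - 1) * (1 - s) ^ (c - 1))) := by
    refine intervalIntegral.hasSum_integral_of_dominated_convergence
      (fun n s => |x| ^ n / n.factorial * |s ^ (a - 1) * (1 - s) ^ (c - 1)|) ?_ ?_ ?_ ?_ ?_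
    · intro n
      exact Continuous.aestronglyMeasurable (by fun_prop)
    · intro n
      refine Eventually.of_forall fun s hs => ?_
      rw [uIoc_of_le zero_le_one] at hs
      rw [Real.norm_eq_abs, abs_mul, abs_div, abs_pow, abs_mul, abs_of_pos hs.1,
        abs_of_pos (by positivity : (0:ℝ) < n.factorial)]
      have h0 := hs.1.le
      gcongr
      have := abs_nonneg x
      nlinarith [hs.2]
    · refine Eventually.of_forall fun s hs => ?_
      exact (Real.summable_pow_div_factorial |x|).mul_right _
    · simp_rw [tsum_mul_right]
      exact Continuous.intervalIntegrable (by fun_prop) _ _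
    · refine Eventually.of_forall fun s hs => ?_
      have := NormedSpace.expSeries_div_hasSum_exp (𝔸 := ℝ) (x * s)
      rw [← Real.exp_eq_exp_ℝ] at this
      exact this.mul_right _
  have h3 : ∀ n : ℕ, ∫ s in (0:ℝ)..1,
      (x * s) ^ n / n.factorial * (s ^ (a - 1) * (1 - s) ^ (c - 1)) =
      (Real.Gamma a * Real.Gamma c) * mt a (a + c) x n := by
    intro n
    have hb := beta_int (a + n) c (by positivity) (by linarith)
    have : ∫ s in (0:ℝ)..1, (x * s) ^ n / n.factorial * (s ^ (a - 1) * (1 - s) ^ (c - 1)) =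
        x ^ n / n.factorial * ∫ s in (0:ℝ)..1, s ^ (a + n - 1) * (1 - s) ^ (c - 1) := by
      rw [← intervalIntegral.integral_const_mul]
      refine intervalIntegral.integral_congr fun s hs => ?_
      rw [uIcc_of_le zero_le_one] at hs
      rw [show a + n - 1 = (a - 1) + n by ring, Real.rpow_add_natCast' hs.1 (by
        have : (0:ℝ) ≤ n := n.cast_nonneg
        linarith), mul_pow]
      ring
    rw [this, hb, Gamma_ph' a (fun k => by
      have : (0:ℝ) ≤ k := k.cast_nonneg
      linarith), mt, show a + n + c = a + c + n by ring]
    ring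
  simp_rw [h3] at h2
  rw [h1, ← h2.tsum_eq, tsum_mul_left, Mt, Real.exp_neg]
  have g1 := (Real.Gamma_pos_of_pos (by linarith : 0 < a)).ne'
  have g2 := (Real.Gamma_pos_of_pos (by linarith : 0 < c)).ne'
  have g3 := (Real.exp_pos x).ne'
  field_simp

/-- the truncated binomial series -/
noncomputable def Sb (a : ℝ) (m : ℕ) (u : ℝ) : ℝ :=
  ∑ j ∈ Finset.range m, u ^ j * (ph (1 - a) j / j.factorial)

lemma gam_int (e x : ℝ) (he : -1 < e) (hx : 0 < x) :
    IntegrableOn (fun u : ℝ => Real.exp (-(x * u)) * u ^ e) (Ioi 0) := by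
  have := integrableOn_rpow_mul_exp_neg_mul_rpow (p := 1) (s := e) (b := x) he one_pos hx
  refine this.congr_fun (fun u _ => ?_) measurableSet_Ioi
  simp only [Real.rpow_one]
  rw [mul_comm, neg_mul]

lemma gam_val (e x : ℝ) (he : 0 < e) (hx : 0 < x) :
    ∫ u in Ioi (0:ℝ), Real.exp (-(x * u)) * u ^ (e - 1) = x ^ (-e) * Real.Gamma e := by
  have := Real.integral_rpow_mul_exp_neg_mul_Ioi he hx
  rw [one_div, Real.inv_rpow hx.le, ← Real.rpow_neg hx.le] at this
  rw [← this]
  refine setIntegral_congr_fun measurableSet_Ioi fun u _ => ?_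
  ring

lemma WS_int (a c x : ℝ) (hc : 1 < c) (hx : 0 < x) (m : ℕ) :
    IntegrableOn (fun u : ℝ => Real.exp (-(x * u)) * u ^ (c - 1) * Sb a m u) (Ioi 0) := by
  simp only [Sb, Finset.mul_sum]
  refine integrable_finsetSum _ fun j _ => ?_
  have := (gam_int (c - 1 + j) x (by linarith [(j.cast_nonneg : (0:ℝ) ≤ j)]) hx).mul_const
    (ph (1 - a) j / j.factorial)
  refine IntegrableOn.congr_fun this (fun u hu => ?_) measurableSet_Ioi
  rw [Real.rpow_add hu, Real.rpow_natCast]; ring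

lemma Tt_int (a c x : ℝ) (hc : 1 < c) (hx : 0 < x) (m : ℕ) :
    Tt a c x m = Real.exp x * (Real.Gamma a * Real.Gamma c)⁻¹ *
      ∫ u in Ioi (0:ℝ), Real.exp (-(x * u)) * u ^ (c - 1) * Sb a m u := by
  have e : ∀ j : ℕ, ∀ u ∈ Ioi (0:ℝ),
      Real.exp (-(x * u)) * u ^ (c + j - 1) * (ph (1 - a) j / j.factorial) =
      Real.exp (-(x * u)) * u ^ (c - 1) * (u ^ j * (ph (1 - a) j / j.factorial)) := by
    intro j u hu
    rw [show c + j - 1 = c - 1 + j by ring, Real.rpow_add hu, Real.rpow_natCast]; ring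
  have : ∫ u in Ioi (0:ℝ), Real.exp (-(x * u)) * u ^ (c - 1) * Sb a m u =
      ∑ j ∈ Finset.range m, x ^ (-(c + j)) * Real.Gamma (c + j) * (ph (1 - a) j / j.factorial) := by
    simp only [Sb, Finset.mul_sum]
    rw [integral_finsetSum]
    · refine Finset.sum_congr rfl fun j _ => ?_
      rw [← gam_val (c + j) x (by linarith [(j.cast_nonneg : (0:ℝ) ≤ j)]) hx, ← integral_mul_const]
      exact setIntegral_congr_fun measurableSet_Ioi fun u hu => (e j u hu).symm
    · intro j _
      have := (gam_int (c + j - 1) x (by linarith [(j.cast_nonneg : (0:ℝ) ≤ j)]) hx).mul_const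
        (ph (1 - a) j / j.factorial)
      exact IntegrableOn.congr_fun this (e j) measurableSet_Ioi
  rw [this, Tt, St, Finset.mul_sum, Finset.mul_sum]
  refine Finset.sum_congr rfl fun j _ => ?_
  rw [Gamma_ph' c (fun k => by
      have : (0:ℝ) ≤ k := k.cast_nonneg
      linarith), co, neg_add, Real.rpow_add hx, Real.rpow_neg hx.le (j : ℝ), Real.rpow_natCast,
      mul_inv]
  have g2 := (Real.Gamma_pos_of_pos (by linarith : 0 < c)).ne'
  field_simp

end KS

namespace KS
open Filter Topology MeasureTheory Set

lemma pow_le_exp (s t : ℝ) (hs : 0 ≤ s) (ht : 0 ≤ t) :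
    (1 + t) ^ s ≤ (1 + s) ^ s * Real.exp t := by
  have h1 : 1 + t ≤ (1 + s) * Real.exp (t / (1 + s)) := by
    have := Real.add_one_le_exp (t / (1 + s))
    have h2 : (1 + s) * (t / (1 + s) + 1) ≤ (1 + s) * Real.exp (t / (1 + s)) := by gcongr
    have h3 : (1 + s) * (t / (1 + s) + 1) = t + (1 + s) := by field_simp
    linarith
  calc (1 + t) ^ s ≤ ((1 + s) * Real.exp (t / (1 + s))) ^ s := by gcongr
    _ = (1 + s) ^ s * Real.exp (t / (1 + s) * s) := by
        rw [Real.mul_rpow (by positivity) (by positivity), ← Real.exp_mul]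
    _ ≤ _ := by
        gcongr
        rw [div_mul_eq_mul_div, div_le_iff₀ (by positivity)]
        nlinarith

lemma shift_Ioi (f : ℝ → ℝ) (a d : ℝ) :
    ∫ t in Ioi a, f (t + d) = ∫ u in Ioi (a + d), f u := by
  have := (measurePreserving_add_right volume d).setIntegral_preimage_emb
    (measurableEmbedding_addRight d) f (Ioi (a + d))
  rw [← this]
  congr 2
  ext t; simp

lemma Er_bound (a : ℝ) (m : ℕ) (ha : 1 < a) (hm : a < m) : ∃ K, 0 ≤ K ∧ ∀ u > 0, ∀ η ∈ Ioo (0:ℝ) 1,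
    ‖Er a m u (1 + η * Complex.I)‖ ≤ K * Real.exp u := by
  refine ⟨2 ^ ((m:ℝ) - a) * (2 ^ (a - 1) * (1 + (a - 1)) ^ (a - 1)) +
    ∑ j ∈ Finset.range m, 2 ^ (m - 1 - j) * ((1 + (j:ℝ)) ^ (j:ℝ)) * |ph (1 - a) j / j.factorial|,
    ?_, ?_⟩
  · have : 0 ≤ a - 1 := by linarith
    positivity
  intro u hu η hη
  have ha' : 0 ≤ a - 1 := by linarith
  have hp : ‖(1 + η * Complex.I : ℂ)‖ ≤ 2 := by
    refine (norm_add_le _ _).trans ?_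
    simp [abs_of_pos hη.1]; linarith [hη.2]
  have hpu : ‖(1 + η * Complex.I - u : ℂ)‖ ≤ 2 * (1 + u) := by
    refine (norm_sub_le _ _).trans ?_
    simp [abs_of_pos hu]; linarith
  rw [add_mul, Er]
  refine (norm_sub_le _ _).trans (add_le_add ?_ ?_)
  · rw [norm_mul, Complex.norm_cpow_real, Complex.norm_cpow_real, mul_assoc]
    have : 0 ≤ (m:ℝ) - a := by linarith
    gcongr
    calc _ ≤ (2 * (1 + u)) ^ (a - 1) := by gcongr
      _ = 2 ^ (a - 1) * (1 + u) ^ (a - 1) := Real.mul_rpow (by norm_num) (by positivity)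
      _ ≤ 2 ^ (a - 1) * ((1 + (a - 1)) ^ (a - 1) * Real.exp u) := by
          gcongr; exact pow_le_exp _ _ ha' hu.le
      _ = _ := by ring
  · rw [Finset.sum_mul]
    refine (norm_sum_le _ _).trans (Finset.sum_le_sum fun j _ => ?_)
    rw [norm_mul, norm_mul, norm_pow, norm_pow, Complex.norm_real, Complex.norm_real,
      Real.norm_eq_abs, Real.norm_eq_abs, abs_of_pos hu]
    have h1 : u ^ j ≤ (1 + (j:ℝ)) ^ (j:ℝ) * Real.exp u := by
      refine le_trans ?_ (pow_le_exp j u j.cast_nonneg hu.le)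
      rw [Real.rpow_natCast]; gcongr; linarith
    calc _ ≤ 2 ^ (m - 1 - j) * ((1 + (j:ℝ)) ^ (j:ℝ) * Real.exp u) * |ph (1 - a) j / j.factorial| := by
          gcongr
      _ = _ := by ring

lemma Er_meas (a : ℝ) (m : ℕ) (p : ℂ) : Measurable (fun u : ℝ => Er a m u p) := by
  unfold Er
  refine Measurable.sub (Measurable.mul measurable_const ?_) ?_
  · exact (measurable_const.sub Complex.measurable_ofReal).pow_const _
  · fun_prop

lemma tendsto_p : Tendsto (fun η : ℝ => (1 + η * Complex.I : ℂ)) (𝓝[>] 0) (𝓝 1) := by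
  have : Continuous (fun η : ℝ => (1 + η * Complex.I : ℂ)) := by fun_prop
  have h := this.tendsto 0
  simp only [Complex.ofReal_zero, zero_mul, add_zero] at h
  exact h.mono_left nhdsWithin_le_nhds

lemma Er_tendsto (a : ℝ) (m : ℕ) (u : ℝ) (hu : u ≠ 1) :
    Tendsto (fun η : ℝ => (Er a m u (1 + η * Complex.I)).re) (𝓝[>] 0)
      (𝓝 ((1 - u) ^ (a - 1) - Sb a m u)) := by
  have h1 : Tendsto (fun η : ℝ => (1 + η * Complex.I : ℂ) ^ (((m:ℝ) - a : ℝ) : ℂ)) (𝓝[>] 0) (𝓝 1) := by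
    have := (continuousAt_cpow_const (a := 1) (b := (((m:ℝ) - a : ℝ) : ℂ))
      Complex.one_mem_slitPlane).tendsto.comp tendsto_p
    simpa [Function.comp_def] using this
  have hpu : Tendsto (fun η : ℝ => (1 + η * Complex.I - u : ℂ)) (𝓝[>] 0) (𝓝 (((1 - u : ℝ)) : ℂ)) := by
    push_cast
    exact tendsto_p.sub_const _
  have h2 : Tendsto (fun η : ℝ => (1 + η * Complex.I - u : ℂ) ^ ((a - 1 : ℝ) : ℂ)) (𝓝[>] 0)
      (𝓝 (((1 - u : ℝ) : ℂ) ^ ((a - 1 : ℝ) : ℂ))) := by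
    rcases lt_or_gt_of_ne hu with h | h
    · refine (continuousAt_cpow_const ?_).tendsto.comp hpu
      rw [Complex.mem_slitPlane_iff]; left; simpa using h
    · have hne : ((1 - u : ℝ) : ℂ) ≠ 0 := by
        exact_mod_cast (by linarith : 1 - u < 0).ne
      have hl : Tendsto (fun η : ℝ => Complex.log (1 + η * Complex.I - u : ℂ)) (𝓝[>] 0)
          (𝓝 (Complex.log ((1 - u : ℝ) : ℂ))) := by
        have := Complex.continuousWithinAt_log_of_re_neg_of_im_zero (z := ((1 - u : ℝ) : ℂ))
          (by simpa using h) (by simp)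
        refine this.tendsto.comp (tendsto_nhdsWithin_iff.2 ⟨hpu, ?_⟩)
        filter_upwards [self_mem_nhdsWithin] with η hη
        simp; exact le_of_lt hη
      have he := (Complex.continuous_exp.tendsto _).comp (hl.mul_const ((a - 1 : ℝ) : ℂ))
      rw [Complex.cpow_def_of_ne_zero hne]
      refine he.congr' ?_
      filter_upwards [self_mem_nhdsWithin] with η hη
      rw [Complex.cpow_def_of_ne_zero]; · rfl
      intro h0
      have := congrArg Complex.im h0
      simp at this
      exact (ne_of_gt hη) this
  have h3 : Tendsto (fun η : ℝ => ∑ j ∈ Finset.range m, (1 + η * Complex.I : ℂ) ^ (m - 1 - j) *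
      (u : ℂ) ^ j * ((ph (1 - a) j / j.factorial : ℝ) : ℂ)) (𝓝[>] 0) (𝓝 ((Sb a m u : ℝ) : ℂ)) := by
    rw [Sb, Complex.ofReal_sum]
    refine tendsto_finsetSum _ fun j _ => ?_
    have := ((tendsto_p.pow (m - 1 - j)).mul_const ((u : ℂ) ^ j)).mul_const
      ((ph (1 - a) j / j.factorial : ℝ) : ℂ)
    simp only [one_pow, one_mul] at this
    rw [Complex.ofReal_mul, Complex.ofReal_pow]
    exact this
  have h4 := (Complex.continuous_re.tendsto _).comp ((h1.mul h2).sub h3)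
  rw [one_mul, Complex.sub_re, Complex.ofReal_re] at h4
  have e : (((1 - u : ℝ) : ℂ) ^ ((a - 1 : ℝ) : ℂ)).re = (1 - u) ^ (a - 1) := by
    rw [Real.rpow_def]
  rw [e] at h4
  exact h4

lemma D_limit (a c x : ℝ) (m : ℕ) (ha : 1 < a) (hc : 1 < c) (hm : a < m) (hx : 1 < x) :
    Tendsto (fun η : ℝ => ∫ u in Ioi (0:ℝ), Real.exp (-(x * u)) * u ^ (c - 1) *
        (Er a m u (1 + η * Complex.I)).re) (𝓝[>] 0)
      (𝓝 (∫ u in Ioi (0:ℝ), Real.exp (-(x * u)) * u ^ (c - 1) * ((1 - u) ^ (a - 1) - Sb a m u))) := by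
  obtain ⟨K, hK0, hK⟩ := Er_bound a m ha hm
  refine tendsto_integral_filter_of_dominated_convergence
    (fun u => K * (Real.exp (-((x - 1) * u)) * u ^ (c - 1))) ?_ ?_ ?_ ?_
  · refine Eventually.of_forall fun η => Measurable.aestronglyMeasurable ?_
    have := Complex.measurable_re.comp (Er_meas a m (1 + η * Complex.I))
    have h2 : Measurable (fun u : ℝ => u ^ (c - 1)) := measurable_id.pow_const _
    have h3 : Measurable (fun u : ℝ => Real.exp (-(x * u))) := by fun_prop
    exact (h3.mul h2).mul this
  · filter_upwards [Ioo_mem_nhdsGT (zero_lt_one' ℝ)] with η hη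
    filter_upwards [ae_restrict_mem measurableSet_Ioi] with u hu
    have hu' : 0 < u := hu
    rw [norm_mul, Real.norm_eq_abs, abs_of_pos (by positivity)]
    have h1 := (Complex.abs_re_le_norm _).trans (hK u hu η hη)
    have h2 : Real.exp (-((x - 1) * u)) = Real.exp (-(x * u)) * Real.exp u := by
      rw [← Real.exp_add]; congr 1; ring
    rw [Real.norm_eq_abs, h2]
    calc _ ≤ Real.exp (-(x * u)) * u ^ (c - 1) * (K * Real.exp u) := by gcongr
      _ = _ := by ring
  · exact (gam_int (c - 1) (x - 1) (by linarith) (by linarith)).const_mul K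
  · have : ∀ᵐ u : ℝ ∂(volume.restrict (Ioi 0)), u ≠ 1 :=
      ae_restrict_of_ae (by simp [ae_iff, measure_singleton])
    filter_upwards [this] with u hu
    exact (Er_tendsto a m u hu).const_mul _

lemma W1_int (a c x : ℝ) (ha : 1 < a) (hc : 1 < c) (hx : 1 < x) :
    IntegrableOn (fun u : ℝ => Real.exp (-(x * u)) * u ^ (c - 1) * (1 - u) ^ (a - 1)) (Ioi 0) := by
  have := (gam_int (c - 1) (x - 1) (by linarith) (by linarith)).const_mul ((1 + (a - 1)) ^ (a - 1))
  refine Integrable.mono' this ?_ ?_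
  · refine Continuous.aestronglyMeasurable ?_
    have c1 : Continuous (fun s : ℝ => s ^ (c - 1)) := cont_rpow _ (by linarith)
    have c2 : Continuous (fun s : ℝ => (1 - s) ^ (a - 1)) :=
      (cont_rpow (a - 1) (by linarith)).comp (continuous_const.sub continuous_id)
    fun_prop
  · filter_upwards [ae_restrict_mem measurableSet_Ioi] with u hu
    have hu' : 0 < u := hu
    rw [norm_mul, Real.norm_eq_abs, abs_of_pos (by positivity)]
    have h2 : Real.exp (-((x - 1) * u)) = Real.exp (-(x * u)) * Real.exp u := by
      rw [← Real.exp_add]; congr 1; ring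
    have h3 : ‖(1 - u) ^ (a - 1)‖ ≤ (1 + (a - 1)) ^ (a - 1) * Real.exp u := by
      refine le_trans ?_ (pow_le_exp (a - 1) u (by linarith) hu'.le)
      refine (Real.abs_rpow_le_abs_rpow _ _).trans ?_
      refine Real.rpow_le_rpow (abs_nonneg _) ?_ (by linarith)
      rw [abs_le]; constructor <;> linarith
    rw [h2]
    calc _ ≤ Real.exp (-(x * u)) * u ^ (c - 1) * ((1 + (a - 1)) ^ (a - 1) * Real.exp u) := by gcongr
      _ = _ := by ring

/-- Step 3: exact decomposition of the remainder -/
lemma Ft_decomp (a c x : ℝ) (m : ℕ) (ha : 1 < a) (hc : 1 < c) (hx : 1 < x) :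
    Ft a c m x = (Real.Gamma a * Real.Gamma c)⁻¹ * (Real.exp x *
      (∫ u in Ioi (0:ℝ), Real.exp (-(x * u)) * u ^ (c - 1) * ((1 - u) ^ (a - 1) - Sb a m u)) +
      Real.cos (Real.pi * a) *
        ∫ t in Ioi (0:ℝ), Real.exp (-(x * t)) * t ^ (a - 1) * (1 + t) ^ (c - 1)) := by
  rw [Ft, Mt_int a c x ha hc, Tt_int a c x hc (by linarith)]
  have e1 : ∫ u in Ioi (0:ℝ), Real.exp (-(x * u)) * u ^ (c - 1) * ((1 - u) ^ (a - 1) - Sb a m u) =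
      (∫ u in Ioi (0:ℝ), Real.exp (-(x * u)) * u ^ (c - 1) * (1 - u) ^ (a - 1)) -
      ∫ u in Ioi (0:ℝ), Real.exp (-(x * u)) * u ^ (c - 1) * Sb a m u := by
    rw [← integral_sub (W1_int a c x ha hc hx) (WS_int a c x hc (by linarith) m)]
    simp only [mul_sub]
  have hW := W1_int a c x ha hc hx
  have e2 : ∫ u in Ioi (0:ℝ), Real.exp (-(x * u)) * u ^ (c - 1) * (1 - u) ^ (a - 1) =
      (∫ u in (0:ℝ)..1, Real.exp (-(x * u)) * u ^ (c - 1) * (1 - u) ^ (a - 1)) +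
      ∫ u in Ioi (1:ℝ), Real.exp (-(x * u)) * u ^ (c - 1) * (1 - u) ^ (a - 1) := by
    rw [intervalIntegral.integral_of_le zero_le_one, ← setIntegral_union (Ioc_disjoint_Ioi le_rfl)
      measurableSet_Ioi (hW.mono_set Ioc_subset_Ioi_self) (hW.mono_set (Ioi_subset_Ioi zero_le_one)),
      Ioc_union_Ioi_eq_Ioi zero_le_one]
  have e3 : ∫ u in Ioi (1:ℝ), Real.exp (-(x * u)) * u ^ (c - 1) * (1 - u) ^ (a - 1) =
      -(Real.exp (-x) * (Real.cos (Real.pi * a) *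
        ∫ t in Ioi (0:ℝ), Real.exp (-(x * t)) * t ^ (a - 1) * (1 + t) ^ (c - 1))) := by
    have h := shift_Ioi
      (fun u : ℝ => Real.exp (-(x * u)) * u ^ (c - 1) * (1 - u) ^ (a - 1)) 0 1
    rw [zero_add] at h
    rw [← h, ← integral_const_mul, ← integral_const_mul, ← integral_neg]
    refine setIntegral_congr_fun measurableSet_Ioi fun t ht => ?_
    have ht' : 0 < t := ht
    rw [show 1 - (t + 1) = -t by ring, Real.rpow_def_of_neg (by linarith : -t < 0), Real.log_neg_eq_log,
      ← Real.rpow_def_of_pos ht', show (a - 1) * Real.pi = Real.pi * a - Real.pi by ring,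
      Real.cos_sub_pi, show -(x * (t + 1)) = -x + -(x * t) by ring, Real.exp_add, add_comm t 1]
    ring
  rw [e1, e2, e3, Real.exp_neg]
  have := (Real.exp_pos x).ne'
  field_simp
  ring

end KS

namespace KS
open Filter Topology MeasureTheory Set

noncomputable def kk (η v : ℝ) : ℝ := v / (v ^ 2 + η ^ 2)

noncomputable def phi (a c x r : ℝ) : ℝ :=
  ∫ t in Ioi (0:ℝ), Real.exp (-(x * t)) * (r + t) ^ (c - 1) * t ^ (a - 1)

lemma kk_re (w η r : ℝ) : ((w : ℂ) / (1 + η * Complex.I - r)).re = w * kk η (1 - r) := by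
  rw [Complex.div_re, kk]
  simp [Complex.normSq_apply]
  ring

lemma kk_meas (η : ℝ) : Measurable (kk η) := by unfold kk; fun_prop

lemma kk_cont (η : ℝ) (hη : 0 < η) : Continuous (kk η) := by
  unfold kk
  exact Continuous.div (by fun_prop) (by fun_prop) (fun v => by positivity)

lemma kk_bound (η : ℝ) (hη : 0 < η) (v : ℝ) : |kk η v| ≤ 1 / η := by
  rw [kk, abs_div, abs_of_pos (by positivity : 0 < v ^ 2 + η ^ 2), div_le_div_iff₀ (by positivity) hη]
  nlinarith [sq_nonneg (|v| - η), sq_abs v, abs_nonneg v]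

lemma Er_re (a : ℝ) (m : ℕ) (ha : 1 < a) (hm : a < m) (hn : ∀ n : ℤ, a ≠ n)
    (u : ℝ) (hu : 0 < u) (η : ℝ) (hη : 0 < η) :
    (Er a m u (1 + η * Complex.I)).re = Kc a * ∫ r, (Ioi (0:ℝ)).indicator
        (fun r => r ^ ((m:ℝ) - a) * kk η (1 - r)) r *
          (Ioi (0:ℝ)).indicator (fun t => t ^ (a - 1)) (u - r) := by
  rw [Er_eq a m ha hm hn u hu _ (by simpa using hη), Complex.re_ofReal_mul]
  congr 1
  have hne : ∀ r : ℝ, (1 + η * Complex.I - r : ℂ) ≠ 0 := by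
    intro r h
    have := congrArg Complex.im h
    simp at this
    exact hη.ne' this
  have c1 : Continuous (fun r : ℝ => r ^ ((m:ℝ) - a) * (u - r) ^ (a - 1)) :=
    (cont_rpow _ (by linarith)).mul ((cont_rpow (a - 1) (by linarith)).comp
      (continuous_const.sub continuous_id))
  have hc : Continuous (fun r : ℝ => ((r ^ ((m:ℝ) - a) * (u - r) ^ (a - 1) : ℝ) : ℂ) /
      (1 + η * Complex.I - r)) :=
    Continuous.div (Complex.continuous_ofReal.comp c1) (by fun_prop) hne
  have h := Complex.reCLM.intervalIntegral_comp_comm (hc.intervalIntegrable (μ := volume) 0 u)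
  simp only [Complex.reCLM_apply, kk_re] at h
  rw [← h, intervalIntegral.integral_of_le hu.le, integral_Ioc_eq_integral_Ioo,
    ← integral_indicator measurableSet_Ioo]
  congr 1
  ext r
  by_cases h1 : 0 < r
  · by_cases h2 : r < u
    · rw [indicator_of_mem (show r ∈ Ioo 0 u from ⟨h1, h2⟩), indicator_of_mem (show r ∈ Ioi 0 from h1),
        indicator_of_mem (show u - r ∈ Ioi 0 from sub_pos.2 h2)]
      ring
    · rw [indicator_of_notMem (show r ∉ Ioo 0 u from fun h => h2 h.2),
        indicator_of_notMem (show u - r ∉ Ioi 0 from fun h => h2 (sub_pos.1 h))]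
      ring
  · rw [indicator_of_notMem (show r ∉ Ioo 0 u from fun h => h1 h.1),
        indicator_of_notMem (show r ∉ Ioi 0 from fun h => h1 h)]
    ring

lemma G_int (e s x : ℝ) (he : 0 ≤ e) (hs : 0 ≤ s) (hx : 1 < x) :
    IntegrableOn (fun t : ℝ => Real.exp (-(x * t)) * (1 + t) ^ s * t ^ e) (Ioi 0) := by
  have := (gam_int e (x - 1) (by linarith) (by linarith)).const_mul ((1 + s) ^ s)
  refine Integrable.mono' this ?_ ?_
  · refine Continuous.aestronglyMeasurable ?_
    have c1 := cont_rpow e he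
    have c2 : Continuous (fun t : ℝ => (1 + t) ^ s) :=
      (cont_rpow s hs).comp (continuous_const.add continuous_id)
    fun_prop
  · filter_upwards [ae_restrict_mem measurableSet_Ioi] with u hu
    have hu' : 0 < u := hu
    rw [Real.norm_eq_abs, abs_of_pos (by positivity)]
    have h2 : Real.exp (-((x - 1) * u)) = Real.exp (-(x * u)) * Real.exp u := by
      rw [← Real.exp_add]; congr 1; ring
    have h3 := pow_le_exp s u hs hu'.le
    rw [h2]
    calc _ ≤ Real.exp (-(x * u)) * ((1 + s) ^ s * Real.exp u) * u ^ e := by gcongr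
      _ = _ := by ring

lemma fubini (a c x : ℝ) (m : ℕ) (ha : 1 < a) (hc : 1 < c) (hm : a < m) (hn : ∀ n : ℤ, a ≠ n)
    (hx : 1 < x) (η : ℝ) (hη : 0 < η) :
    ∫ u in Ioi (0:ℝ), Real.exp (-(x * u)) * u ^ (c - 1) * (Er a m u (1 + η * Complex.I)).re =
      Kc a * ∫ r in Ioi (0:ℝ), r ^ ((m:ℝ) - a) * Real.exp (-(x * r)) * phi a c x r * kk η (1 - r) := by
  set R : ℝ → ℝ := (Ioi (0:ℝ)).indicator (fun r => r ^ ((m:ℝ) - a) * kk η (1 - r)) with hR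
  set P : ℝ → ℝ := (Ioi (0:ℝ)).indicator (fun t => t ^ (a - 1)) with hP
  set W : ℝ → ℝ := fun u => Real.exp (-(x * u)) * u ^ (c - 1) with hW
  have hRm : Measurable R := by
    refine Measurable.indicator ?_ measurableSet_Ioi
    exact (measurable_id.pow_const _).mul ((kk_meas η).comp (measurable_const.sub measurable_id))
  have hPm : Measurable P := (measurable_id.pow_const _).indicator measurableSet_Ioi
  have hWm : Measurable W := by
    have : Measurable (fun u : ℝ => u ^ (c - 1)) := measurable_id.pow_const _
    have h3 : Measurable (fun u : ℝ => Real.exp (-(x * u))) := by fun_prop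
    exact h3.mul this
  -- dominating functions
  set G1 : ℝ → ℝ := (Ioi (0:ℝ)).indicator
    (fun r => 1 / η * (Real.exp (-(x * r)) * (1 + r) ^ (c - 1) * r ^ ((m:ℝ) - a))) with hG1
  set G2 : ℝ → ℝ := (Ioi (0:ℝ)).indicator
    (fun r => Real.exp (-(x * r)) * (1 + r) ^ (c - 1) * r ^ (a - 1)) with hG2
  have hG1i : Integrable G1 :=
    IntegrableOn.integrable_indicator
      ((G_int ((m:ℝ) - a) (c - 1) x (by linarith) (by linarith) hx).const_mul _) measurableSet_Ioi
  have hG2i : Integrable G2 :=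
    IntegrableOn.integrable_indicator
      (G_int (a - 1) (c - 1) x (by linarith) (by linarith) hx) measurableSet_Ioi
  have hGi := hG1i.convolution_integrand (ContinuousLinearMap.mul ℝ ℝ) hG2i
  have hF : Integrable (fun p : ℝ × ℝ => W p.1 * (R p.2 * P (p.1 - p.2))) (volume.prod volume) := by
    refine Integrable.mono' hGi ?_ ?_
    · exact (Measurable.mul (hWm.comp measurable_fst) ((hRm.comp measurable_snd).mul
        (hPm.comp (measurable_fst.sub measurable_snd)))).aestronglyMeasurable
    · refine Eventually.of_forall fun p => ?_
      obtain ⟨u, r⟩ := p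
      simp only [ContinuousLinearMap.mul_apply']
      by_cases h1 : 0 < r
      · by_cases h2 : r < u
        · obtain ⟨t, rfl⟩ : ∃ t, u = r + t := ⟨u - r, by ring⟩
          have ht : 0 < t := by linarith
          rw [add_sub_cancel_left, hR, hP, hG1, hG2, indicator_of_mem (show r ∈ Ioi 0 from h1),
            indicator_of_mem (show t ∈ Ioi 0 from ht), indicator_of_mem (show r ∈ Ioi 0 from h1),
            indicator_of_mem (show t ∈ Ioi 0 from ht)]
          have hk := kk_bound η hη (1 - r)
          have hpw : (r + t) ^ (c - 1) ≤ (1 + r) ^ (c - 1) * (1 + t) ^ (c - 1) := by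
            rw [← Real.mul_rpow (by positivity) (by positivity)]
            refine Real.rpow_le_rpow (by positivity) ?_ (by linarith)
            nlinarith
          have he : Real.exp (-(x * (r + t))) = Real.exp (-(x * r)) * Real.exp (-(x * t)) := by
            rw [← Real.exp_add]; congr 1; ring
          simp only [hW]
          rw [Real.norm_eq_abs, abs_mul, abs_mul, abs_mul, abs_mul, he,
            abs_of_pos (by positivity : 0 < Real.exp (-(x * r)) * Real.exp (-(x * t))),
            abs_of_pos (by positivity : 0 < (r + t) ^ (c - 1)),
            abs_of_pos (by positivity : 0 < r ^ ((m:ℝ) - a)),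
            abs_of_pos (by positivity : 0 < t ^ (a - 1))]
          calc _ ≤ Real.exp (-(x * r)) * Real.exp (-(x * t)) * ((1 + r) ^ (c - 1) * (1 + t) ^ (c - 1)) *
                (r ^ ((m:ℝ) - a) * (1 / η) * t ^ (a - 1)) := by gcongr
            _ = _ := by ring
        · rw [hP, hG2, indicator_of_notMem (show u - r ∉ Ioi 0 from fun h => h2 (sub_pos.1 h)),
            indicator_of_notMem (show u - r ∉ Ioi 0 from fun h => h2 (sub_pos.1 h))]
          simp
      · rw [hR, hG1, indicator_of_notMem (show r ∉ Ioi 0 from fun h => h1 h),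
            indicator_of_notMem (show r ∉ Ioi 0 from fun h => h1 h)]
        simp
  have e1 : ∫ u in Ioi (0:ℝ), Real.exp (-(x * u)) * u ^ (c - 1) * (Er a m u (1 + η * Complex.I)).re =
      Kc a * ∫ u, ∫ r, W u * (R r * P (u - r)) := by
    rw [← integral_const_mul, ← integral_indicator measurableSet_Ioi]
    congr 1
    ext u
    by_cases hu : 0 < u
    · rw [indicator_of_mem (show u ∈ Ioi 0 from hu), Er_re a m ha hm hn u hu η hη, integral_const_mul]
      simp only [hW, hR, hP]
      ring
    · rw [indicator_of_notMem (show u ∉ Ioi 0 from fun h => hu h)]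
      have : ∀ r, W u * (R r * P (u - r)) = 0 := by
        intro r
        by_cases h1 : 0 < r
        · rw [hP, indicator_of_notMem (show u - r ∉ Ioi 0 from fun h => hu (by
            have : 0 < u - r := h
            linarith))]
          ring
        · rw [hR, indicator_of_notMem (show r ∉ Ioi 0 from fun h => h1 h)]
          ring
      simp [this]
  rw [e1, integral_integral_swap hF]
  congr 1
  rw [← integral_indicator measurableSet_Ioi]
  congr 1
  ext r
  by_cases h1 : 0 < r
  · rw [indicator_of_mem (show r ∈ Ioi 0 from h1)]
    have e2 : ∀ u, W u * (R r * P (u - r)) = R r * (W u * P (u - r)) := fun u => by ring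
    simp only [e2]
    rw [integral_const_mul, hR, indicator_of_mem (show r ∈ Ioi 0 from h1)]
    have e3 : ∫ u, W u * P (u - r) = Real.exp (-(x * r)) * phi a c x r := by
      rw [← integral_add_right_eq_self _ r, phi, ← integral_const_mul,
        ← integral_indicator measurableSet_Ioi]
      congr 1
      ext t
      rw [add_sub_cancel_right, hP]
      by_cases ht : 0 < t
      · rw [indicator_of_mem (show t ∈ Ioi 0 from ht), indicator_of_mem (show t ∈ Ioi 0 from ht), hW]
        simp only
        rw [show -(x * (t + r)) = -(x * r) + -(x * t) by ring, Real.exp_add, add_comm t r]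
        ring
      · rw [indicator_of_notMem (show t ∉ Ioi 0 from fun h => ht h),
          indicator_of_notMem (show t ∉ Ioi 0 from fun h => ht h)]
        ring
    rw [e3]; ring
  · rw [indicator_of_notMem (show r ∉ Ioi 0 from fun h => h1 h), hR,
      indicator_of_notMem (show r ∉ Ioi 0 from fun h => h1 h)]
    simp

end KS

namespace KS
open Filter Topology MeasureTheory Set

lemma N_bound (a c : ℝ) (ha : 2 < a) (hc : 2 < c) : ∃ L, 0 < L ∧ ∀ x ≥ 2,
    ∫ t in Ioi (0:ℝ), Real.exp (-(x * t)) * (1 + t) ^ (c - 1) * t ^ (a - 1) ≤ L * x ^ (-a) := by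
  have hc0 : 0 < 1 + (c - 1) := by linarith
  have hG := Real.Gamma_pos_of_pos (by linarith : 0 < a)
  refine ⟨(1 + (c - 1)) ^ (c - 1) * (2 ^ a * Real.Gamma a), by positivity, fun x hx => ?_⟩
  have h1 : ∫ t in Ioi (0:ℝ), Real.exp (-(x * t)) * (1 + t) ^ (c - 1) * t ^ (a - 1) ≤
      ∫ t in Ioi (0:ℝ), (1 + (c - 1)) ^ (c - 1) * (Real.exp (-((x - 1) * t)) * t ^ (a - 1)) := by
    refine setIntegral_mono_on (G_int _ _ _ (by linarith) (by linarith) (by linarith))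
      ((gam_int _ _ (by linarith) (by linarith)).const_mul _) measurableSet_Ioi fun t ht => ?_
    have ht' : 0 < t := ht
    have h2 : Real.exp (-((x - 1) * t)) = Real.exp (-(x * t)) * Real.exp t := by
      rw [← Real.exp_add]; congr 1; ring
    have h3 := pow_le_exp (c - 1) t (by linarith) ht'.le
    rw [h2]
    calc _ ≤ Real.exp (-(x * t)) * ((1 + (c - 1)) ^ (c - 1) * Real.exp t) * t ^ (a - 1) := by gcongr
      _ = _ := by ring
  rw [integral_const_mul, gam_val a (x - 1) (by linarith) (by linarith)] at h1
  refine h1.trans ?_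
  have h4 : (x - 1) ^ (-a) ≤ 2 ^ a * x ^ (-a) := by
    have : (x - 1) ^ (-a) ≤ (x / 2) ^ (-a) :=
      Real.rpow_le_rpow_of_nonpos (by linarith) (by linarith) (by linarith)
    refine this.trans (le_of_eq ?_)
    rw [Real.div_rpow (by linarith) (by norm_num), Real.rpow_neg (by norm_num : (0:ℝ) ≤ 2)]
    field_simp
  calc _ ≤ (1 + (c - 1)) ^ (c - 1) * (2 ^ a * x ^ (-a) * Real.Gamma a) := by gcongr
    _ = _ := by ring

lemma rpow_sub_le (s y z : ℝ) (hs : 1 ≤ s) (hz : 0 ≤ z) (hy : z ≤ y) (hy0 : 0 < y) :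
    y ^ s - z ^ s ≤ s * y ^ (s - 1) * (y - z) := by
  have h := one_add_mul_self_le_rpow_one_add (s := z / y - 1) (p := s)
    (by have : 0 ≤ z / y := by positivity
        linarith) hs
  rw [add_sub_cancel, Real.div_rpow hz hy0.le, le_div_iff₀ (by positivity)] at h
  have e : y ^ s = y ^ (s - 1) * y := by
    rw [← Real.rpow_add_one hy0.ne']; congr 1; ring
  have e2 : (1 + s * (z / y - 1)) * y ^ s = y ^ s + s * y ^ (s - 1) * (z - y) := by
    rw [e]; field_simp
  rw [e2] at h
  linarith

lemma phi_pt (c t r : ℝ) (hc : 2 < c) (ht : 0 < t) (hr : 0 ≤ r) :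
    (r + t) ^ (c - 1) ≤ (1 + r) ^ (c - 1) * (1 + t) ^ (c - 1) := by
  rw [← Real.mul_rpow (by positivity) (by positivity)]
  exact Real.rpow_le_rpow (by positivity) (by nlinarith) (by linarith)

lemma phi_int (a c x r : ℝ) (ha : 2 < a) (hc : 2 < c) (hx : 1 < x) (hr : 0 ≤ r) :
    IntegrableOn (fun t : ℝ => Real.exp (-(x * t)) * (r + t) ^ (c - 1) * t ^ (a - 1)) (Ioi 0) := by
  have := (G_int (a - 1) (c - 1) x (by linarith) (by linarith) hx).const_mul ((1 + r) ^ (c - 1))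
  refine Integrable.mono' this ?_ ?_
  · refine Continuous.aestronglyMeasurable ?_
    have c1 := cont_rpow (a - 1) (by linarith)
    have c2 : Continuous (fun t : ℝ => (r + t) ^ (c - 1)) :=
      (cont_rpow (c - 1) (by linarith)).comp (continuous_const.add continuous_id)
    fun_prop
  · filter_upwards [ae_restrict_mem measurableSet_Ioi] with u hu
    have hu' : 0 < u := hu
    rw [Real.norm_eq_abs, abs_of_pos (by positivity)]
    have h3 := phi_pt c u r hc hu' hr
    calc _ ≤ Real.exp (-(x * u)) * ((1 + r) ^ (c - 1) * (1 + u) ^ (c - 1)) * u ^ (a - 1) := by gcongr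
      _ = _ := by ring

lemma phi_nonneg (a c x r : ℝ) (hr : 0 ≤ r) : 0 ≤ phi a c x r := by
  refine setIntegral_nonneg measurableSet_Ioi fun t ht => ?_
  have ht' : 0 < t := ht
  positivity

lemma phi_facts (a c : ℝ) (ha : 2 < a) (hc : 2 < c) : ∃ L, 0 < L ∧ ∀ x ≥ 2,
    (∀ r ≥ 0, phi a c x r ≤ L * x ^ (-a) * (1 + r) ^ (c - 1)) ∧
    (∀ v ∈ Icc (0:ℝ) 1, |phi a c x (1 - v) - phi a c x (1 + v)| ≤ L * x ^ (-a) * v) := by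
  obtain ⟨L, hL, H⟩ := N_bound a c ha hc
  have hc1 : 0 < c - 1 := by linarith
  refine ⟨max L (2 * (c - 1) * 2 ^ (c - 2) * L), lt_max_of_lt_left hL, fun x hx => ⟨fun r hr => ?_, fun v hv => ?_⟩⟩
  · have h1 : phi a c x r ≤ (1 + r) ^ (c - 1) *
        ∫ t in Ioi (0:ℝ), Real.exp (-(x * t)) * (1 + t) ^ (c - 1) * t ^ (a - 1) := by
      rw [← integral_const_mul]
      refine setIntegral_mono_on (phi_int a c x r ha hc (by linarith) hr)
        ((G_int _ _ _ (by linarith) (by linarith) (by linarith)).const_mul _) measurableSet_Ioi fun t ht => ?_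
      have ht' : 0 < t := ht
      have h3 := phi_pt c t r hc ht' hr
      calc _ ≤ Real.exp (-(x * t)) * ((1 + r) ^ (c - 1) * (1 + t) ^ (c - 1)) * t ^ (a - 1) := by gcongr
        _ = _ := by ring
    refine h1.trans ?_
    have := H x hx
    have hp : 0 ≤ x ^ (-a) := by positivity
    calc _ ≤ (1 + r) ^ (c - 1) * (L * x ^ (-a)) := by gcongr
      _ = L * x ^ (-a) * (1 + r) ^ (c - 1) := by ring
      _ ≤ _ := by gcongr; exact le_max_left _ _
  · have i1 := phi_int a c x (1 - v) ha hc (by linarith) (by linarith [hv.2])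
    have i2 := phi_int a c x (1 + v) ha hc (by linarith) (by linarith [hv.1])
    have hv0 := hv.1
    rw [abs_sub_comm, phi, phi, ← integral_sub i2 i1]
    have hpt : ∀ t ∈ Ioi (0:ℝ), ‖Real.exp (-(x * t)) * (1 + v + t) ^ (c - 1) * t ^ (a - 1) -
        Real.exp (-(x * t)) * (1 - v + t) ^ (c - 1) * t ^ (a - 1)‖ ≤
        (2 * (c - 1) * 2 ^ (c - 2) * v) * (Real.exp (-(x * t)) * (1 + t) ^ (c - 1) * t ^ (a - 1)) := by
      intro t ht
      have ht' : 0 < t := ht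
      have g0 : (1 - v + t) ^ (c - 1) ≤ (1 + v + t) ^ (c - 1) :=
        Real.rpow_le_rpow (by linarith [hv.2]) (by linarith) hc1.le
      have g1 := rpow_sub_le (c - 1) (1 + v + t) (1 - v + t) (by linarith) (by linarith [hv.2])
        (by linarith) (by linarith)
      have g2 : (1 + v + t) ^ (c - 1 - 1) ≤ 2 ^ (c - 2) * (1 + t) ^ (c - 1) := by
        calc (1 + v + t) ^ (c - 1 - 1) ≤ (2 * (1 + t)) ^ (c - 2) := by
              rw [show c - 1 - 1 = c - 2 by ring]
              exact Real.rpow_le_rpow (by linarith) (by linarith [hv.2]) (by linarith)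
          _ = 2 ^ (c - 2) * (1 + t) ^ (c - 2) := Real.mul_rpow (by norm_num) (by linarith)
          _ ≤ _ := by
              gcongr
              · linarith
              · linarith
      rw [show Real.exp (-(x * t)) * (1 + v + t) ^ (c - 1) * t ^ (a - 1) -
        Real.exp (-(x * t)) * (1 - v + t) ^ (c - 1) * t ^ (a - 1) = Real.exp (-(x * t)) *
          ((1 + v + t) ^ (c - 1) - (1 - v + t) ^ (c - 1)) * t ^ (a - 1) by ring,
        Real.norm_eq_abs, abs_of_nonneg (by
          have := sub_nonneg.2 g0
          positivity)]
      calc _ ≤ Real.exp (-(x * t)) * ((c - 1) * (2 ^ (c - 2) * (1 + t) ^ (c - 1)) *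
            (1 + v + t - (1 - v + t))) * t ^ (a - 1) := by
            gcongr
            refine g1.trans ?_
            have : 0 ≤ 1 + v + t - (1 - v + t) := by linarith
            gcongr
        _ = _ := by ring
    have h2 := norm_integral_le_of_norm_le
      ((G_int (a - 1) (c - 1) x (by linarith) (by linarith) (by linarith)).const_mul
        (2 * (c - 1) * 2 ^ (c - 2) * v))
      ((ae_restrict_mem measurableSet_Ioi).mono fun t ht => hpt t ht)
    rw [integral_const_mul, Real.norm_eq_abs] at h2
    refine h2.trans ?_
    have := H x hx
    calc _ ≤ 2 * (c - 1) * 2 ^ (c - 2) * v * (L * x ^ (-a)) := by gcongr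
      _ = (2 * (c - 1) * 2 ^ (c - 2) * L) * x ^ (-a) * v := by ring
      _ ≤ _ := by
        have hp : 0 ≤ x ^ (-a) := by positivity
        gcongr; exact le_max_right _ _

lemma phi_meas (a c x : ℝ) : Measurable (phi a c x) := by
  unfold phi
  refine StronglyMeasurable.measurable ?_
  refine StronglyMeasurable.integral_prod_right
    (f := fun (r t : ℝ) => Real.exp (-(x * t)) * (r + t) ^ (c - 1) * t ^ (a - 1)) ?_
  refine Measurable.stronglyMeasurable ?_
  have h1 : Measurable (fun p : ℝ × ℝ => (p.1 + p.2) ^ (c - 1)) :=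
    (measurable_fst.add measurable_snd).pow_const _
  have h2 : Measurable (fun p : ℝ × ℝ => p.2 ^ (a - 1)) := measurable_snd.pow_const _
  have h3 : Measurable (fun p : ℝ × ℝ => Real.exp (-(x * p.2))) := by fun_prop
  exact (h3.mul h1).mul h2

/-- leading term -/
lemma lead_bound (a c : ℝ) (ha : 2 < a) (hc : 2 < c) : ∃ L, 0 < L ∧ ∀ x ≥ 2,
    |(∫ t in Ioi (0:ℝ), Real.exp (-(x * t)) * t ^ (a - 1) * (1 + t) ^ (c - 1)) -
      x ^ (-a) * Real.Gamma a| ≤ L * x ^ (-a - 1 / 2) := by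
  obtain ⟨L, hL, H⟩ := N_bound (a + 1) c (by linarith) hc
  have hc1 : 0 < c - 1 := by linarith
  refine ⟨(c - 1) * L, by positivity, fun x hx => ?_⟩
  rw [← gam_val a x (by linarith) (by linarith), ← integral_sub]
  · have hpt : ∀ t ∈ Ioi (0:ℝ), ‖Real.exp (-(x * t)) * t ^ (a - 1) * (1 + t) ^ (c - 1) -
        Real.exp (-(x * t)) * t ^ (a - 1)‖ ≤
        (c - 1) * (Real.exp (-(x * t)) * (1 + t) ^ (c - 1) * t ^ (a + 1 - 1)) := by
      intro t ht
      have ht' : 0 < t := ht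
      have g1 := rpow_sub_le (c - 1) (1 + t) 1 (by linarith) (by linarith) (by linarith) (by linarith)
      rw [Real.one_rpow] at g1
      have g0 : 1 ≤ (1 + t) ^ (c - 1) := Real.one_le_rpow (by linarith) hc1.le
      have g2 : (1 + t) ^ (c - 1 - 1) ≤ (1 + t) ^ (c - 1) := by
        gcongr
        · linarith
        · linarith
      have e : t ^ (a + 1 - 1) = t ^ (a - 1) * t := by
        rw [← Real.rpow_add_one ht'.ne']; congr 1; ring
      rw [show Real.exp (-(x * t)) * t ^ (a - 1) * (1 + t) ^ (c - 1) -
        Real.exp (-(x * t)) * t ^ (a - 1) = Real.exp (-(x * t)) * t ^ (a - 1) * ((1 + t) ^ (c - 1) - 1) by ring,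
        Real.norm_eq_abs, abs_of_nonneg (by
          have := sub_nonneg.2 g0
          positivity), e]
      calc _ ≤ Real.exp (-(x * t)) * t ^ (a - 1) * ((c - 1) * (1 + t) ^ (c - 1) * (1 + t - 1)) := by
            gcongr
            refine g1.trans ?_
            have : 0 ≤ 1 + t - 1 := by linarith
            gcongr
        _ = _ := by ring
    have h2 := norm_integral_le_of_norm_le
      ((G_int (a + 1 - 1) (c - 1) x (by linarith) (by linarith) (by linarith)).const_mul (c - 1))
      ((ae_restrict_mem measurableSet_Ioi).mono fun t ht => hpt t ht)
    rw [integral_const_mul, Real.norm_eq_abs] at h2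
    refine h2.trans ?_
    have := H x hx
    have h5 : x ^ (-(a + 1)) ≤ x ^ (-a - 1 / 2) :=
      Real.rpow_le_rpow_of_exponent_le (by linarith) (by linarith)
    calc _ ≤ (c - 1) * (L * x ^ (-(a + 1))) := by gcongr
      _ ≤ (c - 1) * (L * x ^ (-a - 1 / 2)) := by gcongr
      _ = _ := by ring
  · refine IntegrableOn.congr_fun (G_int (a - 1) (c - 1) x (by linarith) (by linarith) (by linarith))
      (fun t _ => ?_) measurableSet_Ioi
    ring
  · exact gam_int _ _ (by linarith) (by linarith)

end KS

namespace KS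
open Filter Topology MeasureTheory Set

noncomputable def ww (n x r : ℝ) : ℝ := r ^ n * Real.exp (x * (1 - r))

lemma ww_eq (n x r : ℝ) (hr : 0 < r) : ww n x r = Real.exp (n * Real.log r + x * (1 - r)) := by
  rw [ww, Real.rpow_def_of_pos hr, ← Real.exp_add, mul_comm n]

lemma log_one_sub (v : ℝ) (h0 : 0 ≤ v) (h1 : v < 1) : Real.log (1 - v) ≤ -v - v ^ 2 / 2 := by
  have h := Real.hasSum_pow_div_log_of_abs_lt_one (x := v) (by rw [abs_of_nonneg h0]; exact h1)
  have := sum_le_hasSum (Finset.range 2) (fun i _ => by positivity) h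
  norm_num [Finset.sum_range_succ] at this
  linarith

lemma log_one_add (v : ℝ) (h0 : 0 ≤ v) (h1 : v ≤ 1) : Real.log (1 + v) ≤ v - v ^ 2 / 6 := by
  rw [Real.log_le_iff_le_exp (by linarith)]
  have := Real.quadratic_le_exp_of_nonneg (x := v - v ^ 2 / 6) (by nlinarith)
  have h2 : v ^ 2 / 3 ≤ (v - v ^ 2 / 6) ^ 2 := by
    have : (v - v ^ 2 / 6) ^ 2 = v ^ 2 * (1 - v / 6) ^ 2 := by ring
    rw [this]
    nlinarith [sq_nonneg v, mul_nonneg (sq_nonneg v) (by nlinarith : 0 ≤ (1 - v / 6) ^ 2 - 1 / 3)]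
  linarith

lemma log_diff (v : ℝ) (h0 : 0 ≤ v) (h1 : v ≤ 1 / 2) :
    |Real.log (1 + v) - Real.log (1 - v) - 2 * v| ≤ 4 * v ^ 3 := by
  have ha := Real.abs_log_sub_add_sum_range_le (x := v) (by rw [abs_of_nonneg h0]; linarith) 2
  have hb := Real.abs_log_sub_add_sum_range_le (x := -v) (by rw [abs_neg, abs_of_nonneg h0]; linarith) 2
  norm_num [Finset.sum_range_succ] at ha hb
  rw [abs_of_nonneg h0] at ha hb
  have h3 : v ^ 3 / (1 - v) ≤ 2 * v ^ 3 := by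
    rw [div_le_iff₀ (by linarith)]
    have : 0 ≤ v ^ 3 := by positivity
    nlinarith
  have ha' := ha.trans h3
  have hb' := hb.trans h3
  rw [abs_le] at *
  constructor <;> linarith [ha'.1, ha'.2, hb'.1, hb'.2]

lemma ww_minus (C n x v : ℝ) (hC : 0 ≤ C) (hx : C ≤ x) (hn : |n - x| ≤ C) (h0 : 0 ≤ v) (h1 : v < 1) :
    ww n x (1 - v) ≤ Real.exp (2 * C) * Real.exp (-(x * v ^ 2 / 6)) := by
  rw [ww_eq n x _ (by linarith), ← Real.exp_add]
  refine Real.exp_le_exp.2 ?_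
  rw [abs_le] at hn
  have hl := log_one_sub v h0 h1
  have hl0 : Real.log (1 - v) ≤ 0 := by nlinarith
  have g1 : n * Real.log (1 - v) ≤ (x - C) * Real.log (1 - v) :=
    mul_le_mul_of_nonpos_right (by linarith) hl0
  have g2 : (x - C) * Real.log (1 - v) ≤ (x - C) * (-v - v ^ 2 / 2) :=
    mul_le_mul_of_nonneg_left hl (by linarith)
  have g3 : C * v ≤ C := by nlinarith
  have g4 : C * v ^ 2 ≤ C := by
    have : v ^ 2 ≤ 1 := by nlinarith
    nlinarith
  have g5 : 0 ≤ x * v ^ 2 := mul_nonneg (by linarith) (sq_nonneg _)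
  nlinarith

lemma ww_plus (C n x v : ℝ) (hC : 0 ≤ C) (hx : C ≤ x) (hn : |n - x| ≤ C) (h0 : 0 ≤ v) (h1 : v ≤ 1) :
    ww n x (1 + v) ≤ Real.exp (2 * C) * Real.exp (-(x * v ^ 2 / 6)) := by
  rw [ww_eq n x _ (by linarith), ← Real.exp_add]
  refine Real.exp_le_exp.2 ?_
  rw [abs_le] at hn
  have hl := log_one_add v h0 h1
  have hl0 : 0 ≤ Real.log (1 + v) := Real.log_nonneg (by linarith)
  have g1 : n * Real.log (1 + v) ≤ (x + C) * Real.log (1 + v) :=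
    mul_le_mul_of_nonneg_right (by linarith) hl0
  have g2 : (x + C) * Real.log (1 + v) ≤ (x + C) * (v - v ^ 2 / 6) :=
    mul_le_mul_of_nonneg_left hl (by linarith)
  have g3 : C * v ≤ C := by nlinarith
  have g4 : 0 ≤ C * v ^ 2 := by positivity
  nlinarith

lemma exp_diff (A B M : ℝ) (hA : Real.exp A ≤ M) (hB : Real.exp B ≤ M) :
    |Real.exp A - Real.exp B| ≤ |A - B| * M := by
  wlog h : B ≤ A generalizing A B with H
  · rw [abs_sub_comm, abs_sub_comm A B]; exact H B A hB hA (by linarith)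
  rw [abs_of_nonneg (sub_nonneg.2 (Real.exp_le_exp.2 h)), abs_of_nonneg (sub_nonneg.2 h)]
  have h1 := Real.add_one_le_exp (B - A)
  have h2 : Real.exp B = Real.exp A * Real.exp (B - A) := by rw [← Real.exp_add]; congr 1; ring
  have h3 := Real.exp_pos A
  calc Real.exp A - Real.exp B ≤ (A - B) * Real.exp A := by rw [h2]; nlinarith
    _ ≤ _ := by
      have := sub_nonneg.2 h
      gcongr

lemma ww_diff (C n x v : ℝ) (hC : 0 ≤ C) (hx : C ≤ x) (hx0 : 0 < x) (hn : |n - x| ≤ C) (h0 : 0 ≤ v) (h1 : v < 1) :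
    |ww n x (1 - v) - ww n x (1 + v)| ≤
      (2 * C + 100) * Real.exp (2 * C) * v * Real.exp (-(x * v ^ 2 / 12)) := by
  have hm := ww_minus C n x v hC hx hn h0 h1
  have hp := ww_plus C n x v hC hx hn h0 h1.le
  set M := Real.exp (2 * C) * Real.exp (-(x * v ^ 2 / 6)) with hM
  have hM0 : 0 < M := by positivity
  have key : |ww n x (1 - v) - ww n x (1 + v)| ≤ (2 * C + 4 + 8 * (x * v ^ 2)) * v * M := by
    rcases le_total v (1 / 2) with h | h
    · rw [ww_eq n x _ (by linarith)] at hm ⊢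
      rw [ww_eq n x (1 + v) (by linarith)] at hp ⊢
      refine (exp_diff _ _ M hm hp).trans ?_
      gcongr
      have hl := log_diff v h0 h
      set ε := Real.log (1 + v) - Real.log (1 - v) - 2 * v with hε
      have e : n * Real.log (1 - v) + x * (1 - (1 - v)) - (n * Real.log (1 + v) + x * (1 - (1 + v))) =
          -(2 * (n - x) * v) - n * ε := by rw [hε]; ring
      rw [e]
      have hn' : |n| ≤ 2 * x := by rw [abs_le] at *; constructor <;> linarith
      calc _ ≤ |-(2 * (n - x) * v)| + |n * ε| := abs_sub _ _
        _ = 2 * |n - x| * v + |n| * |ε| := by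
          rw [abs_neg, abs_mul, abs_mul, abs_mul, abs_of_nonneg h0]; norm_num
        _ ≤ 2 * C * v + 2 * x * (4 * v ^ 3) := by gcongr
        _ ≤ _ := by nlinarith
    · have w1 : 0 ≤ ww n x (1 - v) := by rw [ww_eq n x _ (by linarith)]; positivity
      have w2 : 0 ≤ ww n x (1 + v) := by rw [ww_eq n x _ (by linarith)]; positivity
      have : |ww n x (1 - v) - ww n x (1 + v)| ≤ M := by
        rw [abs_le]; constructor <;> linarith
      refine this.trans ?_
      have : 1 ≤ (2 * C + 4 + 8 * (x * v ^ 2)) * v := by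
        have : 0 ≤ x * v ^ 2 := by positivity
        nlinarith
      nlinarith
  refine key.trans ?_
  have hy := Real.add_one_le_exp (x * v ^ 2 / 12)
  have he : Real.exp (-(x * v ^ 2 / 6)) * Real.exp (x * v ^ 2 / 12) = Real.exp (-(x * v ^ 2 / 12)) := by
    rw [← Real.exp_add]; congr 1; ring
  have hb : 2 * C + 4 + 8 * (x * v ^ 2) ≤ (2 * C + 100) * Real.exp (x * v ^ 2 / 12) := by
    have : 0 ≤ x * v ^ 2 := by positivity
    nlinarith
  calc _ ≤ ((2 * C + 100) * Real.exp (x * v ^ 2 / 12)) * v * M := by gcongr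
    _ = (2 * C + 100) * Real.exp (2 * C) * v * (Real.exp (-(x * v ^ 2 / 6)) * Real.exp (x * v ^ 2 / 12)) := by
      rw [hM]; ring
    _ = _ := by rw [he]

lemma ww_tail (C n x r : ℝ) (hC : 0 ≤ C) (hx0 : 0 < x) (hn : |n - x| ≤ C) (hr : 2 ≤ r) :
    ww n x r ≤ r ^ C * Real.exp (-(0.15 * x * r)) := by
  rw [ww_eq n x _ (by linarith), Real.rpow_def_of_pos (by linarith), ← Real.exp_add]
  refine Real.exp_le_exp.2 ?_
  rw [abs_le] at hn
  have hl0 : 0 ≤ Real.log r := Real.log_nonneg (by linarith)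
  have hl : Real.log r ≤ r / 2 - 0.3 := by
    have h1 : Real.log r = Real.log 2 + Real.log (r / 2) := by
      rw [← Real.log_mul (by norm_num) (by linarith)]; congr 1; ring
    have h2 := Real.log_le_sub_one_of_pos (by linarith : 0 < r / 2)
    have h3 := Real.log_two_lt_d9
    rw [h1]; norm_num at h3 ⊢; linarith
  have g1 : n * Real.log r ≤ (x + C) * Real.log r := mul_le_mul_of_nonneg_right (by linarith) hl0
  have g2 : x * Real.log r ≤ x * (r / 2 - 0.3) := mul_le_mul_of_nonneg_left hl hx0.le
  norm_num at g2 ⊢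
  nlinarith

lemma kk_le (η v : ℝ) (hv : 0 < |v|) : |kk η v| ≤ 1 / |v| := by
  have hv' : v ≠ 0 := abs_pos.1 hv
  have : 0 < v ^ 2 := by positivity
  rw [kk, abs_div, abs_of_pos (by positivity : 0 < v ^ 2 + η ^ 2), div_le_div_iff₀ (by positivity) hv]
  nlinarith [sq_abs v, sq_nonneg η]

lemma kk_neg (η v : ℝ) : kk η (-v) = -kk η v := by
  rw [kk, kk, neg_sq, neg_div]

lemma sym_split (G : ℝ → ℝ) (η : ℝ) (hG : IntegrableOn (fun r => G r * kk η (1 - r)) (Ioi 0)) :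
    ∫ r in Ioi (0:ℝ), G r * kk η (1 - r) =
      (∫ v in (0:ℝ)..1, (G (1 - v) - G (1 + v)) * kk η v) + ∫ r in Ioi (2:ℝ), G r * kk η (1 - r) := by
  have hii : ∀ a b : ℝ, 0 ≤ a → 0 ≤ b → IntervalIntegrable (fun r => G r * kk η (1 - r)) volume a b := by
    intro a b ha hb
    rw [intervalIntegrable_iff]
    exact hG.mono_set fun r hr => lt_of_le_of_lt (le_min ha hb) hr.1
  have h1 : ∫ r in Ioi (0:ℝ), G r * kk η (1 - r) =
      (∫ r in (0:ℝ)..2, G r * kk η (1 - r)) + ∫ r in Ioi (2:ℝ), G r * kk η (1 - r) := by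
    rw [intervalIntegral.integral_of_le (by norm_num), ← setIntegral_union (Ioc_disjoint_Ioi le_rfl)
      measurableSet_Ioi (hG.mono_set Ioc_subset_Ioi_self) (hG.mono_set (Ioi_subset_Ioi (by norm_num))),
      Ioc_union_Ioi_eq_Ioi (by norm_num)]
  have h2 := intervalIntegral.integral_add_adjacent_intervals
    (hii 0 1 le_rfl zero_le_one) (hii 1 2 zero_le_one (by norm_num))
  have h3 := intervalIntegral.integral_comp_sub_left (a := 0) (b := 1)
    (fun r => G r * kk η (1 - r)) 1
  have h4 := intervalIntegral.integral_comp_add_left (a := 0) (b := 1)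
    (fun r => G r * kk η (1 - r)) 1
  norm_num at h3 h4
  have i3 : IntervalIntegrable (fun v => G (1 - v) * kk η v) volume 0 1 := by
    have := ((hii 0 1 le_rfl zero_le_one).comp_sub_left 1).symm
    simpa using this
  have i4 : IntervalIntegrable (fun v => G (1 + v) * kk η (-v)) volume 0 1 := by
    have := ((hii 1 2 zero_le_one (by norm_num)).comp_add_left 1)
    norm_num at this
    exact this
  rw [h1, ← h2, ← h3, ← h4, ← intervalIntegral.integral_add i3 i4]
  congr 1
  refine intervalIntegral.integral_congr fun v _ => ?_
  simp only [kk_neg]; ring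

end KS

namespace KS
open Filter Topology MeasureTheory Set

lemma main_bound (a c C : ℝ) (ha : 2 < a) (hc : 2 < c) (hC : 0 ≤ C) : ∃ K, 0 ≤ K ∧
    ∀ x ≥ max 20 (C + 1), ∀ n, |n - x| ≤ C → ∀ η > 0,
      |∫ r in Ioi (0:ℝ), (ww n x r * phi a c x r) * kk η (1 - r)| ≤ K * x ^ (-a - 1 / 2) := by
  obtain ⟨L, hL, HL⟩ := phi_facts a c ha hc
  set s := C + (c - 1) with hs
  have hs0 : 0 ≤ s := by linarith
  set M1 := (2 * C + 100) * Real.exp (2 * C) * (L * 2 ^ (c - 1)) + Real.exp (2 * C) * L with hM1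
  set M2 := (1 + s) ^ s * L with hM2
  have hM1p : 0 ≤ M1 := by positivity
  have hM2p : 0 ≤ M2 := by positivity
  refine ⟨M1 * Real.sqrt (12 * Real.pi) + M2 * 10, by positivity, fun x hx n hn η hη => ?_⟩
  have hx20 : 20 ≤ x := (le_max_left _ _).trans hx
  have hxC : C + 1 ≤ x := (le_max_right _ _).trans hx
  have hx0 : 0 < x := by linarith
  obtain ⟨F1, F2⟩ := HL x (by linarith)
  have hxa : 0 < x ^ (-a) := by positivity
  have hn0 : 0 < n := by rw [abs_le] at hn; linarith
  have hInt0 : IntegrableOn (fun r => (ww n x r * phi a c x r) * kk η (1 - r)) (Ioi 0) := by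
    have := (G_int n (c - 1) x hn0.le (by linarith) (by linarith)).const_mul
      (Real.exp x * (L * x ^ (-a)) * (1 / η))
    refine Integrable.mono' this ?_ ?_
    · have m1 : Measurable (ww n x) := by
        have h1 : Measurable (fun r : ℝ => r ^ n) := measurable_id.pow_const _
        have h2 : Measurable (fun r : ℝ => Real.exp (x * (1 - r))) := by fun_prop
        exact h1.mul h2
      exact ((m1.mul (phi_meas a c x)).mul
        ((kk_meas η).comp (measurable_const.sub measurable_id))).aestronglyMeasurable
    · filter_upwards [ae_restrict_mem measurableSet_Ioi] with r hr
      have hr' : 0 < r := hr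
      have h1 := F1 r hr'.le
      have h2 := kk_bound η hη (1 - r)
      have h3 := phi_nonneg a c x r hr'.le
      have h4 : Real.exp (x * (1 - r)) = Real.exp x * Real.exp (-(x * r)) := by
        rw [← Real.exp_add]; congr 1; ring
      rw [Real.norm_eq_abs, abs_mul, abs_mul, abs_of_nonneg h3, ww, h4, abs_of_pos (by positivity)]
      calc _ ≤ r ^ n * (Real.exp x * Real.exp (-(x * r))) * (L * x ^ (-a) * (1 + r) ^ (c - 1)) * (1 / η) := by
            gcongr
        _ = _ := by ring
  rw [sym_split _ η hInt0, add_mul]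
  refine (abs_add_le _ _).trans (add_le_add ?_ ?_)
  · -- central part
    have hg : Integrable (fun v : ℝ => Real.exp (-(x / 12) * v ^ 2)) :=
      integrable_exp_neg_mul_sq (by positivity)
    have hpt : ∀ᵐ v : ℝ, v ∈ Ioc (0:ℝ) 1 →
        ‖(ww n x (1 - v) * phi a c x (1 - v) - ww n x (1 + v) * phi a c x (1 + v)) * kk η v‖ ≤
        M1 * x ^ (-a) * Real.exp (-(x / 12) * v ^ 2) := by
      have h1 : ∀ᵐ v : ℝ, v ≠ 1 := by simp [ae_iff, measure_singleton]
      filter_upwards [h1] with v hv1 hv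
      have hv0 := hv.1
      have hvlt : v < 1 := lt_of_le_of_ne hv.2 hv1
      have d1 := ww_diff C n x v hC (by linarith) hx0 hn hv0.le hvlt
      have d2 := ww_plus C n x v hC (by linarith) hn hv0.le hvlt.le
      have d3 := F2 v ⟨hv0.le, hv.2⟩
      have d4 : phi a c x (1 - v) ≤ L * x ^ (-a) * 2 ^ (c - 1) := by
        refine (F1 (1 - v) (by linarith)).trans ?_
        gcongr
        · linarith
        · linarith
      have d5 := phi_nonneg a c x (1 - v) (by linarith)
      have d6 := kk_le η v (abs_pos.2 hv0.ne')
      rw [abs_of_pos hv0] at d6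
      have d7 : 0 ≤ ww n x (1 + v) := by rw [ww_eq n x _ (by linarith)]; positivity
      have d8 : Real.exp (-(x * v ^ 2 / 6)) ≤ Real.exp (-(x * v ^ 2 / 12)) := by
        refine Real.exp_le_exp.2 ?_
        have : 0 ≤ x * v ^ 2 := by positivity
        linarith
      have d9 : |ww n x (1 - v) * phi a c x (1 - v) - ww n x (1 + v) * phi a c x (1 + v)| ≤
          M1 * x ^ (-a) * Real.exp (-(x * v ^ 2 / 12)) * v := by
        rw [show ww n x (1 - v) * phi a c x (1 - v) - ww n x (1 + v) * phi a c x (1 + v) =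
          (ww n x (1 - v) - ww n x (1 + v)) * phi a c x (1 - v) +
          ww n x (1 + v) * (phi a c x (1 - v) - phi a c x (1 + v)) by ring]
        refine (abs_add_le _ _).trans ?_
        rw [abs_mul, abs_mul, abs_of_nonneg d5, abs_of_nonneg d7]
        calc _ ≤ (2 * C + 100) * Real.exp (2 * C) * v * Real.exp (-(x * v ^ 2 / 12)) *
              (L * x ^ (-a) * 2 ^ (c - 1)) +
              (Real.exp (2 * C) * Real.exp (-(x * v ^ 2 / 12))) * (L * x ^ (-a) * v) := by
              gcongr
              exact d2.trans (by gcongr)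
          _ = _ := by rw [hM1]; ring
      rw [norm_mul, Real.norm_eq_abs, Real.norm_eq_abs]
      calc _ ≤ M1 * x ^ (-a) * Real.exp (-(x * v ^ 2 / 12)) * v * (1 / v) := by gcongr
        _ = M1 * x ^ (-a) * Real.exp (-(x * v ^ 2 / 12)) := by field_simp
        _ = _ := by congr 2; ring
    have hb := intervalIntegral.norm_integral_le_of_norm_le zero_le_one hpt
      ((hg.const_mul (M1 * x ^ (-a))).intervalIntegrable)
    rw [Real.norm_eq_abs] at hb
    refine hb.trans ?_
    rw [intervalIntegral.integral_const_mul, intervalIntegral.integral_of_le zero_le_one]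
    have h6 : ∫ v in Ioc (0:ℝ) 1, Real.exp (-(x / 12) * v ^ 2) ≤ ∫ v : ℝ, Real.exp (-(x / 12) * v ^ 2) :=
      setIntegral_le_integral hg (Eventually.of_forall fun v => (Real.exp_pos _).le)
    rw [integral_gaussian] at h6
    have h7 : Real.sqrt (Real.pi / (x / 12)) = Real.sqrt (12 * Real.pi) * x ^ (-(1 / 2) : ℝ) := by
      rw [show Real.pi / (x / 12) = (12 * Real.pi) * x⁻¹ by field_simp, Real.sqrt_mul (by positivity),
        Real.sqrt_inv, Real.rpow_neg hx0.le, Real.sqrt_eq_rpow x]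
    rw [h7] at h6
    have h8 : x ^ (-a - 1 / 2) = x ^ (-a) * x ^ (-(1 / 2) : ℝ) := by
      rw [← Real.rpow_add hx0]; congr 1
    calc _ ≤ M1 * x ^ (-a) * (Real.sqrt (12 * Real.pi) * x ^ (-(1 / 2) : ℝ)) := by gcongr
      _ = _ := by rw [h8]; ring
  · -- tail
    have hg : IntegrableOn (fun r : ℝ => Real.exp (-(x / 10 * r)) * r ^ ((1:ℝ) - 1)) (Ioi 0) :=
      gam_int (1 - 1) (x / 10) (by norm_num) (by positivity)
    have hv := gam_val 1 (x / 10) one_pos (by positivity)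
    have hpt : ∀ r ∈ Ioi (2:ℝ), ‖(ww n x r * phi a c x r) * kk η (1 - r)‖ ≤
        M2 * x ^ (-a) * (Real.exp (-(x / 10 * r)) * r ^ ((1:ℝ) - 1)) := by
      intro r hr
      have hr2 : 2 < r := hr
      have t1 := ww_tail C n x r hC hx0 hn hr2.le
      have t2 := F1 r (by linarith)
      have t3 := phi_nonneg a c x r (by linarith)
      have t4 : |kk η (1 - r)| ≤ 1 := by
        have habs : |1 - r| = r - 1 := by rw [abs_of_neg (by linarith)]; ring
        refine (kk_le η (1 - r) (by rw [habs]; linarith)).trans ?_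
        rw [habs, div_le_one (by linarith)]; linarith
      have t5 : 0 ≤ ww n x r := by rw [ww_eq n x _ (by linarith)]; positivity
      have t6 : r ^ C * (1 + r) ^ (c - 1) ≤ (1 + s) ^ s * Real.exp r := by
        refine le_trans ?_ (pow_le_exp s r hs0 (by linarith))
        rw [hs, Real.rpow_add (by linarith)]
        gcongr
        linarith
      have t7 : Real.exp (-(0.15 * x * r)) * Real.exp r ≤ Real.exp (-(x / 10 * r)) := by
        rw [← Real.exp_add]
        refine Real.exp_le_exp.2 ?_
        norm_num
        nlinarith
      rw [sub_self, Real.rpow_zero, mul_one, norm_mul, Real.norm_eq_abs, Real.norm_eq_abs, abs_mul,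
        abs_of_nonneg t3, abs_of_nonneg t5]
      calc _ ≤ (r ^ C * Real.exp (-(0.15 * x * r))) * (L * x ^ (-a) * (1 + r) ^ (c - 1)) * 1 := by
            gcongr
        _ = (r ^ C * (1 + r) ^ (c - 1)) * (L * x ^ (-a) * Real.exp (-(0.15 * x * r))) := by ring
        _ ≤ ((1 + s) ^ s * Real.exp r) * (L * x ^ (-a) * Real.exp (-(0.15 * x * r))) := by gcongr
        _ = M2 * x ^ (-a) * (Real.exp (-(0.15 * x * r)) * Real.exp r) := by rw [hM2]; ring
        _ ≤ _ := by gcongr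
    have hgi : IntegrableOn (fun r : ℝ => M2 * x ^ (-a) * (Real.exp (-(x / 10 * r)) * r ^ ((1:ℝ) - 1)))
      (Ioi 0) := hg.const_mul _
    have hb := norm_integral_le_of_norm_le (hgi.mono_set (Ioi_subset_Ioi (by norm_num : (0:ℝ) ≤ 2)))
      ((ae_restrict_mem measurableSet_Ioi).mono fun r hr => hpt r hr)
    rw [Real.norm_eq_abs] at hb
    refine hb.trans ?_
    have h6 : ∫ r in Ioi (2:ℝ), M2 * x ^ (-a) * (Real.exp (-(x / 10 * r)) * r ^ ((1:ℝ) - 1)) ≤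
        ∫ r in Ioi (0:ℝ), M2 * x ^ (-a) * (Real.exp (-(x / 10 * r)) * r ^ ((1:ℝ) - 1)) := by
      refine setIntegral_mono_set hgi ?_ (Ioi_subset_Ioi (by norm_num : (0:ℝ) ≤ 2)).eventuallyLE
      filter_upwards [ae_restrict_mem measurableSet_Ioi] with r hr
      have hr' : 0 < r := hr
      simp only [Pi.zero_apply]
      positivity
    rw [integral_const_mul, integral_const_mul, hv, Real.Gamma_one, mul_one] at h6
    rw [integral_const_mul]
    refine h6.trans ?_
    have h7 : (x / 10) ^ (-1 : ℝ) ≤ 10 * x ^ (-(1 / 2) : ℝ) := by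
      rw [Real.div_rpow hx0.le (by norm_num), Real.rpow_neg_one 10, div_inv_eq_mul, mul_comm]
      gcongr
      · linarith
      · norm_num
    have h8 : x ^ (-a - 1 / 2) = x ^ (-a) * x ^ (-(1 / 2) : ℝ) := by
      rw [← Real.rpow_add hx0]; congr 1
    calc _ ≤ M2 * x ^ (-a) * (10 * x ^ (-(1 / 2) : ℝ)) := by gcongr
      _ = _ := by rw [h8]; ring

lemma D_bound (a c C : ℝ) (ha : 2 < a) (hc : 2 < c) (hn : ∀ n : ℤ, a ≠ n) (hC : 0 ≤ C) :
    ∃ K X, ∀ x ≥ X, ∀ m : ℕ, |(m:ℝ) - x| ≤ C →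
      |Real.exp x * ∫ u in Ioi (0:ℝ), Real.exp (-(x * u)) * u ^ (c - 1) *
        ((1 - u) ^ (a - 1) - Sb a m u)| ≤ K * x ^ (-a - 1 / 2) := by
  obtain ⟨K, hK0, HK⟩ := main_bound a c (C + a) ha hc (by linarith)
  refine ⟨|Kc a| * K, max 20 (C + a + 1), fun x hx m hm => ?_⟩
  have hx20 : 20 ≤ x := (le_max_left _ _).trans hx
  have hxC : C + a + 1 ≤ x := (le_max_right _ _).trans hx
  have hm' := hm
  rw [abs_le] at hm'
  have hma : a < m := by linarith
  have hlim := ((D_limit a c x m (by linarith) (by linarith) hma (by linarith)).const_mul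
    (Real.exp x)).abs
  refine le_of_tendsto hlim ?_
  filter_upwards [self_mem_nhdsWithin] with η hη
  have hη' : 0 < η := hη
  rw [fubini a c x m (by linarith) (by linarith) hma hn (by linarith) η hη']
  have h := HK x hx ((m:ℝ) - a) (by rw [abs_le]; constructor <;> linarith) η hη'
  have e : Real.exp x * (Kc a * ∫ r in Ioi (0:ℝ), r ^ ((m:ℝ) - a) * Real.exp (-(x * r)) *
      phi a c x r * kk η (1 - r)) =
      Kc a * ∫ r in Ioi (0:ℝ), (ww ((m:ℝ) - a) x r * phi a c x r) * kk η (1 - r) := by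
    rw [mul_left_comm, ← integral_const_mul]
    congr 2
    ext r
    rw [ww, show x * (1 - r) = x + -(x * r) by ring, Real.exp_add]
    ring
  rw [e, abs_mul, mul_assoc]
  gcongr

lemma base (a c : ℝ) (ha : 2 < a) (hc : 2 < c) (hn : ∀ n : ℤ, a ≠ n) : Full a c := by
  intro C
  obtain ⟨K, X, HK⟩ := D_bound a c |C| ha hc hn (abs_nonneg _)
  obtain ⟨L, hL, HL⟩ := lead_bound a c ha hc
  have hga := Real.Gamma_pos_of_pos (by linarith : 0 < a)
  have hgc := Real.Gamma_pos_of_pos (by linarith : 0 < c)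
  refine ⟨(Real.Gamma a * Real.Gamma c)⁻¹ * (K + L), max X 2, fun x hx m hm => ?_⟩
  have hx2 : 2 ≤ x := (le_max_right _ _).trans hx
  have h1 := HK x ((le_max_left _ _).trans hx) m (hm.trans (le_abs_self _))
  have h2 := HL x hx2
  beta_reduce
  rw [Ft_decomp a c x m (by linarith) (by linarith) (by linarith)]
  set D := Real.exp x * ∫ u in Ioi (0:ℝ), Real.exp (-(x * u)) * u ^ (c - 1) *
        ((1 - u) ^ (a - 1) - Sb a m u) with hD
  set J := ∫ t in Ioi (0:ℝ), Real.exp (-(x * t)) * t ^ (a - 1) * (1 + t) ^ (c - 1) with hJ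
  have e : (Real.Gamma a * Real.Gamma c)⁻¹ * (D + Real.cos (Real.pi * a) * J) - lead a c x =
      (Real.Gamma a * Real.Gamma c)⁻¹ *
        (D + Real.cos (Real.pi * a) * (J - x ^ (-a) * Real.Gamma a)) := by
    rw [lead]
    field_simp
    ring
  rw [e, abs_mul, abs_of_pos (by positivity), mul_assoc]
  gcongr
  refine (abs_add_le _ _).trans ?_
  rw [add_mul]
  refine add_le_add h1 ?_
  rw [abs_mul]
  have h3 := Real.abs_cos_le_one (Real.pi * a)
  nlinarith [abs_nonneg (J - x ^ (-a) * Real.Gamma a)]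

end KS

open Complex Filter Asymptotics

namespace KS

lemma ph_cast (a : ℝ) (n : ℕ) : (ascPochhammer ℂ n).eval (a : ℂ) = ((ph a n : ℝ) : ℂ) := by
  induction n with
  | zero => simp [ph]
  | succ n ih => rw [ph_succ, ascPochhammer_succ_eval, ih]; push_cast; ring

lemma Gamma_ph (b : ℝ) (hb : ∀ n : ℕ, b ≠ -(n : ℝ)) (n : ℕ) :
    Real.Gamma (b + n) = ph b n * Real.Gamma b := by
  induction n with
  | zero => simp [ph_zero]
  | succ n ih =>
    push_cast
    rw [← add_assoc, Real.Gamma_add_one (fun h => hb n (by linarith)), ih, ph_succ]; ring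

lemma kummer_eq (a b x : ℝ) (hb : ∀ n : ℕ, b ≠ -(n : ℝ)) :
    (1 / Complex.Gamma (b : ℂ)) * kummer (a : ℂ) (b : ℂ) (x : ℂ) = ((Mt a b x : ℝ) : ℂ) := by
  rw [kummer, Mt, Complex.ofReal_tsum, ← tsum_mul_left]
  refine tsum_congr fun n => ?_
  rw [mt, Gamma_ph b hb, ph_cast, ph_cast, Complex.Gamma_ofReal]
  push_cast
  rw [mul_inv]
  ring

theorem final (H : ∀ a c : ℝ, (∀ n : ℤ, a ≠ n) → Full a c) (a b : ℝ)
    (ha : ∀ n : ℤ, a ≠ (n : ℝ)) (hb : ∀ n : ℕ, b ≠ -(n : ℝ)) :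
    (fun x : ℝ =>
        ((1 / Complex.Gamma (b : ℂ)) * kummer (a : ℂ) (b : ℂ) (x : ℂ) -
            ((x : ℂ) ^ ((a : ℂ) - (b : ℂ)) * Complex.exp (x : ℂ) / Complex.Gamma (a : ℂ)) *
              ∑ j ∈ Finset.range (⌊x + 2 * a - b⌋.toNat),
                (ascPochhammer ℂ j).eval ((b : ℂ) - (a : ℂ)) *
                  (ascPochhammer ℂ j).eval (1 - (a : ℂ)) / (j.factorial * (x : ℂ) ^ j)) -
          (x : ℂ) ^ (-(a : ℂ)) / Complex.Gamma ((b : ℂ) - (a : ℂ)) *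
            (Real.cos (Real.pi * a) : ℂ))
      =O[atTop] fun x : ℝ => x ^ (-a - 1 / 2) := by
  obtain ⟨K, X, h⟩ := H a (b - a) ha (|2 * a - b| + 1)
  refine IsBigO.of_bound K ?_
  filter_upwards [eventually_ge_atTop X, eventually_gt_atTop 0,
    eventually_ge_atTop (b - 2 * a)] with x hX h0 h1
  have hm : |((⌊x + 2 * a - b⌋.toNat : ℕ) : ℝ) - x| ≤ |2 * a - b| + 1 := by
    have e : ((⌊x + 2 * a - b⌋.toNat : ℕ) : ℝ) = (⌊x + 2 * a - b⌋ : ℝ) := by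
      have : ((⌊x + 2 * a - b⌋.toNat : ℕ) : ℤ) = ⌊x + 2 * a - b⌋ :=
        Int.toNat_of_nonneg (Int.floor_nonneg.2 (by linarith))
      exact_mod_cast this
    rw [e]
    have l1 := Int.floor_le (x + 2 * a - b)
    have l2 := Int.lt_floor_add_one (x + 2 * a - b)
    have l3 := le_abs_self (2 * a - b)
    have l4 := neg_abs_le (2 * a - b)
    rw [abs_le]; constructor <;> linarith
  have := h x hX _ hm
  rw [Real.norm_of_nonneg (Real.rpow_nonneg h0.le _)]
  refine le_trans (le_of_eq ?_) this
  rw [← Real.norm_eq_abs, ← Complex.norm_real, kummer_eq a b x hb]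
  congr 1
  beta_reduce
  rw [Ft, lead, Tt, St]
  have e1 : (x : ℂ) ^ ((a : ℂ) - (b : ℂ)) = ((x ^ (-(b - a)) : ℝ) : ℂ) := by
    rw [Complex.ofReal_cpow h0.le]; push_cast; congr 1; ring
  have e2 : (x : ℂ) ^ (-(a : ℂ)) = ((x ^ (-a) : ℝ) : ℂ) := by
    rw [Complex.ofReal_cpow h0.le]; push_cast; rfl
  rw [e1, e2, ← Complex.ofReal_sub b a, Complex.Gamma_ofReal, Complex.Gamma_ofReal,
    show (1 : ℂ) - (a : ℂ) = ((1 - a : ℝ) : ℂ) by push_cast; rfl, add_sub_cancel]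
  simp_rw [ph_cast, co]
  push_cast
  have e3 : ∀ j : ℕ, (ph (b - a) j : ℂ) * (ph (1 - a) j : ℂ) / (j.factorial * (x : ℂ) ^ j)
    = (ph (b - a) j : ℂ) * (ph (1 - a) j : ℂ) / j.factorial / (x : ℂ) ^ j := fun j => by
    rw [div_div]
  simp_rw [e3]
  ring
end KS

/-- On the Stokes line `arg z = 0`, after subtracting the optimally truncated exponential
expansion (truncation index `m₀(x) = ⌊x + 2a − b⌋`), the remainder of `₁F₁(a;b;x)/Γ(b)` equals
`(x^{−a}/Γ(b−a)) cos(πa) + O(x^{−a−1/2})`: the Stokes multiplier is `cos(πa)` to leading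
order. -/
theorem kummer_stokes_line_multiplier (a b : ℝ)
    (ha : ∀ n : ℤ, a ≠ (n : ℝ)) (hb : ∀ n : ℕ, b ≠ -(n : ℝ)) (hba : ∀ n : ℕ, b - a ≠ -(n : ℝ)) :
    (fun x : ℝ =>
        ((1 / Complex.Gamma (b : ℂ)) * kummer (a : ℂ) (b : ℂ) (x : ℂ) -
            ((x : ℂ) ^ ((a : ℂ) - (b : ℂ)) * Complex.exp (x : ℂ) / Complex.Gamma (a : ℂ)) *
              ∑ j ∈ Finset.range (⌊x + 2 * a - b⌋.toNat),
                (ascPochhammer ℂ j).eval ((b : ℂ) - (a : ℂ)) *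
                  (ascPochhammer ℂ j).eval (1 - (a : ℂ)) / (j.factorial * (x : ℂ) ^ j)) -
          (x : ℂ) ^ (-(a : ℂ)) / Complex.Gamma ((b : ℂ) - (a : ℂ)) *
            (Real.cos (Real.pi * a) : ℂ))
      =O[atTop] fun x : ℝ => x ^ (-a - 1 / 2) := by
  exact KS.final (KS.reduction KS.base) a b ha hb
end
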